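/- arXiv:1203.5135 — 3 statements merged into one kernel-verified Lean document; each statement's English description precedes it below -/
import Mathlib

section
/- Let ε > 0, r > 2, fix linearization data as in the context, and let i ∈ {1,2,3,4}. Let 𝐏 be a finite collection of quartiles, E ⊂ [0,∞) a measurable set of finite measure, and f a measurable function with |f| ≤ 1_E. Then for each α > 0 satisfying size_i(𝐏, f)² ≤ α, there exists a collection 𝐓 of trees, each consisting of quartiles of 𝐏, such that size_i(𝐏 \ ⋃_{T ∈ 𝐓} T, f)² ≤ α/4 and ∑_{T ∈ 𝐓} |I_T| ≤ C α^{−(1+ε)} |E|, where C depends only on r and ε. -/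
/-!
Write `c_P = ⟨f, φ̃_{P_i}⟩`. The collection of trees is produced by a greedy selection, run
separately for each `j ≠ i` and each parity of `log₂ |I_P|` (`VarSize.select`): as long as some
`j`-overlapping tree has `∑ c_P² > (α/8) |I_T|`, one with extremal top frequency is selected and
all quartiles lying below its top are removed. Extremality makes all the tiles `P_i` of the
selected trees pairwise disjoint, and what survives has squared size at most `2 · α/8`.

The total length of the tops is controlled through an estimate for forests with at most `N` tops
over each point, `∑_P c_P² ≤ C_r (1 + log N)² |E ∩ A|` if all tops lie in `A`
(`VarSize.forest_sum_le`). Hence `∑ |I_T| ≲ α⁻¹ N^η |E ∩ A|` for subfamilies of overlap at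
most `N`, and a truncation argument on counting functions (`VarSize.packing`) with
`N ~ α^{-(1+ε)}`, `η = ε/(1+ε)`, removes the overlap assumption.

For the forest estimate, duality gives `∑ c_P² = ∫ f ∑ c_P φ̃_{P_i}` and `|f| ≤ 1_E`; it remains
to find a pointwise bound for `|∑ c_P a_P(x) φ_{P_3}(x)|` by a constant of size `(1 + log N)²` plus
a function of integral at most `½ ∑ c_P²`. The sum is `∑_m a_m` times differences of partial sums
over scales. The square function `∑ c_P² |I_P|⁻¹ 1_{I_P}`, accumulated from coarse to fine scales,
acts as a clock, and the partial sums are chained over dyadic clock intervals of length `2^l`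
(`VarSize.chain`), each of which contributes the wave packet sum `F_{l,u}` of a cell of quartiles
(`VarSize.cell`). Because `(a_m)` lies in the unit ball of `ℓ^(r/(r-1))`, generation `l` is handled by
Young's inequality and the following facts.

* Middle generations, about `3 log₂ N + 21` many, use `∑_u ∫ F_{l,u}² ≤ ∑ c_P²` (orthogonality).
* Fine generations use an exponent `q ∈ (2, 4]` with `q ≤ r` and the fourth moment bound
  `∑_u ∫ F_{l,u}⁴ ≤ 6 N³ 2^l ∑ c_P²`, which decays as `l → -∞`. It comes from
  `∫ F⁴ ≤ 6 ∫ F² S` for a single tree with square function `S` (`VarSize.tree_fourth`).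
* Coarse generations only matter where the square function is at least `2^(l-1)`.
-/

open MeasureTheory Set
open scoped ENNReal

noncomputable section

/-- A dyadic interval `[n 2^k, (n+1) 2^k) ⊆ [0,∞)`. -/
structure DyadicInterval where
  n : ℕ
  k : ℤ
  deriving DecidableEq

namespace DyadicInterval

/-- The length `2^k` of a dyadic interval. -/
def len (I : DyadicInterval) : ℝ := 2 ^ I.k

/-- The left endpoint `n 2^k` of a dyadic interval. -/
def lo (I : DyadicInterval) : ℝ := I.n * 2 ^ I.k

/-- A dyadic interval as a subset of `ℝ`. -/
def toSet (I : DyadicInterval) : Set ℝ := Set.Ico I.lo (I.lo + I.len)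

end DyadicInterval

/-- The Walsh function of index `m` (Paley ordering): for `y ∈ [0,1)` with binary digits
`y_i`, `W_m(y) = (-1)^{∑ m_i y_i}`. -/
def walshF (m : ℕ) (y : ℝ) : ℝ :=
  ∏ i ∈ Finset.range m, if m.testBit i then (-1 : ℝ) ^ ⌊y * 2 ^ (i + 1)⌋ else 1

/-- The Walsh wave packet of the rectangle `I × ω`.  For a tile (a rectangle of area one) this
is the unique family satisfying `φ_{I×[0,2^n)} = |I|^{-1/2} 1_I` together with the recursions
`φ_{I×ω_r} = (φ_{I_l×ω} − φ_{I_r×ω})/√2` and `φ_{I×ω_l} = (φ_{I_l×ω} + φ_{I_r×ω})/√2`. -/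
def wavePacket (I ω : DyadicInterval) (x : ℝ) : ℝ :=
  I.toSet.indicator (fun x => I.len ^ (-(1 : ℝ) / 2) * walshF ω.n ((x - I.lo) / I.len)) x

/-- `⟨f, g⟩ = ∫_0^∞ f g`. -/
def innerF (f g : ℝ → ℝ) : ℝ := ∫ x in Set.Ici (0 : ℝ), f x * g x

/-- A tile: a dyadic rectangle of area one. -/
structure Tile where
  I : DyadicInterval
  ω : DyadicInterval
  area : I.k + ω.k = 0

/-- The Walsh wave packet of a tile. -/
def Tile.wp (p : Tile) : ℝ → ℝ := wavePacket p.I p.ω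

/-- A tile as a subset of `[0,∞) × [0,∞)`. -/
def Tile.toSet (p : Tile) : Set (ℝ × ℝ) := p.I.toSet ×ˢ p.ω.toSet

/-- A quartile: a dyadic rectangle of area four. -/
structure Quartile where
  I : DyadicInterval
  ω : DyadicInterval
  area : I.k + ω.k = 2

namespace Quartile

/-- The frequency interval `ω_{P_{i+1}}` (the `i`-th dyadic grandchild of `ω_P`, `i : Fin 4`,
in increasing order). -/
def freq (P : Quartile) (i : Fin 4) : DyadicInterval := ⟨4 * P.ω.n + i.val, P.ω.k - 2⟩

/-- The tile `P_{i+1} = I_P × ω_{P_{i+1}}` as a subset of the plane, for `i : Fin 4`. -/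
def subtileSet (P : Quartile) (i : Fin 4) : Set (ℝ × ℝ) := P.I.toSet ×ˢ (P.freq i).toSet

/-- The Walsh wave packet `φ_{P_{i+1}}` for `i : Fin 4`. -/
def wp (P : Quartile) (i : Fin 4) : ℝ → ℝ := wavePacket P.I (P.freq i)

end Quartile

instance : DecidableEq Quartile := fun P Q =>
  decidable_of_iff (P.I = Q.I ∧ P.ω = Q.ω) (by cases P; cases Q; simp)

/-- `(T, ξ, I_T)` is a tree: `ξ ∈ [0,∞)` and every `P ∈ T` has `I_P ⊆ I_T` and `ξ ∈ ω_P`. -/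
def IsTree (T : Finset Quartile) (ξ : ℝ) (It : DyadicInterval) : Prop :=
  0 ≤ ξ ∧ ∀ P ∈ T, P.I.toSet ⊆ It.toSet ∧ ξ ∈ P.ω.toSet

/-- An `i`-overlapping tree (`i : Fin 4` indexes `P_1,…,P_4`): `ξ_T ∈ ω_{P_{i+1}}` for all `P`. -/
def IsOverlapping (i : Fin 4) (T : Finset Quartile) (ξ : ℝ) (It : DyadicInterval) : Prop :=
  IsTree T ξ It ∧ ∀ P ∈ T, ξ ∈ (P.freq i).toSet

/-- An `i`-lacunary tree: `j`-overlapping for some `j ≠ i`. -/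
def IsLacunary (i : Fin 4) (T : Finset Quartile) (ξ : ℝ) (It : DyadicInterval) : Prop :=
  ∃ j, j ≠ i ∧ IsOverlapping j T ξ It

/-- `ω_T`: the dyadic interval of length `|I_T|⁻¹` containing `ξ`; `p_T = I_T × ω_T`. -/
def topFreq (It : DyadicInterval) (ξ : ℝ) : DyadicInterval := ⟨(⌊ξ * 2 ^ It.k⌋).toNat, -It.k⟩

/-- The dyadic interval of length `2^k` containing `x ≥ 0`. -/
def dyadicPiece (k : ℤ) (x : ℝ) : Set ℝ :=
  Set.Ico ((⌊x / 2 ^ k⌋ : ℝ) * 2 ^ k) (((⌊x / 2 ^ k⌋ : ℝ) + 1) * 2 ^ k)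

/-- The dyadic averaging operator `A_k[f](x) = |I|⁻¹ ∫_I f` with `I ∋ x` dyadic, `|I| = 2^k`. -/
def dyadicAvg (k : ℤ) (f : ℝ → ℝ) (x : ℝ) : ℝ :=
  ((2 : ℝ) ^ k)⁻¹ * ∫ y in dyadicPiece k x, f y

/-- The `r`-variation seminorm of `g : ℤ → ℝ` over the index set `S ⊆ ℤ`:
the supremum of `(∑_{j=1}^N |g(k_j) − g(k_{j−1})|^r)^{1/r}` over finite increasing
sequences `k_0 < ⋯ < k_N` in `S`. -/
def varNorm (r : ℝ) (S : Set ℤ) (g : ℤ → ℝ) : ℝ≥0∞ :=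
  ⨆ (N : ℕ) (k : ℕ → ℤ) (_ : StrictMono k) (_ : ∀ j ≤ N, k j ∈ S),
    (∑ j ∈ Finset.range N, ENNReal.ofReal (|g (k (j + 1)) - g (k j)| ^ r)) ^ (1 / r)

/-- The dyadic `L^t` Hardy–Littlewood maximal operator `M^t[f](x) = sup_k (A_k[|f|^t](x))^{1/t}`. -/
def maxOp (t : ℝ) (f : ℝ → ℝ) (x : ℝ) : ℝ≥0∞ :=
  ⨆ k : ℤ, ((ENNReal.ofReal ((2 : ℝ) ^ k))⁻¹ *
    ∫⁻ y in dyadicPiece k x, ENNReal.ofReal (|f y| ^ t)) ^ (1 / t)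

/-- Given a strictly increasing `kk : ℤ → ℤ` and coefficients `a : ℤ → ℝ`, the coefficient
`a_m` where `m` is the (unique) integer with `kk (m-1) ≤ K < kk m` (`K = log₂|I_P|`),
and `0` if no such `m` exists. -/
def linCoeff (kk : ℤ → ℤ) (a : ℤ → ℝ) (K : ℤ) : ℝ :=
  letI := Classical.propDecidable (∃ m : ℤ, kk (m - 1) ≤ K ∧ K < kk m)
  if h : ∃ m : ℤ, kk (m - 1) ≤ K ∧ K < kk m then a h.choose else 0

/-- Linearization data for the `r`-variation: measurably in `x`, a strictly increasing
sequence of integers `k_j(x)` and coefficients `a_j(x)` with `∑_j |a_j(x)|^{r'} ≤ 1`,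
`r' = r/(r-1)`. -/
structure LinData (r : ℝ) where
  kseq : ℝ → ℤ → ℤ
  aseq : ℝ → ℤ → ℝ
  mono : ∀ x, StrictMono (kseq x)
  meas_k : ∀ j, Measurable fun x => kseq x j
  meas_a : ∀ j, Measurable fun x => aseq x j
  abound : ∀ x, ∀ s : Finset ℤ, ∑ j ∈ s, |aseq x j| ^ (r / (r - 1)) ≤ 1

/-- `a_P(x)` for a quartile `P`. -/
def LinData.coeff {r : ℝ} (L : LinData r) (P : Quartile) (x : ℝ) : ℝ :=
  linCoeff (L.kseq x) (L.aseq x) P.I.k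

/-- The modified wave packets: `φ̃_{P_3}(x) = a_P(x) φ_{P_3}(x)` and `φ̃_{P_i} = φ_{P_i}`
for `i ≠ 3` (here `i : Fin 4`, so index `2` plays the role of `3`). -/
def LinData.wp {r : ℝ} (L : LinData r) (P : Quartile) (i : Fin 4) (x : ℝ) : ℝ :=
  (if i = (2 : Fin 4) then L.coeff P x else 1) * P.wp i x

/-- `size_i(Ps, f)`: the sup of `(|I_T|⁻¹ ∑_{P ∈ T} |⟨f, φ̃_{P_i}⟩|²)^{1/2}` over
`i`-lacunary trees `T ⊆ Ps`. -/
def treeSize {r : ℝ} (L : LinData r) (i : Fin 4) (Ps : Set Quartile) (f : ℝ → ℝ) : ℝ≥0∞ :=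
  ⨆ (T : Finset Quartile) (ξ : ℝ) (It : DyadicInterval)
    (_ : IsLacunary i T ξ It) (_ : (T : Set Quartile) ⊆ Ps),
    ENNReal.ofReal ((It.len)⁻¹ * ∑ P ∈ T, innerF f (L.wp P i) ^ 2) ^ ((1 : ℝ) / 2)

/-- Lebesgue measure restricted to `[0,∞)`. -/
def mu0 : Measure ℝ := volume.restrict (Set.Ici 0)

end

namespace VarSize

/-! ### Dyadic intervals -/

theorem len_pos (I : DyadicInterval) : 0 < I.len := by
  unfold DyadicInterval.len; positivity

theorem lo_nonneg (I : DyadicInterval) : 0 ≤ I.lo := by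
  unfold DyadicInterval.lo; positivity

theorem lo_mem (I : DyadicInterval) : I.lo ∈ I.toSet := by
  have := len_pos I
  simp [DyadicInterval.toSet, this]

theorem nonneg_of_mem {I : DyadicInterval} {x : ℝ} (hx : x ∈ I.toSet) : 0 ≤ x :=
  (lo_nonneg I).trans hx.1

theorem mem_iff (I : DyadicInterval) (x : ℝ) :
    x ∈ I.toSet ↔ ⌊x / 2 ^ I.k⌋ = (I.n : ℤ) := by
  have h : (0 : ℝ) < 2 ^ I.k := by positivity
  rw [Int.floor_eq_iff, le_div_iff₀ h, div_lt_iff₀ h]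
  simp only [DyadicInterval.toSet, DyadicInterval.lo, DyadicInterval.len, mem_Ico]
  push_cast
  rw [add_mul, one_mul]

theorem floor_coarsen (x : ℝ) (a b : ℤ) (s : ℕ) (h : b = a + s) :
    ⌊x / 2 ^ b⌋ = ⌊x / 2 ^ a⌋ / (2 ^ s : ℕ) := by
  rw [← Int.floor_div_natCast, h, zpow_add₀ (by norm_num), zpow_natCast, div_div]
  push_cast
  rfl

theorem subset_of_mem {I J : DyadicInterval} {x : ℝ} (hI : x ∈ I.toSet) (hJ : x ∈ J.toSet)
    (hk : I.k ≤ J.k) : I.toSet ⊆ J.toSet := by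
  intro z hz
  obtain ⟨s, hs⟩ := Int.le.dest hk
  rw [mem_iff] at *
  rw [floor_coarsen _ I.k J.k s hs.symm] at *
  rw [hz, ← hI, hJ]

theorem eq_of_mem {I J : DyadicInterval} {x : ℝ} (hI : x ∈ I.toSet) (hJ : x ∈ J.toSet)
    (hk : I.k = J.k) : I = J := by
  rw [mem_iff] at *
  rw [hk] at hI
  have : I.n = J.n := by exact_mod_cast hI.symm.trans hJ
  cases I; cases J; simp_all

theorem measurableSet_toSet (I : DyadicInterval) : MeasurableSet I.toSet := measurableSet_Ico

theorem volume_toSet (I : DyadicInterval) : volume I.toSet = ENNReal.ofReal I.len := by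
  simp [DyadicInterval.toSet]

theorem volume_real_toSet (I : DyadicInterval) : volume.real I.toSet = I.len := by
  simp [Measure.real, volume_toSet, (len_pos I).le]

/-- `ω_{P_i} ⊆ ω_P`. -/
theorem freq_subset (P : Quartile) (i : Fin 4) : (P.freq i).toSet ⊆ P.ω.toSet := by
  intro z hz
  rw [mem_iff] at *
  rw [floor_coarsen z (P.freq i).k P.ω.k 2 (by simp [Quartile.freq]), hz]
  simp only [Quartile.freq]
  have := i.2
  push_cast
  omega

theorem quartile_ext {P Q : Quartile} (hI : P.I = Q.I) (hω : P.ω = Q.ω) : P = Q := by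
  cases P; cases Q; simp_all

theorem freq_k (P : Quartile) (i : Fin 4) : (P.freq i).k = - P.I.k := by
  have := P.area
  simp [Quartile.freq]; omega

/-! ### Walsh functions -/

theorem walshF_eq (m M : ℕ) (h : m ≤ M) (y : ℝ) :
    walshF m y = ∏ i ∈ Finset.range M, if m.testBit i then (-1 : ℝ) ^ ⌊y * 2 ^ (i + 1)⌋ else 1 := by
  unfold walshF
  refine Finset.prod_subset (Finset.range_mono h) ?_
  intro i _ hi
  have hi : m ≤ i := by simpa using hi
  rw [Nat.testBit_lt_two_pow (hi.trans_lt Nat.lt_two_pow_self)]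
  simp

theorem walshF_rec (m : ℕ) (y : ℝ) :
    walshF m y = (if m.testBit 0 then (-1 : ℝ) ^ ⌊2 * y⌋ else 1) * walshF (m / 2) (2 * y) := by
  rw [walshF_eq m (m + 1) (by omega), walshF_eq (m / 2) m (by omega), Finset.prod_range_succ']
  rw [mul_comm]
  congr 1
  · simp [mul_comm]
  · refine Finset.prod_congr rfl fun i _ => ?_
    rw [Nat.testBit_succ]
    congr 3
    ring_nf

theorem walshF_add_int (m : ℕ) (y : ℝ) (k : ℤ) : walshF m (y + k) = walshF m y := by
  unfold walshF
  refine Finset.prod_congr rfl fun i _ => ?_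
  have : (y + k) * 2 ^ (i + 1) = y * 2 ^ (i + 1) + ((2 * (k * 2 ^ i) : ℤ) : ℝ) := by
    push_cast; ring
  rw [this, Int.floor_add_intCast, zpow_add₀ (by norm_num), zpow_mul]
  norm_num

theorem walshF_mul_self (m : ℕ) (y : ℝ) : walshF m y * walshF m y = 1 := by
  unfold walshF
  rw [← Finset.prod_mul_distrib]
  refine Finset.prod_eq_one fun i _ => ?_
  split_ifs
  · rw [← zpow_add₀ (by norm_num), ← two_mul, zpow_mul]; norm_num
  · norm_num

theorem measurable_walshF (m : ℕ) : Measurable (walshF m) := by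
  unfold walshF
  refine Finset.measurable_prod _ fun i _ => ?_
  split_ifs
  · have : Measurable fun n : ℤ => (-1 : ℝ) ^ n := measurable_from_top
    exact this.comp (Int.measurable_floor.comp (measurable_id.mul_const _))
  · exact measurable_const

theorem abs_walshF (m : ℕ) (y : ℝ) : |walshF m y| = 1 := by
  have := walshF_mul_self m y
  rw [← abs_mul_abs_self] at this
  nlinarith [abs_nonneg (walshF m y)]

theorem intervalIntegrable_walsh (m n : ℕ) (a b : ℝ) :
    IntervalIntegrable (fun y => walshF m y * walshF n y) volume a b := by
  refine (intervalIntegrable_const (c := (1 : ℝ))).mono_fun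
    ((measurable_walshF m).mul (measurable_walshF n)).aestronglyMeasurable
    (Filter.Eventually.of_forall fun y => ?_)
  simp [abs_walshF]

/-- Orthogonality of Walsh functions on the unit interval; both halves of `[0,1]` reduce to
the product with the lowest bits removed, with opposite signs if these bits differ. -/
theorem walsh_orth (m n : ℕ) (h : m ≠ n) : ∫ y in (0 : ℝ)..1, walshF m y * walshF n y = 0 := by
  induction hs : m + n using Nat.strong_induction_on generalizing m n with
  | _ s ih =>
  have hrec : ∫ y in (0 : ℝ)..1, walshF m y * walshF n y
      = (1 + (if m.testBit 0 then (-1 : ℝ) else 1) * (if n.testBit 0 then (-1 : ℝ) else 1)) / 2 *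
        ∫ y in (0 : ℝ)..1, walshF (m / 2) y * walshF (n / 2) y := by
    rw [← intervalIntegral.integral_add_adjacent_intervals
      (intervalIntegrable_walsh m n 0 (1 / 2)) (intervalIntegrable_walsh m n (1 / 2) 1)]
    have h1 : ∫ y in (0 : ℝ)..(1 / 2), walshF m y * walshF n y
        = ∫ y in (0 : ℝ)..(1 / 2), (fun z => walshF (m / 2) z * walshF (n / 2) z) (2 * y) := by
      rw [intervalIntegral.integral_of_le (by norm_num), intervalIntegral.integral_of_le (by norm_num)]
      rw [← integral_Ico_eq_integral_Ioc, ← integral_Ico_eq_integral_Ioc]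
      refine setIntegral_congr_fun measurableSet_Ico fun y hy => ?_
      have : ⌊2 * y⌋ = 0 := by
        rw [Int.floor_eq_iff]; constructor <;> norm_num <;> linarith [hy.1, hy.2]
      simp only
      rw [walshF_rec m, walshF_rec n, this]
      simp
    have h2 : ∫ y in (1 / 2 : ℝ)..1, walshF m y * walshF n y
        = ∫ y in (1 / 2 : ℝ)..1, (fun z => (if m.testBit 0 then (-1 : ℝ) else 1) *
          (if n.testBit 0 then (-1 : ℝ) else 1) * (walshF (m / 2) z * walshF (n / 2) z))
            (2 * y - 1) := by
      rw [intervalIntegral.integral_of_le (by norm_num), intervalIntegral.integral_of_le (by norm_num)]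
      rw [← integral_Ico_eq_integral_Ioc, ← integral_Ico_eq_integral_Ioc]
      refine setIntegral_congr_fun measurableSet_Ico fun y hy => ?_
      have h0 : ⌊2 * y⌋ = 1 := by
        rw [Int.floor_eq_iff]; constructor <;> norm_num <;> linarith [hy.1, hy.2]
      have hp : ∀ k, walshF k (2 * y) = walshF k (2 * y - 1) := fun k => by
        rw [← walshF_add_int k (2 * y - 1) 1]; simp
      simp only
      rw [walshF_rec m, walshF_rec n, h0, hp, hp]
      simp only [zpow_one]
      ring
    rw [h1, h2, intervalIntegral.integral_comp_mul_left
        (fun z => walshF (m / 2) z * walshF (n / 2) z) (two_ne_zero' ℝ),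
      intervalIntegral.integral_comp_mul_sub (fun z => (if m.testBit 0 then (-1 : ℝ) else 1) *
          (if n.testBit 0 then (-1 : ℝ) else 1) * (walshF (m / 2) z * walshF (n / 2) z))
        (two_ne_zero' ℝ)]
    have e1 : (2 : ℝ) * (1 / 2) = 1 := by norm_num
    have e2 : (2 : ℝ) * 1 - 1 = 1 := by norm_num
    rw [intervalIntegral.integral_const_mul, mul_zero, e1, e2, sub_self, smul_eq_mul, smul_eq_mul]
    ring
  rw [hrec]
  by_cases hb : m.testBit 0 = n.testBit 0
  · have hne : m / 2 ≠ n / 2 := by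
      simp only [Nat.testBit_zero] at hb
      have : (m % 2 = 1) ↔ (n % 2 = 1) := by simpa using hb
      omega
    rw [ih (m / 2 + n / 2) (by omega) _ _ hne rfl, mul_zero]
  · cases h1 : m.testBit 0 <;> cases h2 : n.testBit 0 <;> simp_all

/-- Restriction of a Walsh function to a dyadic subinterval of relative length `2^{-s}`. -/
theorem walshF_restrict (s : ℕ) (n : ℕ) (m : ℤ) :
    ∃ σ : ℝ, ∀ y : ℝ, 0 ≤ y → y < 1 → walshF n ((y + m) / 2 ^ s) = σ * walshF (n / 2 ^ s) y := by
  induction s generalizing n with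
  | zero => exact ⟨1, fun y _ _ => by simp [walshF_add_int]⟩
  | succ s ih =>
    obtain ⟨σ, hσ⟩ := ih (n / 2)
    refine ⟨(if n.testBit 0 then (-1 : ℝ) ^ (m / (2 ^ s : ℕ)) else 1) * σ, fun y h0 h1 => ?_⟩
    have e : 2 * ((y + m) / 2 ^ (s + 1)) = (y + m) / 2 ^ s := by
      rw [pow_succ]; field_simp
    have hf : ⌊(y + m) / 2 ^ s⌋ = m / (2 ^ s : ℕ) := by
      have := Int.floor_div_natCast (y + m) (2 ^ s)
      push_cast at this ⊢
      rw [this, Int.floor_add_intCast, Int.floor_eq_zero_iff.2 ⟨h0, h1⟩, zero_add]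
    rw [walshF_rec, e, hf, hσ y h0 h1, Nat.div_div_eq_div_mul, pow_succ', mul_assoc]

theorem wavePacket_restrict {I J : DyadicInterval} (ω : DyadicInterval) {x₀ : ℝ}
    (hI : x₀ ∈ I.toSet) (hJ : x₀ ∈ J.toSet) (s : ℕ) (hs : J.k = I.k + s) :
    ∃ τ : ℝ, ∀ x ∈ I.toSet,
      wavePacket J ω x = τ * walshF (ω.n / 2 ^ s) ((x - I.lo) / I.len) := by
  obtain ⟨σ, hσ⟩ := walshF_restrict s ω.n ((I.n : ℤ) - J.n * 2 ^ s)
  refine ⟨J.len ^ (-(1 : ℝ) / 2) * σ, fun x hx => ?_⟩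
  have hxJ : x ∈ J.toSet := subset_of_mem hI hJ (by omega) hx
  have hl := len_pos I
  rw [wavePacket, indicator_of_mem hxJ, mul_assoc, ← hσ]
  · congr 2
    simp only [DyadicInterval.len, DyadicInterval.lo, hs]
    rw [zpow_add₀ (by norm_num), zpow_natCast]
    have : (0 : ℝ) < 2 ^ I.k := by positivity
    push_cast
    field_simp
    ring
  · exact div_nonneg (by linarith [hx.1]) hl.le
  · rw [div_lt_one hl]; linarith [hx.2]

/-! ### Wave packets of quartiles -/

theorem wp_eq_zero {P : Quartile} {i : Fin 4} {x : ℝ} (h : x ∉ P.I.toSet) : P.wp i x = 0 := by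
  simp [Quartile.wp, wavePacket, h]

theorem wp_mul_self (P : Quartile) (i : Fin 4) (x : ℝ) :
    P.wp i x * P.wp i x = P.I.toSet.indicator (fun _ => P.I.len⁻¹) x := by
  by_cases h : x ∈ P.I.toSet
  · simp only [Quartile.wp, wavePacket, indicator_of_mem h]
    have hl := len_pos P.I
    rw [mul_mul_mul_comm, walshF_mul_self, ← Real.rpow_add hl]
    norm_num
    exact Real.rpow_neg_one _
  · simp [wp_eq_zero h, h]

theorem measurable_wp (P : Quartile) (i : Fin 4) : Measurable (P.wp i) := by
  unfold Quartile.wp wavePacket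
  refine Measurable.indicator ?_ (measurableSet_toSet _)
  exact ((measurable_walshF _).comp ((measurable_id.sub_const _).div_const _)).const_mul _

/-- Wave packets of disjoint tiles are orthogonal; here the first time interval is the shorter. -/
theorem wp_orth_aux (i : Fin 4) (P Q : Quartile) (hk : P.I.k ≤ Q.I.k)
    (h : ∀ x ξ, x ∈ P.I.toSet → x ∈ Q.I.toSet → ξ ∈ (P.freq i).toSet → ξ ∉ (Q.freq i).toSet) :
    ∫ x, P.wp i x * Q.wp i x = 0 := by
  by_cases hx : ∃ x, x ∈ P.I.toSet ∧ x ∈ Q.I.toSet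
  · obtain ⟨x₀, hP, hQ⟩ := hx
    obtain ⟨s, hs⟩ := Int.le.dest hk
    obtain ⟨τ, hτ⟩ := wavePacket_restrict (Q.freq i) hP hQ s hs.symm
    have hne : (P.freq i).n ≠ (Q.freq i).n / 2 ^ s := by
      intro he
      refine h x₀ (Q.freq i).lo hP hQ ?_ (lo_mem _)
      have h1 := (mem_iff _ _).1 (lo_mem (Q.freq i))
      rw [mem_iff, floor_coarsen _ (Q.freq i).k (P.freq i).k s (by rw [freq_k, freq_k]; omega), h1,
        he]
      push_cast
      rfl
    have hl := len_pos P.I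
    have e : ∀ x, P.wp i x * Q.wp i x = P.I.toSet.indicator (fun x =>
        (fun y => (P.I.len ^ (-(1 : ℝ) / 2) * τ) * (walshF (P.freq i).n y *
          walshF ((Q.freq i).n / 2 ^ s) y)) (x / P.I.len - P.I.lo / P.I.len)) x := by
      intro x
      by_cases hx : x ∈ P.I.toSet
      · rw [indicator_of_mem hx, Quartile.wp, Quartile.wp, hτ x hx, wavePacket, indicator_of_mem hx]
        simp only [← sub_div]
        ring
      · simp [wp_eq_zero hx, hx]
    simp_rw [e]
    rw [integral_indicator (measurableSet_toSet _), DyadicInterval.toSet,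
      integral_Ico_eq_integral_Ioc, ← intervalIntegral.integral_of_le (by linarith),
      intervalIntegral.integral_comp_div_sub (fun y => (P.I.len ^ (-(1 : ℝ) / 2) * τ) *
        (walshF (P.freq i).n y * walshF ((Q.freq i).n / 2 ^ s) y)) hl.ne',
      intervalIntegral.integral_const_mul]
    have e0 : P.I.lo / P.I.len - P.I.lo / P.I.len = 0 := sub_self _
    have e1 : (P.I.lo + P.I.len) / P.I.len - P.I.lo / P.I.len = 1 := by field_simp; ring
    rw [e0, e1, walsh_orth _ _ hne]
    simp
  · have : ∀ x, P.wp i x * Q.wp i x = 0 := by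
      intro x
      by_cases h1 : x ∈ P.I.toSet
      · rw [wp_eq_zero (fun h2 => hx ⟨x, h1, h2⟩), mul_zero]
      · rw [wp_eq_zero h1, zero_mul]
    simp [this]

theorem wp_orth (i : Fin 4) (P Q : Quartile)
    (h : ∀ x ξ, x ∈ P.I.toSet → x ∈ Q.I.toSet → ξ ∈ (P.freq i).toSet → ξ ∉ (Q.freq i).toSet) :
    ∫ x, P.wp i x * Q.wp i x = 0 := by
  rcases le_total P.I.k Q.I.k with hk | hk
  · exact wp_orth_aux i P Q hk h
  · simp_rw [mul_comm (P.wp i _)]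
    exact wp_orth_aux i Q P hk fun x ξ h1 h2 h3 h4 => h x ξ h2 h1 h4 h3

/-- Quartiles containing the frequency `ξ` whose time intervals are at least four times as long
as `I_P` all restrict on `I_P` to multiples of one Walsh function. -/
theorem wp_restrict (i : Fin 4) (P Q : Quartile) (ξ : ℝ) (hk : P.I.k + 2 ≤ Q.I.k)
    (hξ : ξ ∈ Q.ω.toSet) {x₀ : ℝ} (hP : x₀ ∈ P.I.toSet) (hQ : x₀ ∈ Q.I.toSet) :
    ∃ τ : ℝ, ∀ x ∈ P.I.toSet,
      Q.wp i x = τ * walshF (⌊ξ * 2 ^ P.I.k⌋).toNat ((x - P.I.lo) / P.I.len) := by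
  obtain ⟨s, hs⟩ := Int.le.dest hk
  obtain ⟨τ, hτ⟩ := wavePacket_restrict (Q.freq i) hP hQ (s + 2) (by push_cast; omega)
  have hn : (⌊ξ * 2 ^ P.I.k⌋).toNat = (Q.freq i).n / 2 ^ (s + 2) := by
    have h1 := (mem_iff _ _).1 hξ
    have h2 := floor_coarsen ξ Q.ω.k (-P.I.k) s (by have := Q.area; omega)
    rw [h1, zpow_neg, div_inv_eq_mul] at h2
    rw [h2, pow_add, mul_comm, ← Nat.div_div_eq_div_mul]
    have : (Q.freq i).n / 2 ^ 2 = Q.ω.n := by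
      simp only [Quartile.freq]; have := i.2; omega
    rw [this]
    rfl
  exact ⟨τ, fun x hx => by rw [hn]; exact hτ x hx⟩

/-! ### Selection of trees -/

/-- The tiles `P_i` and `Q_i` are disjoint. -/
def Disj (i : Fin 4) (P Q : Quartile) : Prop :=
  ∀ x ξ, x ∈ P.I.toSet → x ∈ Q.I.toSet → ξ ∈ (P.freq i).toSet → ξ ∉ (Q.freq i).toSet

theorem Disj.symm {i : Fin 4} {P Q : Quartile} (h : Disj i P Q) : Disj i Q P :=
  fun x ξ h1 h2 h3 h4 => h x ξ h2 h1 h4 h3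

/-- The canonical top frequency of a `j`-overlapping tree: the left endpoint of `⋂ ω_{P_j}`. -/
noncomputable def topXi (j : Fin 4) (T : Finset Quartile) : ℝ :=
  if h : T.Nonempty then T.sup' h (fun P => (P.freq j).lo) else 0

theorem topXi_overlapping {j : Fin 4} {T : Finset Quartile} {ξ : ℝ} {It : DyadicInterval}
    (h : IsOverlapping j T ξ It) : IsOverlapping j T (topXi j T) It := by
  have hm : ∀ P ∈ T, topXi j T ∈ (P.freq j).toSet := by
    intro P hP
    have hne : T.Nonempty := ⟨P, hP⟩
    rw [topXi, dif_pos hne]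
    refine ⟨Finset.le_sup' (fun P : Quartile => (P.freq j).lo) hP, ?_⟩
    refine lt_of_le_of_lt ?_ (h.2 P hP).2
    exact Finset.sup'_le hne _ fun Q hQ => (h.2 Q hQ).1
  refine ⟨⟨?_, fun P hP => ⟨(h.1.2 P hP).1, freq_subset P j (hm P hP)⟩⟩, hm⟩
  by_cases hne : T.Nonempty
  · obtain ⟨P, hP⟩ := hne
    exact nonneg_of_mem (hm P hP)
  · simp [topXi, hne]

/-- If the tiles `P_i`, `Q_i` meet and `|I_P| < |I_Q|` with scales of equal parity, then
`ω_Q ⊆ ω_{P_i}`. -/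
theorem omega_subset {i : Fin 4} {P Q : Quartile} (hpar : P.I.k % 2 = Q.I.k % 2)
    (hk : P.I.k < Q.I.k) {ζ : ℝ} (h1 : ζ ∈ (P.freq i).toSet) (h2 : ζ ∈ (Q.freq i).toSet) :
    Q.ω.toSet ⊆ (P.freq i).toSet := by
  refine subset_of_mem (freq_subset Q i h2) h1 ?_
  rw [freq_k]
  have := Q.area
  omega

theorem eq_of_tiles_meet {i : Fin 4} {P Q : Quartile} (hk : P.I.k = Q.I.k) {x ζ : ℝ}
    (h1 : x ∈ P.I.toSet) (h2 : x ∈ Q.I.toSet)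
    (h3 : ζ ∈ (P.freq i).toSet) (h4 : ζ ∈ (Q.freq i).toSet) : P = Q := by
  refine quartile_ext (eq_of_mem h1 h2 hk) (eq_of_mem (freq_subset P i h3) (freq_subset Q i h4) ?_)
  have := P.area; have := Q.area; omega

theorem freq_lt {i j : Fin 4} (P : Quartile) (hij : j < i) {a b : ℝ}
    (ha : a ∈ (P.freq j).toSet) (hb : b ∈ (P.freq i).toSet) : a < b := by
  rw [mem_iff] at ha hb
  have hlt : ⌊a / 2 ^ (P.freq i).k⌋ < ⌊b / 2 ^ (P.freq i).k⌋ := by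
    rw [hb]
    rw [show (P.freq i).k = (P.freq j).k from rfl, ha]
    simp only [Quartile.freq]
    have : j.val < i.val := hij
    omega
  by_contra hcon
  push Not at hcon
  exact absurd (Int.floor_mono (div_le_div_of_nonneg_right hcon (by positivity))) (not_le.2 hlt)

/-- Sign used to choose the top frequencies in decreasing (`j < i`) or increasing order. -/
noncomputable def sgn (i j : Fin 4) : ℝ := if j < i then 1 else -1

theorem sgn_lt {i j : Fin 4} (hij : j ≠ i) (P : Quartile) {a b : ℝ}
    (ha : a ∈ (P.freq j).toSet) (hb : b ∈ (P.freq i).toSet) : sgn i j * a < sgn i j * b := by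
  rcases lt_or_gt_of_ne hij with h | h
  · simpa [sgn, h] using freq_lt P h ha hb
  · simpa [sgn, not_lt.2 h.le] using freq_lt P h hb ha

/-- Greedy selection: the heavy `j`-overlapping tree with extremal top frequency is chosen, all
quartiles meeting its top are discarded, and the procedure is repeated.  The extremality makes
all tiles `P_i` of the chosen trees pairwise disjoint. -/
theorem select (i j : Fin 4) (hij : j ≠ i) (c : Quartile → ℝ) (thr : ℝ) (hthr : 0 < thr)
    (R : Finset Quartile) (hR : ∀ P ∈ R, ∀ Q ∈ R, P.I.k % 2 = Q.I.k % 2) :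
    ∃ 𝒯 : Finset (Finset Quartile × ℝ × DyadicInterval),
      (∀ τ ∈ 𝒯, τ.1 ⊆ R ∧ IsOverlapping j τ.1 τ.2.1 τ.2.2 ∧ τ.2.1 = topXi j τ.1 ∧
        thr * τ.2.2.len < ∑ P ∈ τ.1, c P ^ 2) ∧
      (∀ τ ∈ 𝒯, ∀ τ' ∈ 𝒯, ∀ P ∈ τ.1, ∀ P' ∈ τ'.1, P ≠ P' → Disj i P P') ∧
      (∀ τ ∈ 𝒯, ∀ τ' ∈ 𝒯, τ ≠ τ' → Disjoint τ.1 τ'.1) ∧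
      (∀ (T : Finset Quartile) (ξ : ℝ) (It : DyadicInterval), T ⊆ R →
        (∀ P ∈ T, ∀ τ ∈ 𝒯, ¬ (P.I.toSet ⊆ τ.2.2.toSet ∧ τ.2.1 ∈ P.ω.toSet)) →
        IsOverlapping j T ξ It → ∑ P ∈ T, c P ^ 2 ≤ thr * It.len) := by
  classical
  induction hn : R.card using Nat.strong_induction_on generalizing R with
  | _ n ih =>
  let cand : Finset (Finset Quartile) := R.powerset.filter fun T =>
    ∃ ξ It, IsOverlapping j T ξ It ∧ thr * It.len < ∑ P ∈ T, c P ^ 2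
  by_cases hc : cand.Nonempty
  swap
  · refine ⟨∅, by simp, by simp, by simp, fun T ξ It hT _ hov => ?_⟩
    by_contra hlt
    push Not at hlt
    exact hc ⟨T, Finset.mem_filter.2 ⟨Finset.mem_powerset.2 hT, ξ, It, hov, hlt⟩⟩
  obtain ⟨T, hT, hmax⟩ := Finset.exists_max_image cand (fun T => sgn i j * topXi j T) hc
  obtain ⟨hTR, ξ₀, It, hov₀, hheavy⟩ := Finset.mem_filter.1 hT
  rw [Finset.mem_powerset] at hTR
  have hov := topXi_overlapping hov₀
  set ξ := topXi j T with hξ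
  let R' : Finset Quartile := R.filter fun P => ¬ (P.I.toSet ⊆ It.toSet ∧ ξ ∈ P.ω.toSet)
  have hR'R : R' ⊆ R := Finset.filter_subset _ _
  have hTne : T.Nonempty := by
    by_contra hne
    rw [Finset.not_nonempty_iff_eq_empty] at hne
    rw [hne] at hheavy
    have := len_pos It
    simp only [Finset.sum_empty] at hheavy
    nlinarith
  have hTR' : ∀ P ∈ T, P ∉ R' := fun P hP hP' => (Finset.mem_filter.1 hP').2 (hov.1.2 P hP)
  have hcard : R'.card < n := by
    rw [← hn]
    refine Finset.card_lt_card ⟨hR'R, fun h => ?_⟩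
    obtain ⟨P, hP⟩ := hTne
    exact hTR' P hP (h (hTR hP))
  obtain ⟨𝒯, h1, h2, h3, h4⟩ := ih _ hcard R'
    (fun P hP Q hQ => hR P (hR'R hP) Q (hR'R hQ)) rfl
  -- tiles of the new tree against tiles of the later ones
  have hcross : ∀ τ ∈ 𝒯, ∀ P ∈ T, ∀ P' ∈ τ.1, Disj i P P' := by
    intro τ hτ P hP P' hP' x ζ hx hx' hζ hζ'
    obtain ⟨hτR, hτov, hτξ, hτh⟩ := h1 τ hτ
    have hP'R := hτR hP'
    have hpar := hR P (hTR hP) P' (hR'R hP'R)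
    rcases lt_trichotomy P.I.k P'.I.k with hk | hk | hk
    · have hin := omega_subset hpar hk hζ hζ' (hτov.1.2 P' hP').2
      have hlt := sgn_lt hij P (hov.2 P hP) hin
      have hle := hmax τ.1 (Finset.mem_filter.2
        ⟨Finset.mem_powerset.2 (hτR.trans hR'R), τ.2.1, τ.2.2, hτov, hτh⟩)
      simp only [← hτξ] at hle
      linarith
    · exact hTR' P hP (eq_of_tiles_meet hk hx hx' hζ hζ' ▸ hP'R)
    · have hin := omega_subset hpar.symm hk hζ' hζ (hov.1.2 P hP).2
      refine (Finset.mem_filter.1 hP'R).2 ⟨?_, freq_subset P' i hin⟩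
      exact (subset_of_mem hx' hx hk.le).trans (hov.1.2 P hP).1
  have hself : ∀ P ∈ T, ∀ P' ∈ T, P ≠ P' → Disj i P P' := by
    have key : ∀ P ∈ T, ∀ P' ∈ T, P.I.k < P'.I.k → Disj i P P' := by
      intro P hP P' hP' hk x ζ hx hx' hζ hζ'
      have hin := omega_subset (hR P (hTR hP) P' (hTR hP')) hk hζ hζ' (hov.1.2 P' hP').2
      exact lt_irrefl _ (sgn_lt hij P (hov.2 P hP) hin)
    intro P hP P' hP' hne
    rcases lt_trichotomy P.I.k P'.I.k with hk | hk | hk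
    · exact key P hP P' hP' hk
    · exact fun x ζ hx hx' hζ hζ' => hne (eq_of_tiles_meet hk hx hx' hζ hζ')
    · exact (key P' hP' P hP hk).symm
  refine ⟨insert (T, ξ, It) 𝒯, ?_, ?_, ?_, ?_⟩
  · intro τ hτ
    rcases Finset.mem_insert.1 hτ with rfl | hτ
    · exact ⟨hTR, hov, rfl, hheavy⟩
    · obtain ⟨a, b, d, e⟩ := h1 τ hτ
      exact ⟨a.trans hR'R, b, d, e⟩
  · intro τ hτ τ' hτ'
    rcases Finset.mem_insert.1 hτ with rfl | hτ <;> rcases Finset.mem_insert.1 hτ' with rfl | hτ'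
    · exact hself
    · exact fun P hP P' hP' _ => hcross τ' hτ' P hP P' hP'
    · exact fun P hP P' hP' _ => (hcross τ hτ P' hP' P hP).symm
    · exact h2 τ hτ τ' hτ'
  · have hd : ∀ τ ∈ 𝒯, Disjoint T τ.1 := fun τ hτ =>
      Finset.disjoint_left.2 fun P hP hP' => hTR' P hP ((h1 τ hτ).1 hP')
    intro τ hτ τ' hτ' hne
    rcases Finset.mem_insert.1 hτ with rfl | hτ <;> rcases Finset.mem_insert.1 hτ' with rfl | hτ'
    · exact absurd rfl hne
    · exact hd τ' hτ'
    · exact (hd τ hτ).symm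
    · exact h3 τ hτ τ' hτ' hne
  · intro S ζ Is hS hav hSov
    refine h4 S ζ Is (fun P hP => ?_) (fun P hP τ hτ => hav P hP τ (Finset.mem_insert_of_mem hτ))
      hSov
    exact Finset.mem_filter.2 ⟨hS hP, hav P hP _ (Finset.mem_insert_self _ _)⟩

/-! ### Counting functions of trees -/

open Classical in
/-- Truncation of a family of dyadic intervals at height `n`: the remaining intervals lie where
the truncated counting function equals its maximal value `n`. -/
theorem exists_trunc {ι : Type*} (I : ι → DyadicInterval) (n : ℕ) (𝒰 : Finset ι) :
    ∃ 𝒱 ⊆ 𝒰, (∀ x, (𝒱.filter fun σ => x ∈ (I σ).toSet).card ≤ n) ∧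
      ∀ τ ∈ 𝒰 \ 𝒱, ∀ x ∈ (I τ).toSet, n ≤ (𝒱.filter fun σ => x ∈ (I σ).toSet).card := by
  induction 𝒰 using Finset.induction_on_max_value (fun τ => -(I τ).k) with
  | empty => exact ⟨∅, by simp, by simp, by simp⟩
  | insert a s has hmax ih =>
    obtain ⟨𝒱, hsub, hov, hfull⟩ := ih
    by_cases hcase : ∃ x₀ ∈ (I a).toSet, n ≤ (𝒱.filter fun σ => x₀ ∈ (I σ).toSet).card
    · obtain ⟨x₀, hx₀, hn⟩ := hcase
      refine ⟨𝒱, hsub.trans (Finset.subset_insert _ _), hov, fun τ hτ x hx => ?_⟩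
      rw [Finset.mem_sdiff, Finset.mem_insert] at hτ
      rcases hτ with ⟨rfl | hτs, hτ𝒱⟩
      · refine hn.trans (Finset.card_le_card fun σ hσ => ?_)
        rw [Finset.mem_filter] at hσ ⊢
        have hk := hmax σ (hsub hσ.1)
        exact ⟨hσ.1, subset_of_mem hx₀ hσ.2 (by omega) hx⟩
      · exact hfull τ (Finset.mem_sdiff.2 ⟨hτs, hτ𝒱⟩) x hx
    · push Not at hcase
      refine ⟨insert a 𝒱, Finset.insert_subset_insert _ hsub, fun x => ?_, fun τ hτ x hx => ?_⟩
      · rw [Finset.filter_insert]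
        split_ifs with hx
        · exact (Finset.card_insert_le _ _).trans (hcase x hx)
        · exact hov x
      · rw [Finset.mem_sdiff, Finset.mem_insert, Finset.mem_insert] at hτ
        push Not at hτ
        obtain ⟨hτ1, hτa, hτ𝒱⟩ := hτ
        refine (hfull τ (Finset.mem_sdiff.2 ⟨hτ1.resolve_left hτa, hτ𝒱⟩) x hx).trans ?_
        exact Finset.card_le_card (Finset.filter_subset_filter _ (Finset.subset_insert _ _))

open Classical in
theorem mul_measure_full_le {ι : Type*} (I : ι → DyadicInterval) (n : ℕ) (𝒱 : Finset ι) :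
    (n : ℝ) * volume.real {x | (n : ℝ) ≤ ∑ σ ∈ 𝒱, (I σ).toSet.indicator (fun _ => (1 : ℝ)) x}
      ≤ ∑ σ ∈ 𝒱, (I σ).len := by
  have hinteg : ∀ σ ∈ 𝒱, Integrable ((I σ).toSet.indicator (fun _ => (1 : ℝ))) volume := by
    intro σ _
    rw [integrable_indicator_iff (measurableSet_toSet _)]
    exact integrableOn_const (by rw [volume_toSet]; exact ENNReal.ofReal_ne_top)
  refine (mul_meas_ge_le_integral_of_nonneg (Filter.Eventually.of_forall fun x => ?_)
    (integrable_finsetSum _ hinteg) (n : ℝ)).trans ?_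
  · exact Finset.sum_nonneg fun σ _ => indicator_nonneg (fun _ _ => zero_le_one) _
  · rw [integral_finsetSum _ hinteg]
    refine Finset.sum_le_sum fun σ _ => ?_
    rw [integral_indicator (measurableSet_toSet _)]
    simp [volume_real_toSet]

open Classical in
theorem count_eq {ι : Type*} (I : ι → DyadicInterval) (𝒱 : Finset ι) (x : ℝ) :
    ∑ σ ∈ 𝒱, (I σ).toSet.indicator (fun _ => (1 : ℝ)) x
      = (𝒱.filter fun σ => x ∈ (I σ).toSet).card := by
  rw [Finset.card_filter]
  push_cast
  refine Finset.sum_congr rfl fun σ _ => ?_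
  by_cases h : x ∈ (I σ).toSet <;> simp [h]

open Classical in
/-- An estimate for the total length of subfamilies of overlap at most `n`, with constant
`M ≤ n / 2`, self-improves to the whole family: the truncated family controls the measure
of the set where the truncation is active, and the rest lives on that set. -/
theorem packing {ι : Type*} (I : ι → DyadicInterval) (n : ℕ) (hn : 1 ≤ n) (M : ℝ)
    (hMn : 2 * M ≤ n) (E : Set ℝ) (𝒯 : Finset ι)
    (hyp : ∀ 𝒰 ⊆ 𝒯, (∀ x, (𝒰.filter fun σ => x ∈ (I σ).toSet).card ≤ n) →
      ∀ A : Set ℝ, MeasurableSet A → (∀ τ ∈ 𝒰, (I τ).toSet ⊆ A) →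
        ∑ τ ∈ 𝒰, (I τ).len ≤ M * volume.real (E ∩ A)) (hM : 0 ≤ M)
    (A : Set ℝ) (hA : MeasurableSet A) (hTA : ∀ τ ∈ 𝒯, (I τ).toSet ⊆ A) :
    ∑ τ ∈ 𝒯, (I τ).len ≤ 2 * M * volume.real (E ∩ A) := by
  induction hc : 𝒯.card using Nat.strong_induction_on generalizing 𝒯 A with
  | _ m ih =>
  obtain ⟨𝒱, hsub, hov, hfull⟩ := exists_trunc I n 𝒯
  have h1 := hyp 𝒱 hsub hov A hA fun τ hτ => hTA τ (hsub hτ)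
  rcases Finset.eq_empty_or_nonempty 𝒯 with rfl | hne
  · simp only [Finset.sum_empty]; positivity
  set F : Set ℝ := {x | (n : ℝ) ≤ ∑ σ ∈ 𝒱, (I σ).toSet.indicator (fun _ => (1 : ℝ)) x} with hF
  have hFmem : ∀ τ ∈ 𝒯 \ 𝒱, (I τ).toSet ⊆ F := by
    intro τ hτ x hx
    simp only [hF, mem_ofPred_eq, count_eq]
    exact_mod_cast hfull τ hτ x hx
  have hFm : MeasurableSet F := by
    refine measurableSet_le measurable_const (Finset.measurable_sum _ fun σ _ => ?_)
    exact measurable_const.indicator (measurableSet_toSet _)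
  have hFfin : volume F ≠ ⊤ := by
    refine ne_top_of_le_ne_top (b := volume (⋃ σ ∈ 𝒱, (I σ).toSet)) ?_ (measure_mono fun x hx => ?_)
    · refine ne_of_lt ((measure_biUnion_finset_le _ _).trans_lt ?_)
      exact ENNReal.sum_lt_top.2 fun σ _ => by rw [volume_toSet]; exact ENNReal.ofReal_lt_top
    · simp only [hF, mem_ofPred_eq, count_eq] at hx
      have : 0 < (𝒱.filter fun σ => x ∈ (I σ).toSet).card := by
        have : n ≤ (𝒱.filter fun σ => x ∈ (I σ).toSet).card := by exact_mod_cast hx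
        omega
      obtain ⟨σ, hσ⟩ := Finset.card_pos.1 this
      rw [Finset.mem_filter] at hσ
      exact mem_biUnion hσ.1 hσ.2
  have hVne : 𝒱.Nonempty := by
    by_contra hV
    rw [Finset.not_nonempty_iff_eq_empty] at hV
    obtain ⟨τ, hτ⟩ := hne
    have := hfull τ (by simp [hV, hτ]) _ (lo_mem _)
    simp [hV] at this
    omega
  have hcard : (𝒯 \ 𝒱).card < m := by
    rw [← hc]
    refine Finset.card_lt_card ⟨Finset.sdiff_subset, fun h => ?_⟩
    obtain ⟨σ, hσ⟩ := hVne
    exact (Finset.mem_sdiff.1 (h (hsub hσ))).2 hσ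
  have h2 := ih _ hcard (𝒯 \ 𝒱) (fun 𝒰 h𝒰 => hyp 𝒰 (h𝒰.trans Finset.sdiff_subset)) F hFm hFmem rfl
  have h3 : volume.real (E ∩ F) ≤ volume.real F := measureReal_mono inter_subset_right hFfin
  have h4 := mul_measure_full_le I n 𝒱
  rw [← hF] at h4
  have h5 : ∑ τ ∈ 𝒯 \ 𝒱, (I τ).len ≤ ∑ τ ∈ 𝒱, (I τ).len := by
    refine h2.trans (le_trans ?_ h4)
    have : (0 : ℝ) ≤ volume.real F := measureReal_nonneg
    calc 2 * M * volume.real (E ∩ F) ≤ 2 * M * volume.real F := by gcongr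
      _ ≤ n * volume.real F := by gcongr
  rw [← Finset.sum_sdiff hsub]
  linarith

/-! ### Orthogonality and fourth moments -/

/-- Bounded measurable functions of bounded support. -/
def Nice (g : ℝ → ℝ) : Prop :=
  Measurable g ∧ (∃ B, ∀ x, |g x| ≤ B) ∧ ∃ R, ∀ x, R < |x| → g x = 0

theorem Nice.integrable {g : ℝ → ℝ} (h : Nice g) : Integrable g volume := by
  obtain ⟨hm, ⟨B, hB⟩, R, hR⟩ := h
  have hsupp : g = (Icc (-R) R).indicator g := by
    ext x
    by_cases hx : x ∈ Icc (-R) R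
    · simp [hx]
    · rw [indicator_of_notMem hx]
      refine hR x ?_
      by_contra hcon
      exact hx (abs_le.1 (not_lt.1 hcon))
  rw [hsupp, integrable_indicator_iff measurableSet_Icc]
  exact Measure.integrableOn_of_bounded (M := B) (by simp) hm.aestronglyMeasurable
    (Filter.Eventually.of_forall hB)

theorem Nice.zero : Nice fun _ => 0 := ⟨measurable_const, ⟨0, by simp⟩, 0, by simp⟩

theorem Nice.add {g h : ℝ → ℝ} (hg : Nice g) (hh : Nice h) : Nice fun x => g x + h x := by
  obtain ⟨hm, ⟨B, hB⟩, R, hR⟩ := hg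
  obtain ⟨hm', ⟨B', hB'⟩, R', hR'⟩ := hh
  refine ⟨hm.add hm', ⟨B + B', fun x => (abs_add_le _ _).trans (add_le_add (hB x) (hB' x))⟩,
    max R R', fun x hx => ?_⟩
  show g x + h x = 0
  rw [hR x ((le_max_left _ _).trans_lt hx), hR' x ((le_max_right _ _).trans_lt hx), add_zero]

theorem Nice.mul {g h : ℝ → ℝ} (hg : Nice g) (hh : Nice h) : Nice fun x => g x * h x := by
  obtain ⟨hm, ⟨B, hB⟩, R, hR⟩ := hg
  obtain ⟨hm', ⟨B', hB'⟩, R', hR'⟩ := hh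
  refine ⟨hm.mul hm', ⟨B * B', fun x => ?_⟩, R, fun x hx => by simp [hR x hx]⟩
  rw [abs_mul]
  exact mul_le_mul (hB x) (hB' x) (abs_nonneg _) ((abs_nonneg _).trans (hB x))

theorem Nice.const_mul {g : ℝ → ℝ} (hg : Nice g) (a : ℝ) : Nice fun x => a * g x := by
  obtain ⟨hm, ⟨B, hB⟩, R, hR⟩ := hg
  refine ⟨hm.const_mul a, ⟨|a| * B, fun x => ?_⟩, R, fun x hx => by simp [hR x hx]⟩
  rw [abs_mul]
  exact mul_le_mul_of_nonneg_left (hB x) (abs_nonneg _)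

theorem Nice.pow {g : ℝ → ℝ} (hg : Nice g) (n : ℕ) : Nice fun x => g x ^ (n + 1) := by
  induction n with
  | zero => simpa using hg
  | succ n ih => simpa only [pow_succ _ (n + 1)] using ih.mul hg

theorem Nice.sum {ι : Type*} {s : Finset ι} {g : ι → ℝ → ℝ} (h : ∀ j ∈ s, Nice (g j)) :
    Nice fun x => ∑ j ∈ s, g j x := by
  classical
  induction s using Finset.induction_on with
  | empty => simpa using Nice.zero
  | insert a s ha ih =>
    simp only [Finset.sum_insert ha]
    exact (h a (Finset.mem_insert_self _ _)).add
      (ih fun j hj => h j (Finset.mem_insert_of_mem hj))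

theorem wp_sq (P : Quartile) (i : Fin 4) (x : ℝ) :
    P.wp i x ^ 2 = P.I.toSet.indicator (fun _ => P.I.len⁻¹) x := by
  rw [sq, wp_mul_self]

theorem nice_wp (P : Quartile) (i : Fin 4) : Nice (P.wp i) := by
  refine ⟨measurable_wp P i, ⟨1 + P.I.len⁻¹, fun x => ?_⟩, P.I.lo + P.I.len, fun x hx => ?_⟩
  · have h1 : P.wp i x ^ 2 ≤ P.I.len⁻¹ := by
      rw [wp_sq]
      exact indicator_le_self' (fun _ _ => (inv_pos.2 (len_pos _)).le) x
    have h2 := sq_abs (P.wp i x)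
    nlinarith [sq_nonneg (|P.wp i x| - 1), abs_nonneg (P.wp i x)]
  · refine wp_eq_zero fun hmem => ?_
    rw [abs_of_nonneg (nonneg_of_mem hmem)] at hx
    exact absurd hmem.2 (not_lt.2 hx.le)

theorem integral_wp_sq (P : Quartile) (i : Fin 4) : ∫ x, P.wp i x ^ 2 = 1 := by
  simp only [wp_sq]
  rw [integral_indicator (measurableSet_toSet _)]
  simp [volume_real_toSet, (len_pos P.I).ne']

/-- The wave packet sum `∑_{P ∈ S} c_P φ_{P_i}`. -/
noncomputable def Fsum (i : Fin 4) (c : Quartile → ℝ) (S : Finset Quartile) (x : ℝ) : ℝ :=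
  ∑ P ∈ S, c P * P.wp i x

/-- The squared square function `∑_{P ∈ S} c_P² |I_P|⁻¹ 1_{I_P}`. -/
noncomputable def Ssum (i : Fin 4) (c : Quartile → ℝ) (S : Finset Quartile) (x : ℝ) : ℝ :=
  ∑ P ∈ S, c P ^ 2 * P.wp i x ^ 2

variable {i : Fin 4} {c : Quartile → ℝ}

theorem nice_Fsum (i : Fin 4) (c : Quartile → ℝ) (S : Finset Quartile) : Nice (Fsum i c S) :=
  Nice.sum fun P _ => (nice_wp P i).const_mul (c P)

theorem nice_Ssum (i : Fin 4) (c : Quartile → ℝ) (S : Finset Quartile) : Nice (Ssum i c S) :=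
  Nice.sum fun P _ => ((nice_wp P i).pow 1).const_mul (c P ^ 2)

theorem Ssum_nonneg (S : Finset Quartile) (x : ℝ) : 0 ≤ Ssum i c S x :=
  Finset.sum_nonneg fun _ _ => by positivity

theorem Ssum_mono {S S' : Finset Quartile} (h : S ⊆ S') (x : ℝ) : Ssum i c S x ≤ Ssum i c S' x :=
  Finset.sum_le_sum_of_subset_of_nonneg h fun _ _ _ => by positivity

theorem integral_Ssum (S : Finset Quartile) : ∫ x, Ssum i c S x = ∑ P ∈ S, c P ^ 2 := by
  unfold Ssum
  rw [integral_finsetSum _ fun P _ => (((nice_wp P i).pow 1).const_mul (c P ^ 2)).integrable]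
  refine Finset.sum_congr rfl fun P _ => ?_
  rw [integral_const_mul, integral_wp_sq, mul_one]

theorem integral_Fsum_wp {S : Finset Quartile} {P : Quartile}
    (h : ∀ Q ∈ S, Disj i Q P) : ∫ x, Fsum i c S x * P.wp i x = 0 := by
  simp only [Fsum, Finset.sum_mul]
  rw [integral_finsetSum _ fun Q _ =>
    (((nice_wp Q i).const_mul (c Q)).mul (nice_wp P i)).integrable]
  refine Finset.sum_eq_zero fun Q hQ => ?_
  simp only [mul_assoc]
  rw [integral_const_mul, wp_orth i Q P (h Q hQ), mul_zero]

theorem Fsum_insert {S : Finset Quartile} {P : Quartile} (h : P ∉ S) (x : ℝ) :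
    Fsum i c (insert P S) x = Fsum i c S x + c P * P.wp i x := by
  rw [Fsum, Finset.sum_insert h, add_comm]; rfl

theorem Ssum_insert {S : Finset Quartile} {P : Quartile} (h : P ∉ S) (x : ℝ) :
    Ssum i c (insert P S) x = Ssum i c S x + c P ^ 2 * P.wp i x ^ 2 := by
  rw [Ssum, Finset.sum_insert h, add_comm]; rfl

theorem integral_Fsum_sq {S : Finset Quartile}
    (h : ∀ P ∈ S, ∀ Q ∈ S, P ≠ Q → Disj i P Q) :
    ∫ x, Fsum i c S x ^ 2 = ∑ P ∈ S, c P ^ 2 := by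
  induction S using Finset.induction_on with
  | empty => simp [Fsum]
  | insert a s ha ih =>
    have h0 : ∫ x, Fsum i c s x * a.wp i x = 0 := integral_Fsum_wp fun Q hQ =>
      h Q (Finset.mem_insert_of_mem hQ) a (Finset.mem_insert_self _ _) fun e => ha (e ▸ hQ)
    have hF := nice_Fsum i c s
    have hw := nice_wp a i
    have heq : ∀ x, Fsum i c (insert a s) x ^ 2
        = Fsum i c s x ^ 2 + (2 * c a * (Fsum i c s x * a.wp i x) + c a ^ 2 * a.wp i x ^ 2) := by
      intro x; rw [Fsum_insert ha]; ring
    simp only [heq]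
    have n1 := (hF.mul hw).const_mul (2 * c a)
    have n2 := (hw.pow 1).const_mul (c a ^ 2)
    rw [integral_add (hF.pow 1).integrable (n1.add n2).integrable,
      integral_add n1.integrable n2.integrable, integral_const_mul, integral_const_mul, h0,
      integral_wp_sq, Finset.sum_insert ha, ih fun P hP Q hQ =>
        h P (Finset.mem_insert_of_mem hP) Q (Finset.mem_insert_of_mem hQ)]
    ring

/-- On the time interval of a quartile finer than a tree `s`, the wave packet sum of `s` has
constant modulus and its square function is constant. -/
theorem tree_const {s : Finset Quartile} {a : Quartile} {ξ : ℝ} (ha : a ∉ s)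
    (hξa : ξ ∈ a.ω.toSet) (hξ : ∀ P ∈ s, ξ ∈ P.ω.toSet)
    (hpar : ∀ P ∈ s, P.I.k % 2 = a.I.k % 2) (hk : ∀ P ∈ s, a.I.k ≤ P.I.k) :
    ∃ A B : ℝ, ∀ x ∈ a.I.toSet, Fsum i c s x ^ 2 = A ∧ Ssum i c s x = B := by
  have key : ∀ P ∈ s, ∃ τ : ℝ, ∀ x ∈ a.I.toSet,
      P.wp i x = τ * walshF (⌊ξ * 2 ^ a.I.k⌋).toNat ((x - a.I.lo) / a.I.len) := by
    intro P hP
    by_cases hx : ∃ x₀, x₀ ∈ a.I.toSet ∧ x₀ ∈ P.I.toSet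
    · obtain ⟨x₀, h1, h2⟩ := hx
      refine wp_restrict i a P ξ ?_ (hξ P hP) h1 h2
      have h3 := hk P hP
      have h4 := hpar P hP
      have h5 : a.I.k ≠ P.I.k := by
        intro e
        refine ha ?_
        have hω : a.ω = P.ω := eq_of_mem hξa (hξ P hP) (by
          have := a.area; have := P.area; omega)
        rw [quartile_ext (eq_of_mem h1 h2 e) hω]
        exact hP
      omega
    · push Not at hx
      exact ⟨0, fun x hxa => by rw [wp_eq_zero (hx x hxa), zero_mul]⟩
  choose! τ hτ using key
  refine ⟨(∑ P ∈ s, c P * τ P) ^ 2, ∑ P ∈ s, c P ^ 2 * τ P ^ 2, fun x hx => ⟨?_, ?_⟩⟩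
  · have : Fsum i c s x = (∑ P ∈ s, c P * τ P) *
        walshF (⌊ξ * 2 ^ a.I.k⌋).toNat ((x - a.I.lo) / a.I.len) := by
      rw [Fsum, Finset.sum_mul]
      exact Finset.sum_congr rfl fun P hP => by rw [hτ P hP x hx, mul_assoc]
    rw [this, mul_pow, sq (walshF _ _), walshF_mul_self, mul_one]
  · refine Finset.sum_congr rfl fun P hP => ?_
    rw [hτ P hP x hx, mul_pow, sq (walshF _ _), walshF_mul_self, mul_one]

/-- Fourth moments of a tree are controlled by its square function: the finest wave packet `ψ`
is orthogonal to the remaining sum `F`, and `F²` is constant on the support of `ψ`, so that the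
odd terms in the expansion of `(F + c ψ)⁴` integrate to zero. -/
theorem tree_fourth {S : Finset Quartile} {ξ : ℝ} (hξ : ∀ P ∈ S, ξ ∈ P.ω.toSet)
    (hpar : ∀ P ∈ S, ∀ Q ∈ S, P.I.k % 2 = Q.I.k % 2)
    (hd : ∀ P ∈ S, ∀ Q ∈ S, P ≠ Q → Disj i P Q) :
    ∫ x, Fsum i c S x ^ 4 ≤ 6 * ∫ x, Fsum i c S x ^ 2 * Ssum i c S x := by
  induction S using Finset.induction_on_max_value (fun P : Quartile => -P.I.k) with
  | empty => simp [Fsum]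
  | insert a s ha hmax ih =>
    have hs : ∀ P ∈ s, P ∈ insert a s := fun P => Finset.mem_insert_of_mem
    have has := Finset.mem_insert_self a s
    have ih' := ih (fun P hP => hξ P (hs P hP)) (fun P hP Q hQ => hpar P (hs P hP) Q (hs Q hQ))
      (fun P hP Q hQ => hd P (hs P hP) Q (hs Q hQ))
    obtain ⟨A, B, hAB⟩ := tree_const (i := i) (c := c) ha (hξ a has) (fun P hP => hξ P (hs P hP))
      (fun P hP => hpar P (hs P hP) a has) (fun P hP => by have := hmax P hP; omega)
    have h0 : ∫ x, Fsum i c s x * a.wp i x = 0 := integral_Fsum_wp fun Q hQ =>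
      hd Q (hs Q hQ) a has fun e => ha (e ▸ hQ)
    have hF := nice_Fsum i c s
    have hS := nice_Ssum i c s
    have hw := nice_wp a i
    -- `ψ³ = ψ / |I|`, and `F² ψ = A ψ`, `S ψ = B ψ`
    have hw3 : ∀ x, a.wp i x ^ 3 = a.I.len⁻¹ * a.wp i x := by
      intro x
      by_cases hx : x ∈ a.I.toSet
      · rw [pow_succ, wp_sq, indicator_of_mem hx]
      · rw [wp_eq_zero hx]; simp
    have hFw : ∀ x, Fsum i c s x ^ 2 * a.wp i x = A * a.wp i x := by
      intro x
      by_cases hx : x ∈ a.I.toSet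
      · rw [(hAB x hx).1]
      · rw [wp_eq_zero hx]; simp
    have hSw : ∀ x, Ssum i c s x * a.wp i x = B * a.wp i x := by
      intro x
      by_cases hx : x ∈ a.I.toSet
      · rw [(hAB x hx).2]
      · rw [wp_eq_zero hx]; simp
    have e1 : ∀ x, Fsum i c (insert a s) x ^ 4
        = (Fsum i c s x ^ 4 + (6 * c a ^ 2) * (Fsum i c s x ^ 2 * a.wp i x ^ 2)
          + c a ^ 4 * a.wp i x ^ 4)
          + (4 * c a * A + 4 * c a ^ 3 * a.I.len⁻¹) * (Fsum i c s x * a.wp i x) := by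
      intro x
      rw [Fsum_insert ha]
      linear_combination (4 * c a * Fsum i c s x) * hFw x + (4 * c a ^ 3 * Fsum i c s x) * hw3 x
    have e2 : ∀ x, Fsum i c (insert a s) x ^ 2 * Ssum i c (insert a s) x
        = (Fsum i c s x ^ 2 * Ssum i c s x + c a ^ 2 * (Fsum i c s x ^ 2 * a.wp i x ^ 2)
          + c a ^ 2 * (Ssum i c s x * a.wp i x ^ 2) + c a ^ 4 * a.wp i x ^ 4)
          + (2 * c a * B + 2 * c a ^ 3 * a.I.len⁻¹) * (Fsum i c s x * a.wp i x) := by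
      intro x
      rw [Fsum_insert ha, Ssum_insert ha]
      linear_combination (2 * c a * Fsum i c s x) * hSw x + (2 * c a ^ 3 * Fsum i c s x) * hw3 x
    have n4 := hF.pow 3
    have n22 := ((hF.pow 1).mul (hw.pow 1))
    have nw4 := (hw.pow 3).const_mul (c a ^ 4)
    have n2S := (hF.pow 1).mul hS
    have nS2 := (hS.mul (hw.pow 1)).const_mul (c a ^ 2)
    have nFw := hF.mul hw
    have I1 : ∫ x, Fsum i c (insert a s) x ^ 4 = ∫ x, Fsum i c s x ^ 4
        + (6 * c a ^ 2) * (Fsum i c s x ^ 2 * a.wp i x ^ 2) + c a ^ 4 * a.wp i x ^ 4 := by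
      simp only [e1]
      rw [integral_add ((n4.add (n22.const_mul _)).add nw4).integrable
        (nFw.const_mul _).integrable, integral_const_mul, h0, mul_zero, add_zero]
    have I2 : ∫ x, Fsum i c (insert a s) x ^ 2 * Ssum i c (insert a s) x
        = ∫ x, Fsum i c s x ^ 2 * Ssum i c s x + c a ^ 2 * (Fsum i c s x ^ 2 * a.wp i x ^ 2)
          + c a ^ 2 * (Ssum i c s x * a.wp i x ^ 2) + c a ^ 4 * a.wp i x ^ 4 := by
      simp only [e2]
      rw [integral_add (((n2S.add (n22.const_mul _)).add nS2).add nw4).integrable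
        (nFw.const_mul _).integrable, integral_const_mul, h0, mul_zero, add_zero]
    rw [I1, I2, integral_add (n4.add (n22.const_mul _)).integrable nw4.integrable,
      integral_add n4.integrable (n22.const_mul _).integrable,
      integral_add ((n2S.add (n22.const_mul _)).add nS2).integrable nw4.integrable,
      integral_add (n2S.add (n22.const_mul _)).integrable nS2.integrable,
      integral_add n2S.integrable (n22.const_mul _).integrable,
      integral_const_mul, integral_const_mul, integral_const_mul, integral_const_mul]
    have p1 : 0 ≤ c a ^ 2 * ∫ x, Ssum i c s x * a.wp i x ^ 2 :=
      mul_nonneg (sq_nonneg _) (integral_nonneg fun x =>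
        mul_nonneg (Ssum_nonneg s x) (sq_nonneg _))
    have p2 : 0 ≤ c a ^ 4 * ∫ x, a.wp i x ^ 4 :=
      mul_nonneg (by positivity) (integral_nonneg fun x => by positivity)
    linarith

/-- A family of trees with scales of equal parity, pairwise disjoint tiles `P_i`, and at most
`N` tops above every point. -/
structure Forest (i : Fin 4) (𝒰 : Finset (Finset Quartile × ℝ × DyadicInterval)) (N : ℕ) :
    Prop where
  sub : ∀ τ ∈ 𝒰, ∀ P ∈ τ.1, P.I.toSet ⊆ τ.2.2.toSet ∧ τ.2.1 ∈ P.ω.toSet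
  par : ∀ τ ∈ 𝒰, ∀ τ' ∈ 𝒰, ∀ P ∈ τ.1, ∀ Q ∈ τ'.1, P.I.k % 2 = Q.I.k % 2
  disj : ∀ τ ∈ 𝒰, ∀ τ' ∈ 𝒰, ∀ P ∈ τ.1, ∀ Q ∈ τ'.1, P ≠ Q → Disj i P Q
  pd : ∀ τ ∈ 𝒰, ∀ τ' ∈ 𝒰, τ ≠ τ' → Disjoint τ.1 τ'.1
  ov : ∀ x, ∀ 𝒱 ⊆ 𝒰, (∀ τ ∈ 𝒱, x ∈ τ.2.2.toSet) → 𝒱.card ≤ N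

/-- The quartiles of a family of trees. -/
def quartiles (𝒰 : Finset (Finset Quartile × ℝ × DyadicInterval)) : Finset Quartile :=
  𝒰.biUnion fun τ => τ.1

theorem Forest.disj' {𝒰 : Finset (Finset Quartile × ℝ × DyadicInterval)} {N : ℕ}
    (h : Forest i 𝒰 N) {R : Finset Quartile} (hR : R ⊆ quartiles 𝒰) :
    ∀ P ∈ R, ∀ Q ∈ R, P ≠ Q → Disj i P Q := by
  intro P hP Q hQ
  obtain ⟨τ, hτ, h1⟩ := Finset.mem_biUnion.1 (hR hP)
  obtain ⟨τ', hτ', h2⟩ := Finset.mem_biUnion.1 (hR hQ)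
  exact h.disj τ hτ τ' hτ' P h1 Q h2

/-- Hölder's inequality over the at most `N` trees above a point reduces the fourth moment of a
forest to that of its trees. -/
theorem forest_fourth {𝒰 : Finset (Finset Quartile × ℝ × DyadicInterval)} {N : ℕ}
    (h : Forest i 𝒰 N) {R : Finset Quartile} (hR : R ⊆ quartiles 𝒰) {W : ℝ}
    (hW : ∀ x, Ssum i c R x ≤ W) :
    ∫ x, Fsum i c R x ^ 4 ≤ N ^ 3 * (6 * W) * ∑ P ∈ R, c P ^ 2 := by
  classical
  set S : Finset Quartile × ℝ × DyadicInterval → Finset Quartile := fun τ => R.filter (· ∈ τ.1)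
    with hS
  have hRS : R = 𝒰.biUnion S := by
    ext P
    simp only [hS, Finset.mem_biUnion, Finset.mem_filter]
    constructor
    · intro hP
      obtain ⟨τ, hτ, h1⟩ := Finset.mem_biUnion.1 (hR hP)
      exact ⟨τ, hτ, hP, h1⟩
    · rintro ⟨τ, _, hP, _⟩; exact hP
  have hpd : (𝒰 : Set (Finset Quartile × ℝ × DyadicInterval)).PairwiseDisjoint S := by
    intro τ hτ τ' hτ' hne
    refine Finset.disjoint_left.2 fun P h1 h2 => ?_
    exact Finset.disjoint_left.1 (h.pd τ hτ τ' hτ' hne) (Finset.mem_filter.1 h1).2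
      (Finset.mem_filter.1 h2).2
  have hSR : ∀ τ, S τ ⊆ R := fun τ => Finset.filter_subset _ _
  have hFR : ∀ x, Fsum i c R x = ∑ τ ∈ 𝒰, Fsum i c (S τ) x := by
    intro x
    conv_lhs => rw [hRS]
    exact Finset.sum_biUnion hpd
  have hpt : ∀ x, Fsum i c R x ^ 4 ≤ N ^ 3 * ∑ τ ∈ 𝒰, Fsum i c (S τ) x ^ 4 := by
    intro x
    set 𝒱 := 𝒰.filter fun τ => x ∈ τ.2.2.toSet with h𝒱
    have hz : ∀ τ ∈ 𝒰, τ ∉ 𝒱 → Fsum i c (S τ) x = 0 := by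
      intro τ hτ hτ'
      refine Finset.sum_eq_zero fun P hP => ?_
      rw [wp_eq_zero, mul_zero]
      intro hx
      exact hτ' (Finset.mem_filter.2 ⟨hτ, (h.sub τ hτ P (Finset.mem_filter.1 hP).2).1 hx⟩)
    have h1 : Fsum i c R x = ∑ τ ∈ 𝒱, Fsum i c (S τ) x := by
      rw [hFR]
      exact (Finset.sum_subset (Finset.filter_subset _ _) hz).symm
    have hcard : 𝒱.card ≤ N := h.ov x 𝒱 (Finset.filter_subset _ _) fun τ hτ =>
      (Finset.mem_filter.1 hτ).2
    have hcard' : (𝒱.card : ℝ) ≤ N := by exact_mod_cast hcard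
    have h2 : (∑ τ ∈ 𝒱, Fsum i c (S τ) x) ^ 2 ≤ N * ∑ τ ∈ 𝒱, Fsum i c (S τ) x ^ 2 :=
      sq_sum_le_card_mul_sum_sq.trans (mul_le_mul_of_nonneg_right hcard'
        (Finset.sum_nonneg fun _ _ => sq_nonneg _))
    have h3 : (∑ τ ∈ 𝒱, Fsum i c (S τ) x ^ 2) ^ 2 ≤ N * ∑ τ ∈ 𝒱, (Fsum i c (S τ) x ^ 2) ^ 2 :=
      sq_sum_le_card_mul_sum_sq.trans (mul_le_mul_of_nonneg_right hcard'
        (Finset.sum_nonneg fun _ _ => sq_nonneg _))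
    have h4 : ∑ τ ∈ 𝒱, (Fsum i c (S τ) x ^ 2) ^ 2 ≤ ∑ τ ∈ 𝒰, Fsum i c (S τ) x ^ 4 := by
      simp only [← pow_mul]
      exact Finset.sum_le_sum_of_subset_of_nonneg (Finset.filter_subset _ _)
        fun _ _ _ => Even.pow_nonneg ⟨2, rfl⟩ _
    calc Fsum i c R x ^ 4 = ((∑ τ ∈ 𝒱, Fsum i c (S τ) x) ^ 2) ^ 2 := by rw [h1]; ring
      _ ≤ (N * ∑ τ ∈ 𝒱, Fsum i c (S τ) x ^ 2) ^ 2 := by gcongr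
      _ = N ^ 2 * (∑ τ ∈ 𝒱, Fsum i c (S τ) x ^ 2) ^ 2 := by ring
      _ ≤ N ^ 2 * (N * ∑ τ ∈ 𝒰, Fsum i c (S τ) x ^ 4) := by
        gcongr
        exact h3.trans (by gcongr)
      _ = _ := by ring
  have htree : ∀ τ ∈ 𝒰, ∫ x, Fsum i c (S τ) x ^ 4 ≤ 6 * W * ∑ P ∈ S τ, c P ^ 2 := by
    intro τ hτ
    have hd := h.disj' ((hSR τ).trans hR)
    have hin : ∀ P ∈ S τ, P ∈ τ.1 := fun P hP => (Finset.mem_filter.1 hP).2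
    refine (tree_fourth (ξ := τ.2.1) (fun P hP => (h.sub τ hτ P (hin P hP)).2)
      (fun P hP Q hQ => h.par τ hτ τ hτ P (hin P hP) Q (hin Q hQ)) hd).trans ?_
    have nF := (nice_Fsum i c (S τ)).pow 1
    suffices hh : ∫ x, Fsum i c (S τ) x ^ 2 * Ssum i c (S τ) x ≤ W * ∑ P ∈ S τ, c P ^ 2 by linarith
    rw [← integral_Fsum_sq hd, ← integral_const_mul]
    refine integral_mono (nF.mul (nice_Ssum i c _)).integrable (nF.const_mul W).integrable
      fun x => ?_
    show Fsum i c (S τ) x ^ 2 * Ssum i c (S τ) x ≤ W * Fsum i c (S τ) x ^ 2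
    rw [mul_comm W]
    exact mul_le_mul_of_nonneg_left ((Ssum_mono (hSR τ) x).trans (hW x)) (sq_nonneg _)
  have nS : ∀ τ ∈ 𝒰, Nice fun x => Fsum i c (S τ) x ^ 4 := fun τ _ => (nice_Fsum i c (S τ)).pow 3
  calc ∫ x, Fsum i c R x ^ 4 ≤ ∫ x, (N : ℝ) ^ 3 * ∑ τ ∈ 𝒰, Fsum i c (S τ) x ^ 4 :=
        integral_mono ((nice_Fsum i c R).pow 3).integrable
          ((Nice.sum nS).const_mul _).integrable hpt
    _ = (N : ℝ) ^ 3 * ∑ τ ∈ 𝒰, ∫ x, Fsum i c (S τ) x ^ 4 := by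
        rw [integral_const_mul, integral_finsetSum _ fun τ hτ => (nS τ hτ).integrable]
    _ ≤ (N : ℝ) ^ 3 * ∑ τ ∈ 𝒰, 6 * W * ∑ P ∈ S τ, c P ^ 2 := by
        gcongr with τ hτ; exact htree τ hτ
    _ = N ^ 3 * (6 * W) * ∑ P ∈ R, c P ^ 2 := by
        conv_rhs => rw [hRS]
        rw [Finset.sum_biUnion hpd, ← Finset.mul_sum]; ring

/-! ### Chaining along the square function -/

/-- The part `∑_{k_P > K} c_P² |I_P|⁻¹ 1_{I_P}(x)` of the square function coming from scales
above `K`; it serves as a clock for the chaining. -/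
noncomputable def clock (i : Fin 4) (c : Quartile → ℝ) (R : Finset Quartile) (x : ℝ) (K : ℤ) : ℝ :=
  Ssum i c (R.filter fun P => K < P.I.k) x

theorem clock_anti (R : Finset Quartile) (x : ℝ) {K K' : ℤ} (h : K ≤ K') :
    clock i c R x K' ≤ clock i c R x K := by
  refine Ssum_mono (fun P hP => ?_) x
  rw [Finset.mem_filter] at hP ⊢
  exact ⟨hP.1, h.trans_lt hP.2⟩

theorem clock_nonneg (R : Finset Quartile) (x : ℝ) (K : ℤ) : 0 ≤ clock i c R x K := Ssum_nonneg _ _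

theorem clock_eq (R : Finset Quartile) {P : Quartile} {x : ℝ} (hx : x ∈ P.I.toSet) {K : ℤ}
    (hK : P.I.k - 1 ≤ K) : clock i c R x K = clock i c R P.I.lo K := by
  refine Finset.sum_congr rfl fun Q hQ => ?_
  have hk : P.I.k ≤ Q.I.k := by have := (Finset.mem_filter.1 hQ).2; omega
  have hiff : x ∈ Q.I.toSet ↔ P.I.lo ∈ Q.I.toSet :=
    ⟨fun h => subset_of_mem hx h hk (lo_mem _), fun h => subset_of_mem (lo_mem _) h hk hx⟩
  by_cases h : x ∈ Q.I.toSet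
  · rw [wp_sq, wp_sq, indicator_of_mem h, indicator_of_mem (hiff.1 h)]
  · rw [wp_sq, wp_sq, indicator_of_notMem h, indicator_of_notMem fun h' => h (hiff.2 h')]

theorem clock_add_le {R S : Finset Quartile} (hS : S ⊆ R) (x : ℝ) {K K' : ℤ}
    (hK : ∀ P ∈ S, K < P.I.k ∧ P.I.k ≤ K') (hKK : K ≤ K') :
    clock i c R x K' + Ssum i c S x ≤ clock i c R x K := by
  classical
  unfold clock Ssum
  rw [← Finset.sum_union]
  · refine Finset.sum_le_sum_of_subset_of_nonneg (fun P hP => ?_) fun _ _ _ => by positivity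
    rw [Finset.mem_union, Finset.mem_filter] at hP
    rw [Finset.mem_filter]
    rcases hP with hP | hP
    · exact ⟨hP.1, hKK.trans_lt hP.2⟩
    · exact ⟨hS hP, (hK P hP).1⟩
  · refine Finset.disjoint_left.2 fun P h1 h2 => ?_
    exact absurd (Finset.mem_filter.1 h1).2 (not_lt.2 (hK P h2).2)

/-- The quartiles whose clock interval starts in the left half of `[2^l u, 2^l (u+1))` and ends
inside `[2^l u, 2^l (u+1))`. -/
noncomputable def cell (i : Fin 4) (c : Quartile → ℝ) (R : Finset Quartile) (l u : ℤ) :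
    Finset Quartile := by
  classical
  exact R.filter fun P => 2 ^ l * (u : ℝ) ≤ clock i c R P.I.lo P.I.k ∧
    clock i c R P.I.lo P.I.k < 2 ^ l * (u : ℝ) + 2 ^ (l - 1) ∧
    clock i c R P.I.lo (P.I.k - 1) < 2 ^ l * ((u : ℝ) + 1)

theorem mem_cell {R : Finset Quartile} {l u : ℤ} {P : Quartile} :
    P ∈ cell i c R l u ↔ P ∈ R ∧ 2 ^ l * (u : ℝ) ≤ clock i c R P.I.lo P.I.k ∧
    clock i c R P.I.lo P.I.k < 2 ^ l * (u : ℝ) + 2 ^ (l - 1) ∧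
    clock i c R P.I.lo (P.I.k - 1) < 2 ^ l * ((u : ℝ) + 1) := by
  simp [cell]

theorem cell_subset {R : Finset Quartile} {l u : ℤ} : cell i c R l u ⊆ R :=
  fun _ hP => (mem_cell.1 hP).1

/-- The square function of a cell is at most the length of its clock interval. -/
theorem Ssum_cell_le (R : Finset Quartile) (l u : ℤ) (x : ℝ) :
    Ssum i c (cell i c R l u) x ≤ 2 ^ l := by
  classical
  set S := (cell i c R l u).filter fun P => x ∈ P.I.toSet with hS
  have hSe : Ssum i c (cell i c R l u) x = Ssum i c S x := by
    refine (Finset.sum_subset (Finset.filter_subset _ _) fun P hP hPS => ?_).symm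
    rw [wp_eq_zero fun hx => hPS (Finset.mem_filter.2 ⟨hP, hx⟩)]
    simp
  rw [hSe]
  rcases S.eq_empty_or_nonempty with h0 | hne
  · rw [h0]
    simp only [Ssum, Finset.sum_empty]
    positivity
  obtain ⟨P, hP, hPmin⟩ := Finset.exists_min_image S (fun P => P.I.k) hne
  obtain ⟨Q, hQ, hQmax⟩ := Finset.exists_max_image S (fun P => P.I.k) hne
  obtain ⟨hPc, hPx⟩ := Finset.mem_filter.1 hP
  obtain ⟨hQc, hQx⟩ := Finset.mem_filter.1 hQ
  have h1 := clock_add_le (i := i) (c := c) (R := R) (S := S)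
    ((Finset.filter_subset _ _).trans cell_subset) x
    (K := P.I.k - 1) (K' := Q.I.k)
    (fun T hT => ⟨by have := hPmin T hT; omega, hQmax T hT⟩) (by have := hPmin Q hQ; omega)
  have h2 := (mem_cell.1 hPc).2.2.2
  have h3 := (mem_cell.1 hQc).2.1
  rw [clock_eq R hPx le_rfl, clock_eq R hQx (by omega)] at h1
  linarith

theorem cell_disjoint (R : Finset Quartile) (l : ℤ) {u u' : ℤ} (h : u ≠ u') :
    Disjoint (cell i c R l u) (cell i c R l u') := by
  have key : ∀ {u u' : ℤ}, u < u' → Disjoint (cell i c R l u) (cell i c R l u') := by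
    intro u u' huu
    refine Finset.disjoint_left.2 fun P h1 h2 => ?_
    have h3 := (mem_cell.1 h1).2.2.1
    have h4 := (mem_cell.1 h2).2.1
    have h5 : (2 : ℝ) ^ l * (u + 1) ≤ 2 ^ l * u' := by
      gcongr
      exact_mod_cast huu
    have h6 : (2 : ℝ) ^ (l - 1) ≤ 2 ^ l := zpow_le_zpow_right₀ (by norm_num) (by omega)
    linarith
  rcases lt_or_gt_of_ne h with h | h
  · exact key h
  · exact (key h).symm

/-- The increment of the chaining between the dyadic clock times of generations `l` and `l - 1`
preceding a clock time in `[2^(l-1) v, 2^(l-1) (v+1))`. -/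
noncomputable def incr (i : Fin 4) (c : Quartile → ℝ) (R : Finset Quartile) (x : ℝ) (l v : ℤ) : ℝ :=
  if v % 2 = 1 then Fsum i c (cell i c R l (v / 2)) x else 0

/-- The sum of all wave packets whose clock time is less than `s`. -/
noncomputable def before (i : Fin 4) (c : Quartile → ℝ) (R : Finset Quartile) (x s : ℝ) : ℝ := by
  classical
  exact Fsum i c (R.filter fun P => clock i c R x P.I.k < s) x

theorem Fsum_filter (R : Finset Quartile) (p : Quartile → Prop) [DecidablePred p] (x : ℝ) :
    Fsum i c (R.filter p) x = ∑ P ∈ R, if p P then c P * P.wp i x else 0 :=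
  Finset.sum_filter _ _

theorem before_eq (R : Finset Quartile) (x s : ℝ) [∀ P : Quartile, Decidable (clock i c R x P.I.k < s)] :
    before i c R x s = ∑ P ∈ R, if clock i c R x P.I.k < s then c P * P.wp i x else 0 := by
  unfold before
  rw [Fsum_filter]
  refine Finset.sum_congr rfl fun P _ => ?_
  split_ifs <;> rfl

theorem clock_step {R : Finset Quartile} {P : Quartile} (hP : P ∈ R) (x : ℝ) {K : ℤ}
    (hK : K < P.I.k) : clock i c R x P.I.k + c P ^ 2 * P.wp i x ^ 2 ≤ clock i c R x K := by
  have := clock_add_le (i := i) (c := c) (R := R) (S := {P}) (by simpa using hP) x (K := K)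
    (K' := P.I.k) (by simpa using hK) hK.le
  simpa [Ssum] using this

theorem lt_of_clock_lt {R : Finset Quartile} {x : ℝ} {K K' : ℤ}
    (h : clock i c R x K' < clock i c R x K) : K < K' := by
  by_contra hcon
  exact absurd (clock_anti R x (not_lt.1 hcon)) (not_le.2 h)

theorem chain_step (R : Finset Quartile) (x : ℝ) (K l : ℤ) :
    before i c R x (2 ^ (l - 1) * (⌊clock i c R x K / 2 ^ (l - 1)⌋ : ℝ))
      = before i c R x (2 ^ l * (⌊clock i c R x K / 2 ^ l⌋ : ℝ))
        + incr i c R x l ⌊clock i c R x K / 2 ^ (l - 1)⌋ := by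
  classical
  set s := clock i c R x K with hs
  set v := ⌊s / 2 ^ (l - 1)⌋ with hv
  have hu : ⌊s / 2 ^ l⌋ = v / 2 := by
    rw [hv]
    exact_mod_cast floor_coarsen s (l - 1) l 1 (by push_cast; ring)
  have hl : (2 : ℝ) ^ l = 2 * 2 ^ (l - 1) := by
    rw [← zpow_one_add₀ (by norm_num)]; congr 1; ring
  have hpos : (0 : ℝ) < 2 ^ (l - 1) := by positivity
  have hvle : 2 ^ (l - 1) * (v : ℝ) ≤ s := by
    have := Int.floor_le (s / 2 ^ (l - 1))
    rw [← hv, le_div_iff₀ hpos] at this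
    linarith
  have hvlt : s < 2 ^ (l - 1) * ((v : ℝ) + 1) := by
    have := Int.lt_floor_add_one (s / 2 ^ (l - 1))
    rw [← hv, div_lt_iff₀ hpos] at this
    linarith
  rw [hu]
  have hdiv := Int.mul_ediv_add_emod v 2
  rcases Int.emod_two_eq_zero_or_one v with h0 | h1
  · have : (v : ℝ) = 2 * ((v / 2 : ℤ) : ℝ) := by
      exact_mod_cast (show v = 2 * (v / 2) by omega)
    rw [incr, if_neg (by omega), add_zero]
    congr 1
    rw [hl]
    nth_rewrite 1 [this]
    ring
  · have hvu : (v : ℝ) = 2 * ((v / 2 : ℤ) : ℝ) + 1 := by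
      exact_mod_cast (show v = 2 * (v / 2) + 1 by omega)
    set u := v / 2 with hu'
    have e1 : (2 : ℝ) ^ (l - 1) * v = 2 ^ l * u + 2 ^ (l - 1) := by rw [hvu, hl]; ring
    have e2 : (2 : ℝ) ^ (l - 1) * (v + 1) = 2 ^ l * (u + 1) := by rw [hvu, hl]; ring
    rw [incr, if_pos h1, before_eq, before_eq]
    have hF : Fsum i c (cell i c R l u) x = ∑ P ∈ R, if P ∈ cell i c R l u then
        c P * P.wp i x else 0 := by
      rw [← Finset.sum_filter]
      refine Finset.sum_congr ?_ fun _ _ => rfl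
      ext P
      simp only [Finset.mem_filter]
      exact ⟨fun h => ⟨cell_subset h, h⟩, fun h => h.2⟩
    rw [hF, ← Finset.sum_add_distrib]
    refine Finset.sum_congr rfl fun P hP => ?_
    by_cases hx : x ∈ P.I.toSet
    swap
    · rw [wp_eq_zero hx]; simp
    have hc1 := clock_eq (i := i) (c := c) R hx (K := P.I.k) (by omega)
    have hc2 := clock_eq (i := i) (c := c) R hx (K := P.I.k - 1) le_rfl
    have hmem := mem_cell (i := i) (c := c) (R := R) (l := l) (u := u) (P := P)
    rw [← hc1, ← hc2] at hmem
    rw [e1]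
    by_cases ha : clock i c R x P.I.k < 2 ^ l * (u : ℝ)
    · rw [if_pos (by linarith), if_pos ha, if_neg (fun h => absurd (hmem.1 h).2.1 (not_le.2 ha)),
        add_zero]
    · by_cases hb : clock i c R x P.I.k < 2 ^ l * (u : ℝ) + 2 ^ (l - 1)
      · rw [if_pos hb, if_neg ha, if_pos, zero_add]
        refine hmem.2 ⟨hP, not_lt.1 ha, hb, ?_⟩
        have hk : K < P.I.k := lt_of_clock_lt (lt_of_lt_of_le hb (e1 ▸ hvle))
        have := clock_anti (i := i) (c := c) R x (show K ≤ P.I.k - 1 by omega)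
        linarith
      · rw [if_neg hb, if_neg ha, if_neg (fun h => hb (hmem.1 h).2.2.1), add_zero]

/-- If every nonzero term advances the clock by at least `2^lb`, rounding the clock down to a
multiple of `2^lb` does not change the partial sum. -/
theorem chain_start {R : Finset Quartile} (x : ℝ) (K lb : ℤ)
    (hlb : ∀ P ∈ R, c P ≠ 0 → (2 : ℝ) ^ lb ≤ c P ^ 2 * P.I.len⁻¹) :
    Fsum i c (R.filter fun P => K < P.I.k) x
      = before i c R x (2 ^ lb * (⌊clock i c R x K / 2 ^ lb⌋ : ℝ)) := by
  classical
  rw [Fsum_filter, before_eq]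
  refine Finset.sum_congr rfl fun P hP => ?_
  by_cases hc : c P = 0
  · simp [hc]
  by_cases hx : x ∈ P.I.toSet
  swap
  · rw [wp_eq_zero hx]; simp
  have hpos : (0 : ℝ) < 2 ^ lb := by positivity
  have hle : 2 ^ lb * (⌊clock i c R x K / 2 ^ lb⌋ : ℝ) ≤ clock i c R x K := by
    have := Int.floor_le (clock i c R x K / 2 ^ lb)
    rw [le_div_iff₀ hpos] at this
    linarith
  have hlt : clock i c R x K < 2 ^ lb * (⌊clock i c R x K / 2 ^ lb⌋ + 1 : ℝ) := by
    have := Int.lt_floor_add_one (clock i c R x K / 2 ^ lb)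
    rw [div_lt_iff₀ hpos] at this
    linarith
  by_cases hk : K < P.I.k
  · rw [if_pos hk, if_pos]
    have h1 := clock_step (i := i) (c := c) hP x hk
    rw [wp_sq, indicator_of_mem hx] at h1
    have := hlb P hP hc
    linarith
  · rw [if_neg hk, if_neg]
    have := clock_anti (i := i) (c := c) R x (not_lt.1 hk)
    linarith

/-- Partial sums over scales above `K` are sums of chaining increments. -/
theorem chain {R : Finset Quartile} (x : ℝ) (K lb : ℤ) (m : ℕ)
    (hlb : ∀ P ∈ R, c P ≠ 0 → (2 : ℝ) ^ lb ≤ c P ^ 2 * P.I.len⁻¹)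
    (htop : Ssum i c R x < 2 ^ (lb + m)) :
    Fsum i c (R.filter fun P => K < P.I.k) x = ∑ j ∈ Finset.range m,
      incr i c R x (lb + 1 + j) ⌊clock i c R x K / 2 ^ (lb + j)⌋ := by
  have key : ∀ m : ℕ, before i c R x (2 ^ lb * (⌊clock i c R x K / 2 ^ lb⌋ : ℝ))
      = before i c R x (2 ^ (lb + m) * (⌊clock i c R x K / 2 ^ (lb + m)⌋ : ℝ))
        + ∑ j ∈ Finset.range m, incr i c R x (lb + 1 + j) ⌊clock i c R x K / 2 ^ (lb + j)⌋ := by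
    intro m
    induction m with
    | zero => simp
    | succ m ih =>
      have h := chain_step (i := i) (c := c) R x K (lb + 1 + m)
      rw [show lb + 1 + (m : ℤ) - 1 = lb + m by ring] at h
      rw [ih, h, Finset.sum_range_succ, show lb + ((m + 1 : ℕ) : ℤ) = lb + 1 + m by push_cast; ring]
      ring
  rw [chain_start x K lb hlb, key m]
  have h0 : ⌊clock i c R x K / 2 ^ (lb + m)⌋ = 0 := by
    rw [Int.floor_eq_zero_iff]
    refine ⟨div_nonneg (clock_nonneg _ _ _) (by positivity), ?_⟩
    rw [div_lt_one (by positivity)]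
    exact (Ssum_mono (Finset.filter_subset _ _) x).trans_lt htop
  rw [h0]
  have : before i c R x (2 ^ (lb + m) * ((0 : ℤ) : ℝ)) = 0 := by
    classical
    rw [before_eq]
    refine Finset.sum_eq_zero fun P _ => if_neg ?_
    have := clock_nonneg (i := i) (c := c) R x P.I.k
    simpa using this
  rw [this, zero_add]

/-! ### The linearized variation sum -/

/-- Summation by blocks of scales. -/
theorem block_sum (R : Finset Quartile) (kk : ℤ → ℤ) (hkk : StrictMono kk) (a : ℤ → ℝ) (x : ℝ) :
    ∃ M : Finset ℤ, ∑ P ∈ R, c P * (linCoeff kk a P.I.k * P.wp i x)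
      = ∑ m ∈ M, a m * (Fsum i c (R.filter fun P => kk (m - 1) - 1 < P.I.k) x
        - Fsum i c (R.filter fun P => kk m - 1 < P.I.k) x) := by
  classical
  let g : Quartile → ℤ := fun P =>
    if h : ∃ m : ℤ, kk (m - 1) ≤ P.I.k ∧ P.I.k < kk m then h.choose else 0
  refine ⟨R.image g, ?_⟩
  have hrhs : ∀ m, a m * (Fsum i c (R.filter fun P => kk (m - 1) - 1 < P.I.k) x
        - Fsum i c (R.filter fun P => kk m - 1 < P.I.k) x)
      = ∑ P ∈ R, (if kk (m - 1) ≤ P.I.k ∧ P.I.k < kk m then a m * (c P * P.wp i x) else 0) := by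
    intro m
    rw [Fsum_filter, Fsum_filter, ← Finset.sum_sub_distrib, Finset.mul_sum]
    refine Finset.sum_congr rfl fun P _ => ?_
    have hm : kk (m - 1) < kk m := hkk (by omega)
    by_cases h1 : kk (m - 1) ≤ P.I.k
    · by_cases h2 : P.I.k < kk m
      · rw [if_pos (by omega), if_neg (by omega), if_pos ⟨h1, h2⟩, sub_zero]
      · rw [if_pos (by omega), if_pos (by omega), if_neg (fun h => h2 h.2), sub_self, mul_zero]
    · rw [if_neg (by omega), if_neg (by omega), if_neg (fun h => h1 h.1), sub_self, mul_zero]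
  simp only [hrhs]
  rw [Finset.sum_comm]
  refine Finset.sum_congr rfl fun P hP => ?_
  by_cases h : ∃ m : ℤ, kk (m - 1) ≤ P.I.k ∧ P.I.k < kk m
  · have hg : g P = h.choose := dif_pos h
    have hlc : linCoeff kk a P.I.k = a h.choose := by
      unfold linCoeff; rw [dif_pos h]
    have hsp := h.choose_spec
    rw [Finset.sum_eq_single h.choose, if_pos hsp, hlc]
    · ring
    · intro m _ hne
      refine if_neg fun hm => hne ?_
      rcases lt_trichotomy m h.choose with hlt | heq | hlt
      · have := hkk.monotone (show m ≤ h.choose - 1 by omega)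
        omega
      · exact heq
      · have := hkk.monotone (show h.choose ≤ m - 1 by omega)
        omega
    · intro hn
      exact absurd (Finset.mem_image.2 ⟨P, hP, hg⟩) hn
  · have hlc : linCoeff kk a P.I.k = 0 := by
      unfold linCoeff; rw [dif_neg h]
    rw [hlc, Finset.sum_eq_zero fun m _ => if_neg fun hm => h ⟨m, hm⟩]
    ring

/-- A variation-type sum along a monotone sequence meets each value at most twice. -/
theorem level_sum (M : Finset ℤ) (v : ℤ → ℤ) (hv : Antitone v) (b : ℤ → ℝ) (V : Finset ℤ)
    (hV : ∀ w, b w ≠ 0 → w ∈ V) (a ρ : ℤ → ℝ) (Φ : ℝ → ℝ) (μ : ℝ) (hμ : 0 ≤ μ) (hΦ : ∀ y, 0 ≤ Φ y)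
    (hρ : ∀ m, 0 ≤ ρ m) (hρ1 : ∑ m ∈ M, ρ m ≤ 1)
    (H : ∀ m y, |a m| * |y| ≤ μ * ρ m + Φ y) :
    ∑ m ∈ M, |a m| * |b (v (m - 1)) - b (v m)| ≤ 2 * μ + 2 * ∑ w ∈ V, Φ (b w) := by
  classical
  set M' := M.filter fun m => v (m - 1) ≠ v m with hM'
  have hM'M : M' ⊆ M := Finset.filter_subset _ _
  have hinj : ∀ m ∈ M', ∀ m' ∈ M', m < m' → v m' < v m ∧ v (m' - 1) < v (m - 1) := by
    intro m hm m' hm' hlt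
    have h1 : v m < v (m - 1) :=
      lt_of_le_of_ne (hv (by omega)) (Ne.symm (Finset.mem_filter.1 hm).2)
    have h2 : v m' < v (m' - 1) :=
      lt_of_le_of_ne (hv (by omega)) (Ne.symm (Finset.mem_filter.1 hm').2)
    have h3 : v (m' - 1) ≤ v m := hv (by omega)
    exact ⟨by omega, by omega⟩
  -- the bound for one of the two evaluations along an injective map
  have half : ∀ g : ℤ → ℤ, Set.InjOn g M' →
      ∑ m ∈ M', |a m| * |b (g m)| ≤ μ + ∑ w ∈ V, Φ (b w) := by
    intro g hg
    set M'' := M'.filter fun m => b (g m) ≠ 0 with hM''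
    have hsub : M'' ⊆ M' := Finset.filter_subset _ _
    have e : ∑ m ∈ M', |a m| * |b (g m)| = ∑ m ∈ M'', |a m| * |b (g m)| := by
      refine (Finset.sum_subset hsub fun m hm hn => ?_).symm
      have : b (g m) = 0 := by
        by_contra hne
        exact hn (Finset.mem_filter.2 ⟨hm, hne⟩)
      simp [this]
    rw [e]
    calc ∑ m ∈ M'', |a m| * |b (g m)| ≤ ∑ m ∈ M'', (μ * ρ m + Φ (b (g m))) :=
          Finset.sum_le_sum fun m _ => H m _
      _ = μ * ∑ m ∈ M'', ρ m + ∑ m ∈ M'', Φ (b (g m)) := by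
          rw [Finset.sum_add_distrib, Finset.mul_sum]
      _ ≤ μ * 1 + ∑ w ∈ V, Φ (b w) := by
          refine add_le_add (mul_le_mul_of_nonneg_left ?_ hμ) ?_
          · exact (Finset.sum_le_sum_of_subset_of_nonneg (hsub.trans hM'M)
              fun m _ _ => hρ m).trans hρ1
          · rw [← Finset.sum_image (s := M'') (g := g) (f := fun w => Φ (b w))
              fun m hm m' hm' h => hg (hsub hm) (hsub hm') h]
            refine Finset.sum_le_sum_of_subset_of_nonneg (fun w hw => ?_) fun _ _ _ => hΦ _
            obtain ⟨m, hm, rfl⟩ := Finset.mem_image.1 hw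
            exact hV _ (Finset.mem_filter.1 hm).2
      _ = _ := by ring
  have h1 := half v (fun m hm m' hm' h => by
    rcases lt_trichotomy m m' with hlt | heq | hlt
    · have := (hinj m hm m' hm' hlt).1; omega
    · exact heq
    · have := (hinj m' hm' m hm hlt).1; omega)
  have h2 := half (fun m => v (m - 1)) (fun m hm m' hm' h => by
    simp only at h
    rcases lt_trichotomy m m' with hlt | heq | hlt
    · have := (hinj m hm m' hm' hlt).2; omega
    · exact heq
    · have := (hinj m' hm' m hm hlt).2; omega)
  have e : ∑ m ∈ M, |a m| * |b (v (m - 1)) - b (v m)|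
      = ∑ m ∈ M', |a m| * |b (v (m - 1)) - b (v m)| := by
    refine (Finset.sum_subset hM'M fun m hm hn => ?_).symm
    have : v (m - 1) = v m := by
      by_contra hne
      exact hn (Finset.mem_filter.2 ⟨hm, hne⟩)
    simp [this]
  rw [e]
  calc ∑ m ∈ M', |a m| * |b (v (m - 1)) - b (v m)|
      ≤ ∑ m ∈ M', (|a m| * |b (v (m - 1))| + |a m| * |b (v m)|) := by
        refine Finset.sum_le_sum fun m _ => ?_
        rw [← mul_add]
        exact mul_le_mul_of_nonneg_left (abs_sub _ _) (abs_nonneg _)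
    _ ≤ _ := by rw [Finset.sum_add_distrib]; linarith

/-- The indices of the nonempty cells of generation `l`. -/
noncomputable def cellIdx (i : Fin 4) (c : Quartile → ℝ) (R : Finset Quartile) (l : ℤ) : Finset ℤ :=
  R.image fun P => ⌊clock i c R P.I.lo P.I.k / 2 ^ l⌋

theorem mem_cellIdx {R : Finset Quartile} {l u : ℤ} {P : Quartile} (h : P ∈ cell i c R l u) :
    u ∈ cellIdx i c R l := by
  obtain ⟨hP, h1, h2, _⟩ := mem_cell.1 h
  refine Finset.mem_image.2 ⟨P, hP, ?_⟩
  have hpos : (0 : ℝ) < 2 ^ l := by positivity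
  have h3 : (2 : ℝ) ^ (l - 1) ≤ 2 ^ l := zpow_le_zpow_right₀ (by norm_num) (by omega)
  rw [Int.floor_eq_iff, le_div_iff₀ hpos, div_lt_iff₀ hpos]
  constructor <;> linarith

/-- The linearized variation sum at a point is a sum over the generations `l` of the chaining;
each generation is controlled by the wave packet sums of its cells, and vanishes when
the square function is small. -/
theorem pointwise (R : Finset Quartile) (kk : ℤ → ℤ) (hkk : StrictMono kk) (a : ℤ → ℝ) (p : ℝ)
    (ha : ∀ s : Finset ℤ, ∑ j ∈ s, |a j| ^ p ≤ 1) (x : ℝ) (lb : ℤ) (m : ℕ)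
    (hlb : ∀ P ∈ R, c P ≠ 0 → (2 : ℝ) ^ lb ≤ c P ^ 2 * P.I.len⁻¹)
    (htop : Ssum i c R x < 2 ^ (lb + m)) :
    ∃ Lev : ℤ → ℝ,
      |∑ P ∈ R, c P * (linCoeff kk a P.I.k * P.wp i x)| ≤ ∑ j ∈ Finset.range m, Lev (lb + 1 + j) ∧
      (∀ l, Ssum i c R x < 2 ^ (l - 1) → Lev l = 0) ∧
      ∀ (l : ℤ) (μ : ℝ) (Φ : ℝ → ℝ), 0 ≤ μ → (∀ y, 0 ≤ Φ y) →
        (∀ m y, |a m| * |y| ≤ μ * |a m| ^ p + Φ y) →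
        Lev l ≤ 2 * μ + 2 * ∑ u ∈ cellIdx i c R l, Φ (Fsum i c (cell i c R l u) x) := by
  classical
  obtain ⟨M, hM⟩ := block_sum (i := i) (c := c) R kk hkk a x
  let v : ℤ → ℤ → ℤ := fun l m => ⌊clock i c R x (kk m - 1) / 2 ^ (l - 1)⌋
  refine ⟨fun l => ∑ m ∈ M, |a m| * |incr i c R x l (v l (m - 1)) - incr i c R x l (v l m)|,
    ?_, ?_, ?_⟩
  · rw [hM, Finset.sum_comm]
    refine (Finset.abs_sum_le_sum_abs _ _).trans (Finset.sum_le_sum fun m' _ => ?_)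
    rw [abs_mul, ← Finset.mul_sum]
    refine mul_le_mul_of_nonneg_left ?_ (abs_nonneg _)
    rw [chain x _ lb m hlb htop, chain x _ lb m hlb htop, ← Finset.sum_sub_distrib]
    refine (Finset.abs_sum_le_sum_abs _ _).trans (le_of_eq (Finset.sum_congr rfl fun j _ => ?_))
    simp only [v]
    rw [show lb + 1 + (j : ℤ) - 1 = lb + j by ring]
  · intro l hl
    have hz : ∀ m, v l m = 0 := by
      intro m
      simp only [v]
      rw [Int.floor_eq_zero_iff]
      refine ⟨div_nonneg (clock_nonneg _ _ _) (by positivity), ?_⟩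
      rw [div_lt_one (by positivity)]
      exact (Ssum_mono (Finset.filter_subset _ _) x).trans_lt hl
    refine Finset.sum_eq_zero fun m _ => ?_
    simp [hz]
  · intro l μ Φ hμ hΦ H
    have hv : Antitone (v l) := by
      intro m m' h
      refine Int.floor_mono (div_le_div_of_nonneg_right ?_ (by positivity))
      exact clock_anti R x (by have := hkk.monotone h; omega)
    have := level_sum M (v l) hv (incr i c R x l) ((cellIdx i c R l).image fun u => 2 * u + 1)
      (fun w hw => ?_) a (fun m => |a m| ^ p) Φ μ hμ hΦ
      (fun m => Real.rpow_nonneg (abs_nonneg _) _) (ha M) H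
    · refine this.trans (le_of_eq ?_)
      rw [Finset.sum_image fun u _ u' _ h => by omega]
      congr 2
      refine Finset.sum_congr rfl fun u _ => ?_
      rw [incr, if_pos (by omega), show (2 * u + 1) / 2 = u by omega]
    · unfold incr at hw
      split_ifs at hw with h1
      · have hne : (cell i c R l (w / 2)).Nonempty := by
          by_contra hcon
          rw [Finset.not_nonempty_iff_eq_empty] at hcon
          simp [hcon, Fsum] at hw
        obtain ⟨P, hP⟩ := hne
        exact Finset.mem_image.2 ⟨w / 2, mem_cellIdx hP, by omega⟩
      · exact absurd rfl hw

/-! ### Scalar inequalities -/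

theorem scalar_two {p a : ℝ} (hp : p ≤ 2) (ha0 : 0 ≤ a) (ha1 : a ≤ 1) {μ : ℝ}
    (hμ : 0 < μ) (y : ℝ) : a * |y| ≤ μ * a ^ p + μ⁻¹ * y ^ 2 := by
  have h1 : a ^ 2 ≤ a ^ p := by
    rw [← Real.rpow_natCast]
    exact Real.rpow_le_rpow_of_exponent_ge_of_imp ha0 ha1 (by exact_mod_cast hp)
      fun _ h => absurd h (by norm_num)
  have h2 : μ * a ^ 2 ≤ μ * a ^ p := mul_le_mul_of_nonneg_left h1 hμ.le
  have h3 : 2 * (a * |y|) ≤ μ * a ^ 2 + μ⁻¹ * y ^ 2 := by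
    have : μ * a ^ 2 + μ⁻¹ * y ^ 2 - 2 * (a * |y|) = μ⁻¹ * (μ * a - |y|) ^ 2 := by
      rw [← sq_abs y]; field_simp; ring
    have : 0 ≤ μ⁻¹ * (μ * a - |y|) ^ 2 := by positivity
    linarith
  have : 0 ≤ a * |y| := by positivity
  linarith

/-- The exponent `min r 4`. -/
noncomputable def qexp (r : ℝ) : ℝ := min r 4

/-- The geometric rate of decay of the fine generations. -/
noncomputable def rate (r : ℝ) : ℝ := 2 ^ (-((qexp r - 2) / 12))

theorem qexp_gt {r : ℝ} (hr : 2 < r) : 2 < qexp r := lt_min hr (by norm_num)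

theorem qexp_le {r : ℝ} : qexp r ≤ 4 := min_le_right _ _

theorem rate_pos (r : ℝ) : 0 < rate r := Real.rpow_pos_of_pos (by norm_num) _

theorem rate_lt_one {r : ℝ} (hr : 2 < r) : rate r < 1 :=
  Real.rpow_lt_one_of_one_lt_of_neg (by norm_num) (by have := qexp_gt hr; linarith)

/-- Interpolation of `y^q` between `y²` and `y⁴` at height `2^(-e/2)`. -/
theorem rpow_interp {r : ℝ} (hr : 2 < r) (e : ℕ) {y : ℝ} (hy : 0 < y) :
    y ^ qexp r ≤ rate r ^ (6 * e) * (y ^ 2 + 2 ^ e * y ^ 4) := by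
  have hq := qexp_gt hr
  have hq4 := qexp_le (r := r)
  set q := qexp r with hqdef
  set κ : ℝ := 2 ^ (-(e : ℝ) / 2) with hκ
  have hκ0 : 0 < κ := Real.rpow_pos_of_pos (by norm_num) _
  have hκ2 : κ ^ 2 * 2 ^ e = 1 := by
    rw [hκ, ← Real.rpow_natCast, ← Real.rpow_mul (by norm_num), ← Real.rpow_natCast,
      ← Real.rpow_add (by norm_num)]
    norm_num
  have hκq : κ ^ (q - 2) = rate r ^ (6 * e) := by
    rw [hκ, rate, ← Real.rpow_natCast, ← Real.rpow_mul (by norm_num), ← Real.rpow_mul (by norm_num)]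
    congr 1
    push_cast
    ring
  have hz : (y / κ) ^ (q - 2) ≤ 1 + (y / κ) ^ 2 := by
    have hz0 : 0 < y / κ := by positivity
    rcases le_total (y / κ) 1 with h | h
    · have := Real.rpow_le_one hz0.le h (show 0 ≤ q - 2 by linarith)
      nlinarith [sq_nonneg (y / κ)]
    · have : (y / κ) ^ (q - 2) ≤ (y / κ) ^ (2 : ℝ) :=
        Real.rpow_le_rpow_of_exponent_le h (by linarith)
      rw [Real.rpow_two] at this
      linarith
  have hyq : y ^ q = y ^ 2 * (κ ^ (q - 2) * (y / κ) ^ (q - 2)) := by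
    rw [← Real.mul_rpow hκ0.le (by positivity), mul_div_cancel₀ _ hκ0.ne', ← Real.rpow_two,
      ← Real.rpow_add hy]
    congr 1; ring
  rw [hyq, ← hκq]
  have hk : (y / κ) ^ 2 = 2 ^ e * y ^ 2 := by
    rw [div_pow, div_eq_iff (by positivity)]
    linear_combination (-(y ^ 2)) * hκ2
  have hκ' : 0 ≤ κ ^ (q - 2) := Real.rpow_nonneg hκ0.le _
  calc y ^ 2 * (κ ^ (q - 2) * (y / κ) ^ (q - 2))
      ≤ y ^ 2 * (κ ^ (q - 2) * (1 + (y / κ) ^ 2)) := by gcongr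
    _ = κ ^ (q - 2) * (y ^ 2 + 2 ^ e * y ^ 4) := by rw [hk]; ring

/-- Young's inequality with the exponent `q = min r 4`, followed by interpolation
of `y^q` between `y²` and `y⁴`; both terms gain the factor `rate r ^ e`. -/
theorem scalar_fine {r : ℝ} (hr : 2 < r) {a : ℝ} (ha0 : 0 ≤ a) (ha1 : a ≤ 1) (e : ℕ) {A : ℝ}
    (hA : 1 ≤ A) (y : ℝ) :
    a * |y| ≤ (A * rate r ^ e) * a ^ (r / (r - 1))
      + A⁻¹ * rate r ^ e * (y ^ 2 + 2 ^ e * y ^ 4) := by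
  have hq := qexp_gt hr
  have hq4 := qexp_le (r := r)
  have hqr : qexp r ≤ r := min_le_left _ _
  set q := qexp r with hqdef
  have hϱ := rate_pos r
  have hϱ1 := rate_lt_one hr
  set ϱ := rate r with hϱd
  have hA0 : 0 < A := by linarith
  have hμ : 0 < A * ϱ ^ e := by positivity
  set μ := A * ϱ ^ e with hμd
  have hrhs : 0 ≤ A⁻¹ * ϱ ^ e * (y ^ 2 + 2 ^ e * y ^ 4) := by positivity
  have hr1 : (0 : ℝ) ≤ μ * a ^ (r / (r - 1)) := mul_nonneg hμ.le (Real.rpow_nonneg ha0 _)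
  rcases ha0.eq_or_lt with h0 | hapos
  · rw [← h0] at hr1 ⊢
    simp only [zero_mul]
    linarith
  rcases le_or_gt |y| (μ * a ^ (1 / (q - 1))) with hcase | hcase
  · have h1 : a * |y| ≤ a * (μ * a ^ (1 / (q - 1))) := by gcongr
    have h2 : a * (μ * a ^ (1 / (q - 1))) = μ * a ^ (1 + 1 / (q - 1)) := by
      rw [Real.rpow_add hapos, Real.rpow_one]; ring
    have h3 : a ^ (1 + 1 / (q - 1)) ≤ a ^ (r / (r - 1)) := by
      refine Real.rpow_le_rpow_of_exponent_ge hapos ha1 ?_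
      have : r / (r - 1) = 1 + 1 / (r - 1) := by
        have : r - 1 ≠ 0 := by linarith
        field_simp; ring
      rw [this]
      have : 1 / (r - 1) ≤ 1 / (q - 1) := one_div_le_one_div_of_le (by linarith) (by linarith)
      linarith
    have h4 : μ * a ^ (1 + 1 / (q - 1)) ≤ μ * a ^ (r / (r - 1)) := by gcongr
    linarith
  · have hy : 0 < |y| := lt_of_le_of_lt (by positivity) hcase
    have h1 : a ^ (1 / (q - 1)) ≤ |y| / μ := by
      rw [le_div_iff₀ hμ]; linarith
    have h2 : a ≤ (|y| / μ) ^ (q - 1) := by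
      have := Real.rpow_le_rpow (by positivity) h1 (show 0 ≤ q - 1 by linarith)
      rwa [← Real.rpow_mul ha0, one_div, inv_mul_cancel₀ (by linarith), Real.rpow_one] at this
    have h3 : (|y| / μ) ^ (q - 1) * |y| = |y| ^ q * (μ ^ (q - 1))⁻¹ := by
      rw [Real.div_rpow hy.le hμ.le]
      have : |y| ^ q = |y| ^ (q - 1) * |y| := by
        nth_rewrite 3 [← Real.rpow_one |y|]
        rw [← Real.rpow_add hy]; congr 1; ring
      rw [this]; ring
    have h4 : A * ϱ ^ (3 * e) ≤ μ ^ (q - 1) := by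
      rw [hμd, Real.mul_rpow hA0.le (by positivity)]
      refine mul_le_mul ?_ ?_ (by positivity) (by positivity)
      · nth_rewrite 1 [← Real.rpow_one A]
        exact Real.rpow_le_rpow_of_exponent_le hA (by linarith)
      · rw [mul_comm 3 e, pow_mul, ← Real.rpow_natCast (ϱ ^ e) 3]
        refine Real.rpow_le_rpow_of_exponent_ge (by positivity) (pow_le_one₀ hϱ.le hϱ1.le) ?_
        push_cast; linarith
    have h5 := rpow_interp hr e hy
    rw [← hqdef, ← hϱd] at h5
    have h6 : |y| ^ 2 = y ^ 2 := sq_abs y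
    have h7 : |y| ^ 4 = y ^ 4 := Even.pow_abs ⟨2, rfl⟩ y
    rw [h6, h7] at h5
    have h8 : ϱ ^ (3 * e) ≤ ϱ ^ e := pow_le_pow_of_le_one hϱ.le hϱ1.le (by omega)
    have hY : 0 ≤ y ^ 2 + 2 ^ e * y ^ 4 := by positivity
    have h9 : a * |y| ≤ A⁻¹ * ϱ ^ e * (y ^ 2 + 2 ^ e * y ^ 4) := by
      calc a * |y| ≤ (|y| / μ) ^ (q - 1) * |y| := by gcongr
        _ = |y| ^ q * (μ ^ (q - 1))⁻¹ := h3
        _ ≤ (ϱ ^ (6 * e) * (y ^ 2 + 2 ^ e * y ^ 4)) * (A * ϱ ^ (3 * e))⁻¹ := by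
            gcongr
        _ = A⁻¹ * ϱ ^ (3 * e) * (y ^ 2 + 2 ^ e * y ^ 4) := by
            have : ϱ ^ (6 * e) = ϱ ^ (3 * e) * ϱ ^ (3 * e) := by rw [← pow_add]; congr 1; ring
            rw [this]
            field_simp
        _ ≤ A⁻¹ * ϱ ^ e * (y ^ 2 + 2 ^ e * y ^ 4) := by gcongr
    linarith

/-! ### The square sum of a forest -/

/-- Dualization; no measurability of the `g P` is needed, since a nonzero inner product already
forces integrability. -/
theorem sum_inner_le (R : Finset Quartile) (f : ℝ → ℝ) (g : Quartile → ℝ → ℝ) (G : ℝ → ℝ)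
    (hG : Integrable G volume) (hG0 : ∀ x, 0 ≤ G x)
    (h : ∀ x, ∑ P ∈ R, innerF f (g P) * (f x * g P x) ≤ G x) :
    ∑ P ∈ R, innerF f (g P) ^ 2 ≤ ∫ x, G x := by
  have hinteg : ∀ P ∈ R, IntegrableOn (fun x => innerF f (g P) * (f x * g P x)) (Ici 0) volume := by
    intro P _
    by_cases h0 : innerF f (g P) = 0
    · simp [h0]
    · refine Integrable.const_mul ?_ _
      by_contra hcon
      exact h0 (integral_undef hcon)
  calc ∑ P ∈ R, innerF f (g P) ^ 2
      = ∑ P ∈ R, ∫ x in Ici (0 : ℝ), innerF f (g P) * (f x * g P x) := by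
        refine Finset.sum_congr rfl fun P _ => ?_
        rw [integral_const_mul, sq]; rfl
    _ = ∫ x in Ici (0 : ℝ), ∑ P ∈ R, innerF f (g P) * (f x * g P x) :=
        (integral_finsetSum _ hinteg).symm
    _ ≤ ∫ x in Ici (0 : ℝ), G x :=
        integral_mono (integrable_finsetSum _ hinteg) hG.integrableOn h
    _ ≤ ∫ x, G x := setIntegral_le_integral hG (Filter.Eventually.of_forall hG0)

theorem integrable_ind {E : Set ℝ} (hE : MeasurableSet E) (hfin : volume E ≠ ⊤) (a : ℝ) :
    Integrable (E.indicator fun _ => a) volume := by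
  rw [integrable_indicator_iff hE]
  exact integrableOn_const hfin

theorem integral_ind {E : Set ℝ} (hE : MeasurableSet E) (a : ℝ) :
    ∫ x, E.indicator (fun _ => a) x = a * volume.real E := by
  rw [integral_indicator hE]
  simp [mul_comm]

/-- `∑_u F_{l,u}²` over the cells of generation `l`. -/
noncomputable def sqTwo (i : Fin 4) (c : Quartile → ℝ) (R : Finset Quartile) (l : ℤ) (x : ℝ) : ℝ :=
  ∑ u ∈ cellIdx i c R l, Fsum i c (cell i c R l u) x ^ 2

/-- `∑_u F_{l,u}⁴` over the cells of generation `l`. -/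
noncomputable def sqFour (i : Fin 4) (c : Quartile → ℝ) (R : Finset Quartile) (l : ℤ) (x : ℝ) : ℝ :=
  ∑ u ∈ cellIdx i c R l, Fsum i c (cell i c R l u) x ^ 4

theorem nice_sqTwo (R : Finset Quartile) (l : ℤ) : Nice (sqTwo i c R l) :=
  Nice.sum fun _ _ => (nice_Fsum i c _).pow 1

theorem nice_sqFour (R : Finset Quartile) (l : ℤ) : Nice (sqFour i c R l) :=
  Nice.sum fun _ _ => (nice_Fsum i c _).pow 3

theorem sqTwo_nonneg (R : Finset Quartile) (l : ℤ) (x : ℝ) : 0 ≤ sqTwo i c R l x :=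
  Finset.sum_nonneg fun _ _ => sq_nonneg _

theorem sqFour_nonneg (R : Finset Quartile) (l : ℤ) (x : ℝ) : 0 ≤ sqFour i c R l x :=
  Finset.sum_nonneg fun _ _ => Even.pow_nonneg ⟨2, rfl⟩ _

theorem sum_cells_le (R : Finset Quartile) (l : ℤ) :
    ∑ u ∈ cellIdx i c R l, ∑ P ∈ cell i c R l u, c P ^ 2 ≤ ∑ P ∈ R, c P ^ 2 := by
  classical
  rw [← Finset.sum_biUnion fun u _ u' _ h => cell_disjoint R l h]
  refine Finset.sum_le_sum_of_subset_of_nonneg (fun P hP => ?_) fun _ _ _ => sq_nonneg _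
  obtain ⟨u, _, hu⟩ := Finset.mem_biUnion.1 hP
  exact cell_subset hu

theorem integral_sqTwo_le {𝒰 : Finset (Finset Quartile × ℝ × DyadicInterval)} {N : ℕ}
    (h : Forest i 𝒰 N) (l : ℤ) :
    ∫ x, sqTwo i c (quartiles 𝒰) l x ≤ ∑ P ∈ quartiles 𝒰, c P ^ 2 := by
  unfold sqTwo
  rw [integral_finsetSum _ fun u _ => ((nice_Fsum i c _).pow 1).integrable]
  refine le_trans (le_of_eq ?_) (sum_cells_le (i := i) _ l)
  exact Finset.sum_congr rfl fun u _ => integral_Fsum_sq (h.disj' cell_subset)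

theorem integral_sqFour_le {𝒰 : Finset (Finset Quartile × ℝ × DyadicInterval)} {N : ℕ}
    (h : Forest i 𝒰 N) (l : ℤ) :
    ∫ x, sqFour i c (quartiles 𝒰) l x
      ≤ N ^ 3 * (6 * 2 ^ l) * ∑ P ∈ quartiles 𝒰, c P ^ 2 := by
  unfold sqFour
  rw [integral_finsetSum _ fun u _ => ((nice_Fsum i c _).pow 3).integrable]
  calc _ ≤ ∑ u ∈ cellIdx i c (quartiles 𝒰) l,
        (N : ℝ) ^ 3 * (6 * 2 ^ l) * ∑ P ∈ cell i c (quartiles 𝒰) l u, c P ^ 2 :=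
        Finset.sum_le_sum fun u _ => forest_fourth h cell_subset fun x => Ssum_cell_le _ l u x
    _ ≤ _ := by
        rw [← Finset.mul_sum]
        exact mul_le_mul_of_nonneg_left (sum_cells_le _ l) (by positivity)

theorem geom_le {ϱ : ℝ} (h0 : 0 ≤ ϱ) (h1 : ϱ < 1) (m : ℕ) :
    ∑ e ∈ Finset.range m, ϱ ^ e ≤ 1 / (1 - ϱ) := by
  rw [le_div_iff₀ (by linarith), mul_comm, mul_neg_geom_sum]
  linarith [pow_nonneg h0 m]

/-- Splitting of the generations into fine, middle and coarse ones. -/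
theorem level_split (Lev : ℤ → ℝ) (n m₁ m₂ : ℕ) :
    ∑ j ∈ Finset.range (m₁ + (3 * n + 21) + m₂), Lev (-3 * n - m₁ + 1 + j)
      = ∑ e ∈ Finset.range m₁, Lev (-3 * n - e)
        + ∑ k ∈ Finset.range (3 * n + 21), Lev (-3 * n + 1 + k)
        + ∑ k ∈ Finset.range m₂, Lev (22 + k) := by
  rw [Finset.sum_range_add, Finset.sum_range_add]
  congr 1
  · congr 1
    · rw [← Finset.sum_range_reflect]
      refine Finset.sum_congr rfl fun j hj => ?_
      have := Finset.mem_range.1 hj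
      congr 1
      omega
    · refine Finset.sum_congr rfl fun j _ => ?_
      congr 1
      push_cast
      ring
  · refine Finset.sum_congr rfl fun j _ => ?_
    congr 1
    push_cast
    ring

/-- A finest generation below which the chaining is trivial. -/
theorem exists_bottom (R : Finset Quartile) (c : Quartile → ℝ) (n : ℕ) :
    ∃ m : ℕ, ∀ P ∈ R, c P ≠ 0 → (2 : ℝ) ^ (-3 * (n : ℤ) - m) ≤ c P ^ 2 * P.I.len⁻¹ := by
  have h1 : ∀ P : Quartile, ∃ m : ℕ, c P ≠ 0 →
      (2 : ℝ) ^ (-3 * (n : ℤ) - m) ≤ c P ^ 2 * P.I.len⁻¹ := by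
    intro P
    by_cases h0 : c P = 0
    · exact ⟨0, fun h => absurd h0 h⟩
    · have hpos : 0 < c P ^ 2 * P.I.len⁻¹ := by
        have := len_pos P.I
        positivity
      obtain ⟨m, hm⟩ := exists_pow_lt_of_lt_one hpos (show (1 / 2 : ℝ) < 1 by norm_num)
      refine ⟨m, fun _ => le_trans ?_ hm.le⟩
      calc (2 : ℝ) ^ (-3 * (n : ℤ) - m) ≤ 2 ^ (-(m : ℤ)) :=
            zpow_le_zpow_right₀ (by norm_num) (by omega)
        _ = (1 / 2) ^ m := by rw [zpow_neg, zpow_natCast, one_div, inv_pow]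
  choose m hm using h1
  refine ⟨R.sup m, fun P hP h0 => le_trans ?_ (hm P h0)⟩
  refine zpow_le_zpow_right₀ (by norm_num) ?_
  have : m P ≤ R.sup m := Finset.le_sup hP
  omega

theorem exists_top (R : Finset Quartile) (c : Quartile → ℝ) :
    ∃ m : ℕ, ∀ x, Ssum i c R x < 2 ^ (21 + (m : ℤ)) := by
  obtain ⟨B, hB⟩ := (nice_Ssum i c R).2.1
  obtain ⟨m, hm⟩ := pow_unbounded_of_one_lt B (show (1 : ℝ) < 2 by norm_num)
  refine ⟨m, fun x => lt_of_le_of_lt ((le_abs_self _).trans (hB x)) (hm.trans_le ?_)⟩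
  rw [← zpow_natCast]
  exact zpow_le_zpow_right₀ (by norm_num) (by omega)

/-- The parameter `A` balancing the fine generations. -/
noncomputable def balance (r : ℝ) : ℝ := 224 / (1 - rate r)

/-- The part of the majorant of the linearized sum that is controlled by the square sum. -/
noncomputable def majorant (r : ℝ) (i : Fin 4) (c : Quartile → ℝ) (R : Finset Quartile)
    (n m₁ m₂ : ℕ) (x : ℝ) : ℝ :=
  ∑ e ∈ Finset.range m₁, 2 * ((balance r)⁻¹ * rate r ^ e) *
      (sqTwo i c R (-3 * n - e) x + 2 ^ e * sqFour i c R (-3 * n - e) x)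
  + ∑ k ∈ Finset.range (3 * n + 21),
      2 * (32 * (3 * n + 21 : ℝ))⁻¹ * sqTwo i c R (-3 * n + 1 + k) x
  + ∑ k ∈ Finset.range m₂, (4 * (3 / 4 : ℝ) ^ (22 + k) * Ssum i c R x
      + 2 * (2 / 3 : ℝ) ^ (22 + k) * sqTwo i c R (22 + k) x)

/-- The pointwise constant of the majorant. -/
noncomputable def baseConst (r : ℝ) (n : ℕ) : ℝ :=
  2 * balance r / (1 - rate r) + 64 * (3 * n + 21 : ℝ) ^ 2

theorem balance_ge {r : ℝ} (hr : 2 < r) : 1 ≤ balance r := by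
  have h1 := rate_lt_one hr
  have h0 := rate_pos r
  rw [balance, le_div_iff₀ (by linarith)]
  linarith

theorem majorant_nonneg {r : ℝ} (hr : 2 < r) (R : Finset Quartile) (n m₁ m₂ : ℕ) (x : ℝ) :
    0 ≤ majorant r i c R n m₁ m₂ x := by
  have hb := balance_ge hr
  have h0 := rate_pos r
  refine add_nonneg (add_nonneg ?_ ?_) ?_ <;> refine Finset.sum_nonneg fun e _ => ?_
  · have h2 := sqTwo_nonneg (i := i) (c := c) R (-3 * n - e) x
    have h4 := sqFour_nonneg (i := i) (c := c) R (-3 * n - e) x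
    positivity
  · have h2 := sqTwo_nonneg (i := i) (c := c) R (-3 * n + 1 + e) x
    positivity
  · have h2 := sqTwo_nonneg (i := i) (c := c) R (22 + e) x
    have h4 := Ssum_nonneg (i := i) (c := c) R x
    positivity

theorem nice_majorant {r : ℝ} (R : Finset Quartile) (n m₁ m₂ : ℕ) :
    Nice (majorant r i c R n m₁ m₂) :=
  ((Nice.sum fun _ _ => ((nice_sqTwo R _).add ((nice_sqFour R _).const_mul _)).const_mul _).add
    (Nice.sum fun _ _ => (nice_sqTwo R _).const_mul _)).add
    (Nice.sum fun _ _ => ((nice_Ssum i c R).const_mul _).add ((nice_sqTwo R _).const_mul _))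

/-- Fine generations gain from the fourth moments, coarse ones from the rarity of large values of
the square function. -/
theorem integral_majorant_le {r : ℝ} (hr : 2 < r)
    {𝒰 : Finset (Finset Quartile × ℝ × DyadicInterval)} {N n : ℕ}
    (h : Forest i 𝒰 N) (hN : N ≤ 2 ^ n) (m₁ m₂ : ℕ) :
    ∫ x, majorant r i c (quartiles 𝒰) n m₁ m₂ x ≤ 3 / 16 * ∑ P ∈ quartiles 𝒰, c P ^ 2 := by
  have hb := balance_ge hr
  have hϱ := rate_pos r
  have hϱ1 := rate_lt_one hr
  set R := quartiles 𝒰 with hR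
  set Q := ∑ P ∈ R, c P ^ 2 with hQ
  have hQ0 : 0 ≤ Q := Finset.sum_nonneg fun _ _ => sq_nonneg _
  have nf : ∀ e ∈ Finset.range m₁, Nice fun x => 2 * ((balance r)⁻¹ * rate r ^ e) *
      (sqTwo i c R (-3 * n - e) x + 2 ^ e * sqFour i c R (-3 * n - e) x) := fun e _ =>
    ((nice_sqTwo R _).add ((nice_sqFour R _).const_mul _)).const_mul _
  have nm : ∀ k ∈ Finset.range (3 * n + 21), Nice fun x =>
      2 * (32 * (3 * n + 21 : ℝ))⁻¹ * sqTwo i c R (-3 * n + 1 + k) x := fun k _ =>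
    (nice_sqTwo R _).const_mul _
  have nc : ∀ k ∈ Finset.range m₂, Nice fun x => 4 * (3 / 4 : ℝ) ^ (22 + k) * Ssum i c R x
      + 2 * (2 / 3 : ℝ) ^ (22 + k) * sqTwo i c R (22 + k) x := fun k _ =>
    ((nice_Ssum i c R).const_mul _).add ((nice_sqTwo R _).const_mul _)
  unfold majorant
  rw [integral_add ((Nice.sum nf).add (Nice.sum nm)).integrable (Nice.sum nc).integrable,
    integral_add (Nice.sum nf).integrable (Nice.sum nm).integrable,
    integral_finsetSum _ fun e he => (nf e he).integrable,
    integral_finsetSum _ fun e he => (nm e he).integrable,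
    integral_finsetSum _ fun e he => (nc e he).integrable]
  have hf : ∑ e ∈ Finset.range m₁, ∫ x, 2 * ((balance r)⁻¹ * rate r ^ e) *
      (sqTwo i c R (-3 * n - e) x + 2 ^ e * sqFour i c R (-3 * n - e) x) ≤ 1 / 16 * Q := by
    have hterm : ∀ e ∈ Finset.range m₁, ∫ x, 2 * ((balance r)⁻¹ * rate r ^ e) *
        (sqTwo i c R (-3 * n - e) x + 2 ^ e * sqFour i c R (-3 * n - e) x)
          ≤ (14 * (balance r)⁻¹ * Q) * rate r ^ e := by
      intro e _
      rw [integral_const_mul, integral_add (nice_sqTwo R _).integrable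
        ((nice_sqFour R _).const_mul _).integrable, integral_const_mul]
      have h2 := integral_sqTwo_le (c := c) h (-3 * n - e)
      have h4 := integral_sqFour_le (c := c) h (-3 * n - e)
      rw [← hR, ← hQ] at h2 h4
      have hp : (2 : ℝ) ^ e * ((N : ℝ) ^ 3 * (6 * 2 ^ (-3 * (n : ℤ) - e))) ≤ 6 := by
        have hN' : (N : ℝ) ≤ 2 ^ n := by exact_mod_cast hN
        have hz : (2 : ℝ) ^ (-3 * (n : ℤ) - e) = ((2 ^ n) ^ 3 * 2 ^ e)⁻¹ := by
          rw [← pow_mul, ← pow_add, ← zpow_natCast, ← zpow_neg]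
          congr 1
          push_cast; ring
        rw [hz]
        calc (2 : ℝ) ^ e * ((N : ℝ) ^ 3 * (6 * ((2 ^ n) ^ 3 * 2 ^ e)⁻¹))
            ≤ (2 : ℝ) ^ e * ((2 ^ n) ^ 3 * (6 * ((2 ^ n) ^ 3 * 2 ^ e)⁻¹)) := by gcongr
          _ = 6 := by field_simp
      have h5 : 2 ^ e * ∫ x, sqFour i c R (-3 * n - e) x ≤ 6 * Q := by
        calc 2 ^ e * ∫ x, sqFour i c R (-3 * n - e) x
            ≤ 2 ^ e * ((N : ℝ) ^ 3 * (6 * 2 ^ (-3 * (n : ℤ) - e)) * Q) := by gcongr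
          _ = (2 ^ e * ((N : ℝ) ^ 3 * (6 * 2 ^ (-3 * (n : ℤ) - e)))) * Q := by ring
          _ ≤ 6 * Q := by gcongr
      calc _ ≤ 2 * ((balance r)⁻¹ * rate r ^ e) * (Q + 6 * Q) := by gcongr
        _ = _ := by ring
    refine (Finset.sum_le_sum hterm).trans ?_
    rw [← Finset.mul_sum]
    calc (14 * (balance r)⁻¹ * Q) * ∑ e ∈ Finset.range m₁, rate r ^ e
        ≤ (14 * (balance r)⁻¹ * Q) * (1 / (1 - rate r)) := by
          gcongr; exact geom_le hϱ.le hϱ1 m₁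
      _ = 1 / 16 * Q := by
          have : 1 - rate r ≠ 0 := by linarith
          rw [balance]; field_simp; ring
  have hm : ∑ k ∈ Finset.range (3 * n + 21), ∫ x,
      2 * (32 * (3 * n + 21 : ℝ))⁻¹ * sqTwo i c R (-3 * n + 1 + k) x ≤ 1 / 16 * Q := by
    have hterm : ∀ k ∈ Finset.range (3 * n + 21), ∫ x,
        2 * (32 * (3 * n + 21 : ℝ))⁻¹ * sqTwo i c R (-3 * n + 1 + k) x
        ≤ 2 * (32 * (3 * n + 21 : ℝ))⁻¹ * Q := by
      intro k _
      rw [integral_const_mul]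
      have h2 := integral_sqTwo_le (c := c) h (-3 * n + 1 + k)
      rw [← hR, ← hQ] at h2
      gcongr
    refine (Finset.sum_le_sum hterm).trans (le_of_eq ?_)
    rw [Finset.sum_const, Finset.card_range, nsmul_eq_mul]
    push_cast
    have : (3 * n + 21 : ℝ) ≠ 0 := by positivity
    field_simp
    ring
  have hcc : ∑ k ∈ Finset.range m₂, ∫ x, (4 * (3 / 4 : ℝ) ^ (22 + k) * Ssum i c R x
      + 2 * (2 / 3 : ℝ) ^ (22 + k) * sqTwo i c R (22 + k) x) ≤ 1 / 16 * Q := by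
    have hterm : ∀ k ∈ Finset.range m₂, ∫ x, (4 * (3 / 4 : ℝ) ^ (22 + k) * Ssum i c R x
        + 2 * (2 / 3 : ℝ) ^ (22 + k) * sqTwo i c R (22 + k) x)
          ≤ (6 * (3 / 4 : ℝ) ^ 22 * Q) * (3 / 4) ^ k := by
      intro k _
      rw [integral_add ((nice_Ssum i c R).const_mul _).integrable
        ((nice_sqTwo R _).const_mul _).integrable, integral_const_mul, integral_const_mul,
        integral_Ssum]
      have h2 := integral_sqTwo_le (c := c) h (22 + k)
      rw [← hR, ← hQ] at h2
      rw [← hQ]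
      have h3 : (2 / 3 : ℝ) ^ (22 + k) ≤ (3 / 4) ^ (22 + k) :=
        pow_le_pow_left₀ (by norm_num) (by norm_num) _
      have h2' : 0 ≤ ∫ x, sqTwo i c R (22 + k) x := integral_nonneg fun x => sqTwo_nonneg R _ x
      calc _ ≤ 4 * (3 / 4 : ℝ) ^ (22 + k) * Q + 2 * (3 / 4 : ℝ) ^ (22 + k) * Q := by gcongr
        _ = _ := by rw [pow_add]; ring
    refine (Finset.sum_le_sum hterm).trans ?_
    rw [← Finset.mul_sum]
    have hg := geom_le (show (0 : ℝ) ≤ 3 / 4 by norm_num) (by norm_num) m₂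
    calc (6 * (3 / 4 : ℝ) ^ 22 * Q) * ∑ k ∈ Finset.range m₂, (3 / 4 : ℝ) ^ k
        ≤ (6 * (3 / 4 : ℝ) ^ 22 * Q) * (1 / (1 - 3 / 4)) := by gcongr
      _ = (24 * (3 / 4 : ℝ) ^ 22) * Q := by ring
      _ ≤ 1 / 16 * Q := by gcongr; norm_num
  linarith

/-- The pointwise bound of the linearized variation sum by a constant and the majorant. -/
theorem linear_sum_le {r : ℝ} (hr : 2 < r) (R : Finset Quartile) (kk : ℤ → ℤ) (hkk : StrictMono kk)
    (a : ℤ → ℝ) (ha : ∀ s : Finset ℤ, ∑ j ∈ s, |a j| ^ (r / (r - 1)) ≤ 1) (x : ℝ) (n m₁ m₂ : ℕ)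
    (hlb : ∀ P ∈ R, c P ≠ 0 → (2 : ℝ) ^ (-3 * (n : ℤ) - m₁) ≤ c P ^ 2 * P.I.len⁻¹)
    (htop : Ssum i c R x < 2 ^ (21 + (m₂ : ℤ))) :
    |∑ P ∈ R, c P * (linCoeff kk a P.I.k * P.wp i x)|
      ≤ baseConst r n + majorant r i c R n m₁ m₂ x := by
  have hb := balance_ge hr
  have hϱ := rate_pos r
  have hϱ1 := rate_lt_one hr
  have hp0 : 0 < r / (r - 1) := div_pos (by linarith) (by linarith)
  have hp2 : r / (r - 1) ≤ 2 := by rw [div_le_iff₀ (by linarith)]; linarith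
  have ha1 : ∀ m, |a m| ≤ 1 := by
    intro m
    have := ha {m}
    rw [Finset.sum_singleton] at this
    by_contra hcon
    exact absurd this (not_le.2 (Real.one_lt_rpow (not_le.1 hcon) hp0))
  obtain ⟨Lev, h1, h2, h3⟩ := pointwise (i := i) (c := c) R kk hkk a _ ha x (-3 * n - m₁)
    (m₁ + (3 * n + 21) + m₂) hlb (by
      refine htop.trans_le (le_of_eq ?_)
      congr 1; push_cast; ring)
  refine h1.trans ?_
  rw [level_split]
  have htwo : ∀ l, ∀ μ : ℝ, 0 < μ → Lev l ≤ 2 * μ + 2 * μ⁻¹ * sqTwo i c R l x := by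
    intro l μ hμ
    refine (h3 l μ (fun y => μ⁻¹ * y ^ 2) hμ.le (fun y => by positivity)
      fun m y => scalar_two hp2 (abs_nonneg _) (ha1 m) hμ y).trans (le_of_eq ?_)
    rw [sqTwo, ← Finset.mul_sum]; ring
  have hf : ∀ e ∈ Finset.range m₁, Lev (-3 * n - e) ≤ 2 * balance r * rate r ^ e
      + 2 * ((balance r)⁻¹ * rate r ^ e) *
      (sqTwo i c R (-3 * n - e) x + 2 ^ e * sqFour i c R (-3 * n - e) x) := by
    intro e _
    refine (h3 (-3 * n - e) (balance r * rate r ^ e)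
      (fun y => (balance r)⁻¹ * rate r ^ e * (y ^ 2 + 2 ^ e * y ^ 4)) (by positivity)
      (fun y => by positivity)
      fun m y => scalar_fine hr (abs_nonneg _) (ha1 m) e hb y).trans (le_of_eq ?_)
    rw [sqTwo, sqFour, ← Finset.mul_sum, Finset.sum_add_distrib, ← Finset.mul_sum]; ring
  have hm : ∀ k ∈ Finset.range (3 * n + 21), Lev (-3 * n + 1 + k)
      ≤ 2 * (32 * (3 * n + 21 : ℝ))
        + 2 * (32 * (3 * n + 21 : ℝ))⁻¹ * sqTwo i c R (-3 * n + 1 + k) x :=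
    fun k _ => htwo _ _ (by positivity)
  have hc : ∀ k ∈ Finset.range m₂, Lev (22 + k) ≤ 4 * (3 / 4 : ℝ) ^ (22 + k) * Ssum i c R x
      + 2 * (2 / 3 : ℝ) ^ (22 + k) * sqTwo i c R (22 + k) x := by
    intro k _
    have hs2 := sqTwo_nonneg (i := i) (c := c) R (22 + k) x
    have hs := Ssum_nonneg (i := i) (c := c) R x
    by_cases hsmall : Ssum i c R x < 2 ^ ((22 + k : ℤ) - 1)
    · rw [h2 _ hsmall]
      positivity
    · have h4 := htwo (22 + k) ((3 / 2 : ℝ) ^ (22 + k)) (by positivity)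
      have h5 : ((3 / 2 : ℝ) ^ (22 + k))⁻¹ = (2 / 3) ^ (22 + k) := by
        rw [← inv_pow]; norm_num
      rw [h5] at h4
      have h6 : (2 : ℝ) ^ ((22 + k : ℤ) - 1) = 2 ^ (22 + k) / 2 := by
        rw [zpow_sub_one₀ (by norm_num)]
        norm_cast
      rw [not_lt, h6] at hsmall
      have h7 : 2 * (3 / 2 : ℝ) ^ (22 + k) = 4 * (3 / 4) ^ (22 + k) * (2 ^ (22 + k) / 2) := by
        rw [show (3 / 2 : ℝ) = 3 / 4 * 2 by norm_num, mul_pow]; ring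
      have h8 : 4 * (3 / 4 : ℝ) ^ (22 + k) * (2 ^ (22 + k) / 2)
          ≤ 4 * (3 / 4) ^ (22 + k) * Ssum i c R x := by gcongr
      linarith
  have s1 := Finset.sum_le_sum hf
  have s2 := Finset.sum_le_sum hm
  have s3 := Finset.sum_le_sum hc
  rw [Finset.sum_add_distrib] at s1 s2
  have t1 : ∑ e ∈ Finset.range m₁, 2 * balance r * rate r ^ e
      ≤ 2 * balance r / (1 - rate r) := by
    rw [← Finset.mul_sum]
    have := geom_le hϱ.le hϱ1 m₁
    calc _ ≤ 2 * balance r * (1 / (1 - rate r)) := by gcongr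
      _ = _ := by ring
  have t2 : ∑ k ∈ Finset.range (3 * n + 21), 2 * (32 * (3 * n + 21 : ℝ))
      = 64 * (3 * n + 21 : ℝ) ^ 2 := by
    rw [Finset.sum_const, Finset.card_range, nsmul_eq_mul]; push_cast; ring
  unfold baseConst majorant
  linarith

/-- The constant of the forest estimate. -/
noncomputable def forestConst (r : ℝ) : ℝ := 2 * (2 * balance r / (1 - rate r) + 64)

/-- The square sum of a forest is controlled up to a power of the logarithm of its overlap. -/
theorem forest_sum_le {r : ℝ} (hr : 2 < r) (L : LinData r)
    {𝒰 : Finset (Finset Quartile × ℝ × DyadicInterval)} {N n : ℕ}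
    (h : Forest i 𝒰 N) (hN : N ≤ 2 ^ n) {E A : Set ℝ} {f : ℝ → ℝ} (hE : MeasurableSet E)
    (hEfin : volume E ≠ ⊤) (hf : ∀ x, |f x| ≤ E.indicator (fun _ => (1 : ℝ)) x)
    (hA : MeasurableSet A) (hTA : ∀ τ ∈ 𝒰, τ.2.2.toSet ⊆ A) :
    ∑ P ∈ quartiles 𝒰, innerF f (L.wp P i) ^ 2
      ≤ forestConst r * (3 * n + 21 : ℝ) ^ 2 * volume.real (E ∩ A) := by
  have hb := balance_ge hr
  have hϱ := rate_pos r
  have hϱ1 := rate_lt_one hr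
  set R := quartiles 𝒰 with hR
  set c : Quartile → ℝ := fun P => innerF f (L.wp P i) with hc
  have hEA : MeasurableSet (E ∩ A) := hE.inter hA
  have hEAfin : volume (E ∩ A) ≠ ⊤ := ne_top_of_le_ne_top hEfin (measure_mono inter_subset_left)
  have hvol : 0 ≤ volume.real (E ∩ A) := measureReal_nonneg
  have hwpA : ∀ P ∈ R, ∀ x, x ∉ A → P.wp i x = 0 := by
    intro P hP x hx
    obtain ⟨τ, hτ, h1⟩ := Finset.mem_biUnion.1 hP
    exact wp_eq_zero fun hx' => hx (hTA τ hτ ((h.sub τ hτ P h1).1 hx'))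
  have hfE : ∀ x, x ∉ E → f x = 0 := by
    intro x hx
    have := hf x
    rw [indicator_of_notMem hx] at this
    exact abs_nonpos_iff.1 this
  have hf1 : ∀ x, |f x| ≤ 1 := fun x =>
    (hf x).trans (indicator_le_self' (fun _ _ => zero_le_one) x)
  have hbase : 0 ≤ baseConst r n := by
    have : 0 < 1 - rate r := by linarith
    unfold baseConst; positivity
  set D : ℝ := 3 * n + 21 with hD
  have hD1 : 1 ≤ D := by
    have : (0 : ℝ) ≤ n := Nat.cast_nonneg n
    linarith
  set Q := ∑ P ∈ R, c P ^ 2 with hQ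
  have hQ0 : 0 ≤ Q := Finset.sum_nonneg fun _ _ => sq_nonneg _
  have hconst : 2 * baseConst r n ≤ forestConst r * D ^ 2 := by
    have h1 : 0 ≤ 2 * balance r / (1 - rate r) := div_nonneg (by linarith) (by linarith)
    have h2 : 1 ≤ D ^ 2 := one_le_pow₀ hD1
    unfold baseConst forestConst
    rw [← hD]
    nlinarith
  suffices hkey : ∃ G : ℝ → ℝ, Nice G ∧ (∀ x, 0 ≤ G x) ∧ ∫ x, G x ≤ 1 / 2 * Q ∧
      ∀ x, |∑ P ∈ R, c P * L.wp P i x| ≤ baseConst r n + G x by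
    obtain ⟨G, hG, hG0, hGint, hGp⟩ := hkey
    have := sum_inner_le R f (fun P => L.wp P i)
      (fun x => (E ∩ A).indicator (fun _ => baseConst r n) x + G x)
      ((integrable_ind hEA hEAfin _).add hG.integrable)
      (fun x => add_nonneg (indicator_nonneg (fun _ _ => hbase) x) (hG0 x)) (fun x => ?_)
    · rw [integral_add (integrable_ind hEA hEAfin _) hG.integrable, integral_ind hEA] at this
      change Q ≤ _ at this
      calc Q ≤ 2 * baseConst r n * volume.real (E ∩ A) := by linarith
        _ ≤ _ := by gcongr
    · have hsum : ∑ P ∈ R, innerF f (L.wp P i) * (f x * L.wp P i x)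
          = f x * ∑ P ∈ R, c P * L.wp P i x := by
        rw [Finset.mul_sum]
        exact Finset.sum_congr rfl fun P _ => by simp only [hc]; ring
      show ∑ P ∈ R, innerF f (L.wp P i) * (f x * L.wp P i x) ≤ _
      rw [hsum]
      by_cases hx : x ∈ E ∩ A
      · rw [indicator_of_mem hx]
        refine (le_abs_self _).trans ?_
        rw [abs_mul]
        calc _ ≤ 1 * |∑ P ∈ R, c P * L.wp P i x| := by gcongr; exact hf1 x
          _ ≤ _ := by rw [one_mul]; exact hGp x
      · rw [indicator_of_notMem hx, zero_add]
        have hz : f x * ∑ P ∈ R, c P * L.wp P i x = 0 := by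
          by_cases hxE : x ∈ E
          · rw [Finset.sum_eq_zero, mul_zero]
            intro P hP
            rw [LinData.wp, hwpA P hP x fun hxA => hx ⟨hxE, hxA⟩]
            simp
          · rw [hfE x hxE, zero_mul]
        rw [hz]
        exact hG0 x
  by_cases hi : i = 2
  · obtain ⟨m₁, hm₁⟩ := exists_bottom R c n
    obtain ⟨m₂, hm₂⟩ := exists_top (i := i) R c
    refine ⟨majorant r i c R n m₁ m₂, nice_majorant R n m₁ m₂, majorant_nonneg hr R n m₁ m₂, ?_,
      fun x => ?_⟩
    · have := integral_majorant_le (c := c) hr h hN m₁ m₂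
      rw [← hR, ← hQ] at this
      linarith
    · have := linear_sum_le (i := i) hr R (L.kseq x) (L.mono x) (L.aseq x) (L.abound x) x n m₁ m₂
        hm₁ (hm₂ x)
      refine le_trans (le_of_eq ?_) this
      congr 1
      refine Finset.sum_congr rfl fun P _ => ?_
      rw [LinData.wp, if_pos hi]; rfl
  · refine ⟨fun x => 1 / 2 * Fsum i c R x ^ 2, ((nice_Fsum i c R).pow 1).const_mul _,
      fun x => by positivity, ?_, fun x => ?_⟩
    · rw [integral_const_mul, integral_Fsum_sq (h.disj' subset_rfl)]
    · have hsum : ∑ P ∈ R, c P * L.wp P i x = Fsum i c R x := by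
        refine Finset.sum_congr rfl fun P _ => ?_
        rw [LinData.wp, if_neg hi, one_mul]
      rw [hsum]
      have hb1 : 1 ≤ baseConst r n := by
        have h1 : 0 ≤ 2 * balance r / (1 - rate r) := div_nonneg (by linarith) (by linarith)
        have h2 : 1 ≤ D ^ 2 := one_le_pow₀ hD1
        unfold baseConst
        rw [← hD]
        linarith
      have := sq_abs (Fsum i c R x)
      nlinarith [sq_nonneg (|Fsum i c R x| - 1)]

/-! ### Total length of the selected trees -/

/-- The logarithmic loss in `forest_sum_le` is absorbed by an arbitrarily small power of the
overlap `N`. -/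
theorem exists_powerConst {r η : ℝ} (hr : 2 < r) (hη : 0 < η) :
    ∃ C : ℝ, 1 ≤ C ∧ ∀ N : ℕ, 1 ≤ N → ∃ n : ℕ, N ≤ 2 ^ n ∧
      forestConst r * (3 * n + 21 : ℝ) ^ 2 ≤ C * (N : ℝ) ^ η := by
  have hF : 0 ≤ forestConst r := by
    have h1 := balance_ge hr
    have h2 := rate_lt_one hr
    have h3 : 0 ≤ 2 * balance r / (1 - rate r) := div_nonneg (by linarith) (by linarith)
    unfold forestConst
    linarith
  set β : ℝ := η / 2 * Real.log 2 with hβ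
  have hβ0 : 0 < β := mul_pos (by linarith) (Real.log_pos (by norm_num))
  set b : ℝ := min 1 β with hb
  have hb0 : 0 < b := lt_min one_pos hβ0
  refine ⟨max 1 (forestConst r * (24 * b⁻¹) ^ 2), le_max_left _ _, fun N hN => ?_⟩
  set m := Nat.log 2 N with hm
  refine ⟨m + 1, (Nat.lt_pow_succ_log_self (by norm_num) N).le, ?_⟩
  have h1 : (m + 1 : ℝ) ≤ b⁻¹ * Real.exp (β * m) := by
    have h2 := Real.add_one_le_exp (β * m)
    have h3 : b * m ≤ β * m := by gcongr; exact min_le_right _ _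
    have h4 : b ≤ 1 := min_le_left _ _
    rw [← div_eq_inv_mul, le_div_iff₀ hb0]
    nlinarith
  have h5 : Real.exp (β * m) ^ 2 ≤ (N : ℝ) ^ η := by
    have h6 : Real.exp (β * m) ^ 2 = ((2 : ℝ) ^ m) ^ η := by
      rw [← Real.exp_nat_mul, ← Real.rpow_natCast 2 m, ← Real.rpow_mul (by norm_num),
        Real.rpow_def_of_pos (by norm_num)]
      congr 1
      rw [hβ]; push_cast; ring
    rw [h6]
    have h7 : ((2 : ℝ) ^ m) ≤ N := by exact_mod_cast Nat.pow_log_le_self 2 (by omega)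
    exact Real.rpow_le_rpow (by positivity) h7 hη.le
  calc forestConst r * (3 * ((m + 1 : ℕ) : ℝ) + 21) ^ 2
      ≤ forestConst r * (24 * (b⁻¹ * Real.exp (β * m))) ^ 2 := by
        gcongr
        push_cast
        have : (0 : ℝ) ≤ m := by positivity
        linarith
    _ = forestConst r * (24 * b⁻¹) ^ 2 * Real.exp (β * m) ^ 2 := by ring
    _ ≤ max 1 (forestConst r * (24 * b⁻¹) ^ 2) * (N : ℝ) ^ η := by
        gcongr
        exact le_max_right _ _

/-- If trees of overlap at most `N` obey `∑ |I_T| ≤ B N^η |E ∩ A|`, where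
`1 / (1 - η) = 1 + ε`, then all the trees satisfy `∑ |I_T| ≲ B^{1+ε} |E|`: the packing lemma
applies with overlap of order `(2B)^{1+ε}`. -/
theorem total_len_le {ε B : ℝ} (hε : 0 < ε) (hB : 0 < B) {E : Set ℝ}
    (𝒯 : Finset (Finset Quartile × ℝ × DyadicInterval))
    (hyp : ∀ N : ℕ, 1 ≤ N → ∀ 𝒰 ⊆ 𝒯,
      (∀ x, ∀ 𝒱 ⊆ 𝒰, (∀ τ ∈ 𝒱, x ∈ τ.2.2.toSet) → 𝒱.card ≤ N) →
      ∀ A : Set ℝ, MeasurableSet A → (∀ τ ∈ 𝒰, τ.2.2.toSet ⊆ A) →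
        ∑ τ ∈ 𝒰, τ.2.2.len ≤ B * (N : ℝ) ^ (ε / (1 + ε)) * volume.real (E ∩ A)) :
    ∑ τ ∈ 𝒯, τ.2.2.len ≤ 4 * 2 ^ ε * B ^ (1 + ε) * volume.real E := by
  classical
  set η : ℝ := ε / (1 + ε) with hηdef
  have hη0 : 0 < η := by positivity
  have hη1 : η < 1 := by rw [hηdef, div_lt_one (by linarith)]; linarith
  by_cases hB1 : B < 1
  · -- A single tree would violate the hypothesis with `N = 1` and `A = I_T`.
    have : 𝒯 = ∅ := by
      by_contra hne
      obtain ⟨τ, hτ⟩ := Finset.nonempty_iff_ne_empty.2 hne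
      have h1 := hyp 1 le_rfl {τ} (by simpa using hτ)
        (fun x 𝒱 h𝒱 _ => by simpa using Finset.card_le_card h𝒱) τ.2.2.toSet
        (measurableSet_toSet _) (by simp)
      have h2 : volume.real (E ∩ τ.2.2.toSet) ≤ τ.2.2.len := by
        rw [← volume_real_toSet]
        exact measureReal_mono inter_subset_right (by rw [volume_toSet]; exact ENNReal.ofReal_ne_top)
      have h3 := len_pos τ.2.2
      simp only [Finset.sum_singleton, Nat.cast_one, Real.one_rpow, mul_one] at h1
      nlinarith
    subst this
    simp only [Finset.sum_empty]
    positivity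
  push Not at hB1
  set X : ℝ := (2 * B) ^ (1 + ε) with hX
  have hX1 : 1 ≤ X := Real.one_le_rpow (by linarith) (by linarith)
  set n : ℕ := ⌈X⌉₊ with hn
  have hnX : X ≤ n := Nat.le_ceil X
  have hn2 : (n : ℝ) ≤ 2 * X := by
    have := Nat.ceil_lt_add_one (show 0 ≤ X by linarith)
    linarith
  have hn0 : (0 : ℝ) < n := by linarith
  have hn1 : 1 ≤ n := by exact_mod_cast hn0
  have hMn : 2 * (B * (n : ℝ) ^ η) ≤ n := by
    have h1 : 2 * B ≤ (n : ℝ) ^ (1 - η) := by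
      have h2 : X ^ (1 - η) = 2 * B := by
        rw [hX, ← Real.rpow_mul (by linarith)]
        have : (1 + ε) * (1 - η) = 1 := by rw [hηdef]; field_simp; ring
        rw [this, Real.rpow_one]
      rw [← h2]
      exact Real.rpow_le_rpow (by linarith) hnX (by linarith)
    calc 2 * (B * (n : ℝ) ^ η) = 2 * B * (n : ℝ) ^ η := by ring
      _ ≤ (n : ℝ) ^ (1 - η) * (n : ℝ) ^ η := by gcongr
      _ = n := by rw [← Real.rpow_add hn0]; simp
  have hpack := packing (fun τ : Finset Quartile × ℝ × DyadicInterval => τ.2.2) n hn1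
    (B * (n : ℝ) ^ η) hMn E 𝒯 (fun 𝒰 h𝒰 hov A hA hTA => hyp n hn1 𝒰 h𝒰 (fun x 𝒱 h𝒱 hx => by
      refine le_trans (Finset.card_le_card fun σ hσ => ?_) (hov x)
      exact Finset.mem_filter.2 ⟨h𝒱 hσ, hx σ hσ⟩) A hA hTA) (by positivity) univ
    MeasurableSet.univ (fun _ _ => subset_univ _)
  rw [inter_univ] at hpack
  have hnη : (n : ℝ) ^ η ≤ 2 * (2 * B) ^ ε := by
    calc (n : ℝ) ^ η ≤ (2 * X) ^ η := Real.rpow_le_rpow hn0.le hn2 hη0.le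
      _ = 2 ^ η * X ^ η := Real.mul_rpow (by norm_num) (by linarith)
      _ ≤ 2 * X ^ η := by
          gcongr
          calc (2 : ℝ) ^ η ≤ 2 ^ (1 : ℝ) := Real.rpow_le_rpow_of_exponent_le (by norm_num) hη1.le
            _ = 2 := Real.rpow_one 2
      _ = 2 * (2 * B) ^ ε := by
          rw [hX, ← Real.rpow_mul (by linarith)]
          congr 2
          rw [hηdef]; field_simp
  calc ∑ τ ∈ 𝒯, τ.2.2.len ≤ 2 * (B * (n : ℝ) ^ η) * volume.real E := hpack
    _ ≤ 2 * (B * (2 * (2 * B) ^ ε)) * volume.real E := by gcongr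
    _ = 4 * 2 ^ ε * B ^ (1 + ε) * volume.real E := by
        rw [Real.mul_rpow (by norm_num) hB.le, Real.rpow_add hB, Real.rpow_one]
        ring

/-- One run of the selection, for a fixed `j ≠ i` and a fixed parity of the scales. -/
theorem run {ε r : ℝ} (hε : 0 < ε) (hr : 2 < r) :
    ∃ C : ℝ, 0 < C ∧ ∀ (L : LinData r) (i j : Fin 4), j ≠ i → ∀ (R : Finset Quartile),
      (∀ P ∈ R, ∀ Q ∈ R, P.I.k % 2 = Q.I.k % 2) → ∀ (E : Set ℝ) (f : ℝ → ℝ),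
      MeasurableSet E → volume E ≠ ⊤ → (∀ x, |f x| ≤ E.indicator (fun _ => (1 : ℝ)) x) →
      ∀ α : ℝ, 0 < α → ∃ Ts : Finset (Finset Quartile × ℝ × DyadicInterval),
        (∀ τ ∈ Ts, IsTree τ.1 τ.2.1 τ.2.2 ∧ τ.1 ⊆ R) ∧
        (∀ (T : Finset Quartile) (ξ : ℝ) (It : DyadicInterval), T ⊆ R →
          (∀ P ∈ T, ∀ τ ∈ Ts, P ∉ τ.1) → IsOverlapping j T ξ It →
          ∑ P ∈ T, innerF f (L.wp P i) ^ 2 ≤ α / 8 * It.len) ∧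
        ∑ τ ∈ Ts, τ.2.2.len ≤ C * α ^ (-(1 + ε)) * volume.real E := by
  classical
  obtain ⟨C₀, hC₀, hpow⟩ := exists_powerConst hr (show 0 < ε / (1 + ε) by positivity)
  refine ⟨4 * 2 ^ ε * (8 * C₀) ^ (1 + ε), by positivity, ?_⟩
  intro L i j hij R hR E f hE hEfin hf α hα
  set c : Quartile → ℝ := fun P => innerF f (L.wp P i) with hc
  obtain ⟨𝒯, h𝒯, hdisj, hpd, hrest⟩ := select i j hij c (α / 8) (by linarith) R hR
  have hlen : ∑ τ ∈ 𝒯, τ.2.2.len ≤ 4 * 2 ^ ε * (8 * C₀ / α) ^ (1 + ε) * volume.real E := by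
    refine total_len_le hε (by positivity) 𝒯 fun N hN 𝒰 h𝒰 hov A hA hTA => ?_
    obtain ⟨n, hNn, hCn⟩ := hpow N hN
    have hfor : Forest i 𝒰 N :=
      { sub := fun τ hτ => (h𝒯 τ (h𝒰 hτ)).2.1.1.2
        par := fun τ hτ τ' hτ' P hP Q hQ =>
          hR P ((h𝒯 τ (h𝒰 hτ)).1 hP) Q ((h𝒯 τ' (h𝒰 hτ')).1 hQ)
        disj := fun τ hτ τ' hτ' => hdisj τ (h𝒰 hτ) τ' (h𝒰 hτ')
        pd := fun τ hτ τ' hτ' => hpd τ (h𝒰 hτ) τ' (h𝒰 hτ')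
        ov := hov }
    have h1 := forest_sum_le hr L hfor hNn hE hEfin hf hA hTA
    have h2 : ∑ P ∈ quartiles 𝒰, innerF f (L.wp P i) ^ 2 = ∑ τ ∈ 𝒰, ∑ P ∈ τ.1, c P ^ 2 :=
      Finset.sum_biUnion fun τ hτ τ' hτ' hne => hpd τ (h𝒰 hτ) τ' (h𝒰 hτ') hne
    have h3 : α / 8 * ∑ τ ∈ 𝒰, τ.2.2.len ≤ ∑ τ ∈ 𝒰, ∑ P ∈ τ.1, c P ^ 2 := by
      rw [Finset.mul_sum]
      exact Finset.sum_le_sum fun τ hτ => (h𝒯 τ (h𝒰 hτ)).2.2.2.le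
    have h4 : α / 8 * ∑ τ ∈ 𝒰, τ.2.2.len
        ≤ C₀ * (N : ℝ) ^ (ε / (1 + ε)) * volume.real (E ∩ A) := by
      rw [← h2] at h3
      refine (h3.trans h1).trans ?_
      gcongr
    have h5 : ∑ τ ∈ 𝒰, τ.2.2.len = 8 / α * (α / 8 * ∑ τ ∈ 𝒰, τ.2.2.len) := by
      field_simp
    rw [h5]
    calc _ ≤ 8 / α * (C₀ * (N : ℝ) ^ (ε / (1 + ε)) * volume.real (E ∩ A)) := by gcongr
      _ = _ := by ring
  -- Each selected tree is enlarged to all quartiles of `R` below its top.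
  set full : Finset Quartile × ℝ × DyadicInterval → Finset Quartile × ℝ × DyadicInterval :=
    fun τ => (R.filter fun P => P.I.toSet ⊆ τ.2.2.toSet ∧ τ.2.1 ∈ P.ω.toSet, τ.2.1, τ.2.2)
    with hfull
  refine ⟨𝒯.image full, ?_, ?_, ?_⟩
  · intro τ hτ
    obtain ⟨σ, hσ, rfl⟩ := Finset.mem_image.1 hτ
    exact ⟨⟨(h𝒯 σ hσ).2.1.1.1, fun P hP => (Finset.mem_filter.1 hP).2⟩, Finset.filter_subset _ _⟩
  · intro T ξ It hTR hT hov
    refine hrest T ξ It hTR (fun P hP τ hτ hcon => ?_) hov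
    exact hT P hP (full τ) (Finset.mem_image_of_mem _ hτ) (Finset.mem_filter.2 ⟨hTR hP, hcon⟩)
  · have h1 : ∑ τ ∈ 𝒯.image full, τ.2.2.len ≤ ∑ τ ∈ 𝒯, τ.2.2.len :=
      Finset.sum_image_le_of_nonneg (f := fun τ => τ.2.2.len) (g := full)
        fun τ _ => (len_pos _).le
    refine (h1.trans hlen).trans (le_of_eq ?_)
    rw [Real.div_rpow (by positivity) hα.le, Real.rpow_neg hα.le, div_eq_mul_inv]
    ring

/-- A bound for all lacunary trees in `S` bounds the size. -/
theorem treeSize_sq_le {r : ℝ} (L : LinData r) (i : Fin 4) (S : Set Quartile) (f : ℝ → ℝ) {β : ℝ}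
    (h : ∀ (T : Finset Quartile) (ξ : ℝ) (It : DyadicInterval), IsLacunary i T ξ It →
      (T : Set Quartile) ⊆ S → ∑ P ∈ T, innerF f (L.wp P i) ^ 2 ≤ β * It.len) :
    treeSize L i S f ^ (2 : ℕ) ≤ ENNReal.ofReal β := by
  have h1 : treeSize L i S f ≤ ENNReal.ofReal β ^ ((1 : ℝ) / 2) := by
    unfold treeSize
    refine iSup_le fun T => iSup_le fun ξ => iSup_le fun It => iSup_le fun hl => iSup_le fun hs => ?_
    refine ENNReal.rpow_le_rpow (ENNReal.ofReal_le_ofReal ?_) (by norm_num)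
    rw [inv_mul_le_iff₀ (len_pos It), mul_comm]
    exact h T ξ It hl hs
  calc treeSize L i S f ^ (2 : ℕ) ≤ (ENNReal.ofReal β ^ ((1 : ℝ) / 2)) ^ (2 : ℕ) := by gcongr
    _ = ENNReal.ofReal β := by
        rw [← ENNReal.rpow_natCast, ← ENNReal.rpow_mul]
        norm_num

theorem sum_biUnion_le {ι κ : Type*} [Fintype ι] [DecidableEq κ] (s : ι → Finset κ) {g : κ → ℝ}
    (hg : ∀ k, 0 ≤ g k) : ∑ k ∈ Finset.univ.biUnion s, g k ≤ ∑ q, ∑ k ∈ s q, g k := by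
  have h : Finset.univ.biUnion s = (Finset.univ.sigma s).image Sigma.snd := by
    ext k; simp
  rw [h, Finset.sum_sigma' Finset.univ s fun _ k => g k]
  exact Finset.sum_image_le_of_nonneg (f := g) fun k _ => hg k

end VarSize

/-- **Proposition 5.1 (variation-norm size lemma).** For `ε > 0`, `r > 2` there is `C` such
that for any linearization data, any `i`, any finite collection of quartiles `Ps`, any set `E`
of finite measure, any `f` with `|f| ≤ 1_E`, and any `α > 0` with `size_i(Ps, f)² ≤ α`,
there is a collection `Ts` of trees in `Ps` with `size_i(Ps \ ⋃_{T ∈ Ts} T, f)² ≤ α/4` and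
`∑_{T ∈ Ts} |I_T| ≤ C α^{-(1+ε)} |E|`. -/
theorem variation_norm_size_lemma (ε r : ℝ) (hε : 0 < ε) (hr : 2 < r) :
    ∃ C : ℝ, 0 < C ∧ ∀ (L : LinData r) (i : Fin 4) (Ps : Finset Quartile)
      (E : Set ℝ) (f : ℝ → ℝ), MeasurableSet E → volume E ≠ ⊤ → Measurable f →
      (∀ x, |f x| ≤ E.indicator (fun _ => (1 : ℝ)) x) →
      ∀ α : ℝ, 0 < α → treeSize L i ↑Ps f ^ (2 : ℕ) ≤ ENNReal.ofReal α →
      ∃ Ts : Finset (Finset Quartile × ℝ × DyadicInterval),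
        (∀ τ ∈ Ts, IsTree τ.1 τ.2.1 τ.2.2 ∧ (τ.1 : Set Quartile) ⊆ (Ps : Set Quartile)) ∧
        treeSize L i ((Ps : Set Quartile) \ ⋃ τ ∈ Ts, (τ.1 : Set Quartile)) f ^ (2 : ℕ)
          ≤ ENNReal.ofReal (α / 4) ∧
        ∑ τ ∈ Ts, τ.2.2.len ≤ C * α ^ (-(1 + ε)) * (volume E).toReal := by
  classical
  obtain ⟨C, hC, hrun⟩ := VarSize.run hε hr
  refine ⟨8 * C, by positivity, ?_⟩
  intro L i Ps E f hE hEfin _ hf α hα _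
  set par : Fin 2 → Finset Quartile :=
    fun b => Ps.filter fun P => P.I.k % 2 = ((b : ℕ) : ℤ) with hpar
  have hex : ∀ q : Fin 4 × Fin 2, ∃ Ts : Finset (Finset Quartile × ℝ × DyadicInterval),
      (∀ τ ∈ Ts, IsTree τ.1 τ.2.1 τ.2.2 ∧ τ.1 ⊆ par q.2) ∧
      (q.1 ≠ i → ∀ (T : Finset Quartile) (ξ : ℝ) (It : DyadicInterval), T ⊆ par q.2 →
        (∀ P ∈ T, ∀ τ ∈ Ts, P ∉ τ.1) → IsOverlapping q.1 T ξ It →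
        ∑ P ∈ T, innerF f (L.wp P i) ^ 2 ≤ α / 8 * It.len) ∧
      ∑ τ ∈ Ts, τ.2.2.len ≤ C * α ^ (-(1 + ε)) * volume.real E := by
    intro q
    by_cases hq : q.1 = i
    · exact ⟨∅, by simp, fun h => absurd hq h, by simp only [Finset.sum_empty]; positivity⟩
    · obtain ⟨Ts, h1, h2, h3⟩ := hrun L i q.1 hq (par q.2) (fun P hP Q hQ => by
        rw [(Finset.mem_filter.1 hP).2, (Finset.mem_filter.1 hQ).2]) E f hE hEfin hf α hα
      exact ⟨Ts, h1, fun _ => h2, h3⟩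
  choose Ts h1 h2 h3 using hex
  refine ⟨Finset.univ.biUnion Ts, ?_, ?_, ?_⟩
  · intro τ hτ
    obtain ⟨q, _, hq⟩ := Finset.mem_biUnion.1 hτ
    exact ⟨(h1 q τ hq).1, Finset.coe_subset.2 ((h1 q τ hq).2.trans (Finset.filter_subset _ _))⟩
  · refine VarSize.treeSize_sq_le L i _ f fun T ξ It hl hs => ?_
    obtain ⟨j, hj, hov⟩ := hl
    have hPs : ∀ P ∈ T, P ∈ Ps := fun P hP => Finset.mem_coe.1 (hs hP).1
    have hpart : ∀ b : Fin 2, ∑ P ∈ T.filter (fun P => P.I.k % 2 = ((b : ℕ) : ℤ)),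
        innerF f (L.wp P i) ^ 2 ≤ α / 8 * It.len := by
      intro b
      refine h2 (j, b) hj _ ξ It (Finset.filter_subset_filter _ hPs) ?_ ?_
      · intro P hP τ hτ hPτ
        refine (hs (Finset.mem_filter.1 hP).1).2 ?_
        exact mem_biUnion (Finset.mem_biUnion.2 ⟨(j, b), Finset.mem_univ _, hτ⟩) hPτ
      · exact ⟨⟨hov.1.1, fun P hP => hov.1.2 P (Finset.mem_filter.1 hP).1⟩,
          fun P hP => hov.2 P (Finset.mem_filter.1 hP).1⟩
    have h0 := hpart 0
    have h1 := hpart 1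
    have hsplit := Finset.sum_filter_add_sum_filter_not T (fun P => P.I.k % 2 = 0)
      (fun P => innerF f (L.wp P i) ^ 2)
    have hodd : T.filter (fun P => ¬ P.I.k % 2 = 0) = T.filter (fun P => P.I.k % 2 = 1) :=
      Finset.filter_congr fun P _ => by omega
    rw [hodd] at hsplit
    simp only [Fin.val_zero, Fin.val_one, Nat.cast_zero, Nat.cast_one] at h0 h1
    linarith
  · calc ∑ τ ∈ Finset.univ.biUnion Ts, τ.2.2.len
        ≤ ∑ q : Fin 4 × Fin 2, ∑ τ ∈ Ts q, τ.2.2.len :=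
          VarSize.sum_biUnion_le Ts fun τ => (VarSize.len_pos _).le
      _ ≤ ∑ _q : Fin 4 × Fin 2, C * α ^ (-(1 + ε)) * volume.real E :=
          Finset.sum_le_sum fun q _ => h3 q
      _ = 8 * C * α ^ (-(1 + ε)) * (volume E).toReal := by
          rw [Finset.sum_const, Finset.card_univ, Fintype.card_prod, Fintype.card_fin,
            Fintype.card_fin, nsmul_eq_mul, Measure.real]
          push_cast
          ring
end

section
/- (Long-jump/short-jump decomposition.) There is an absolute constant C such that for every r ≥ 2, every function g : ℤ → ℝ, and every strictly increasing sequence of integers (k_j)_{j∈ℤ}: ‖g(k)‖_{V^r_k} ≤ C ( ‖g(k_j)‖_{V^r_j} + (∑_{j∈ℤ} ‖g‖²_{V^r_{k_j ≤ k < k_{j+1}}})^{1/2} ), where ‖g(k_j)‖_{V^r_j} is the variation seminorm of the sequence j ↦ g(k_j), and ‖g‖_{V^r_{a ≤ k < b}} denotes the variation seminorm of g restricted to the integers {a, a+1, …, b−1} (interpreted as 0 when b = a+1). -/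
/-!
Since `k` is strictly increasing on `ℤ`, the blocks `[k_J, k_{J+1})` partition `ℤ`; write `J(n)` for
the block of `n`, and `v_J` for the variation of `g` on block `J`. Along `t_0 < ⋯ < t_N`, jumps
inside a fixed block `J` contribute at most `v_J^r` to the sum of `r`-th powers (clamp the whole
sequence to the block, `sum_same_block_le`). A jump between two different blocks is at most
`v_{J(t_i)} + |g(k_{J(t_{i+1})}) - g(k_{J(t_i)})| + v_{J(t_{i+1})}`; every block is left at most once
and entered at most once, so these jumps contribute at most `3^r (A^r + 2 ∑ v_J^r)`, where
`A = ‖g(k_j)‖_{V^r_j}`. Finally `∑ v_J^r ≤ (∑ v_J^2)^{r/2}` because `r ≥ 2`, and taking `r`-th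
roots gives the constant `12`. Blocks may repeat in `J(t_0) ≤ J(t_1) ≤ ⋯`, so the variation has to
be compared with weakly increasing sequences (`sum_le_varNorm_rpow`).
-/

open MeasureTheory Set
open scoped ENNReal

noncomputable section

/-- Repetitions in a weakly increasing sequence can be deleted without changing its variation. -/
lemma exists_strictMono_sum_eq (r : ℝ) (hr : 0 < r) (S : Set ℤ) (g : ℤ → ℝ) (u : ℕ → ℤ)
    (hu : Monotone u) (N : ℕ) (hS : ∀ j ≤ N, u j ∈ S) :
    ∃ (M : ℕ) (w : ℕ → ℤ), StrictMono w ∧ (∀ j ≤ M, w j ∈ S) ∧ w M = u N ∧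
      ∑ j ∈ Finset.range N, ENNReal.ofReal (|g (u (j + 1)) - g (u j)| ^ r) =
      ∑ j ∈ Finset.range M, ENNReal.ofReal (|g (w (j + 1)) - g (w j)| ^ r) := by
  induction N with
  | zero =>
    refine ⟨0, fun j => u 0 + j, fun a b hab => by simpa using hab, ?_, by simp, by simp⟩
    intro j hj
    obtain rfl : j = 0 := by omega
    simpa using hS 0 le_rfl
  | succ N ih =>
    obtain ⟨M, w, hw, hwS, hwN, hsum⟩ := ih fun j hj => hS j (by omega)
    rcases (hu (Nat.le_succ N)).eq_or_lt with h | h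
    · refine ⟨M, w, hw, hwS, hwN.trans h, ?_⟩
      rw [Finset.sum_range_succ, hsum, ← Nat.succ_eq_add_one, ← h]
      simp [Real.zero_rpow hr.ne']
    · -- follow `w` up to `M`, then jump to `u (N + 1)` and continue by unit steps
      let w' : ℕ → ℤ := fun j => if j ≤ M then w j else u (N + 1) + ((j : ℤ) - M - 1)
      have hw'1 : ∀ j ≤ M, w' j = w j := fun j hj => if_pos hj
      have hw'2 : w' (M + 1) = u (N + 1) := by simp [w']
      refine ⟨M + 1, w', ?_, ?_, hw'2, ?_⟩
      · refine strictMono_nat_of_lt_succ fun j => ?_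
        rcases lt_trichotomy j M with hj | rfl | hj
        · rw [hw'1 j hj.le, hw'1 _ hj]
          exact hw (Nat.lt_succ_self j)
        · rw [hw'1 j le_rfl, hw'2, hwN]
          exact h
        · have h1 : ¬ j ≤ M := by omega
          have h2 : ¬ j + 1 ≤ M := by omega
          simp [w', h1, h2]
      · intro j hj
        rcases Nat.le_succ_iff.1 hj with hj | rfl
        · rw [hw'1 j hj]
          exact hwS j hj
        · rw [Nat.succ_eq_add_one, hw'2]
          exact hS _ le_rfl
      · rw [Finset.sum_range_succ, Finset.sum_range_succ, hw'2, hw'1 M le_rfl, hwN, hsum]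
        congr 1
        refine Finset.sum_congr rfl fun j hj => ?_
        have := Finset.mem_range.1 hj
        rw [hw'1 j (by omega), hw'1 (j + 1) (by omega)]

lemma sum_le_varNorm_rpow (r : ℝ) (hr : 0 < r) (S : Set ℤ) (g : ℤ → ℝ) (u : ℕ → ℤ)
    (hu : Monotone u) (N : ℕ) (hS : ∀ j ≤ N, u j ∈ S) :
    ∑ j ∈ Finset.range N, ENNReal.ofReal (|g (u (j + 1)) - g (u j)| ^ r) ≤
      varNorm r S g ^ r := by
  obtain ⟨M, w, hw, hwS, -, hsum⟩ := exists_strictMono_sum_eq r hr S g u hu N hS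
  rw [hsum, ← ENNReal.rpow_inv_le_iff hr, ← one_div]
  exact le_iSup_of_le M <| le_iSup_of_le w <| le_iSup_of_le hw <| le_iSup_of_le hwS le_rfl

lemma ofReal_abs_sub_le_varNorm (r : ℝ) (hr : 0 < r) (S : Set ℤ) (g : ℤ → ℝ) {a b : ℤ}
    (ha : a ∈ S) (hb : b ∈ S) (hab : a ≤ b) :
    ENNReal.ofReal |g b - g a| ≤ varNorm r S g := by
  have h := sum_le_varNorm_rpow r hr S g (fun j => if j = 0 then a else b)
    (monotone_nat_of_le_succ fun n => by by_cases hn : n = 0 <;> simp [hn, hab]) 1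
    (fun j _ => by by_cases hj : j = 0 <;> simp [hj, ha, hb])
  simp only [Finset.sum_range_one, zero_add, one_ne_zero, if_false, if_true] at h
  rw [← ENNReal.ofReal_rpow_of_nonneg (abs_nonneg _) hr.le] at h
  exact (ENNReal.rpow_le_rpow_iff hr).1 h

lemma exists_block (k : ℤ → ℤ) (hk : StrictMono k) (n : ℤ) :
    ∃ j, k j ≤ n ∧ n < k (j + 1) := by
  have hstep : ∀ (m : ℕ) (j : ℤ), k j + m ≤ k (j + m) := by
    intro m j
    induction m with
    | zero => simp
    | succ m ih =>
      have := hk (show j + (m : ℤ) < j + (m + 1 : ℕ) by push_cast; omega)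
      push_cast at this ⊢
      omega
  have hbdd : ∀ z, k z ≤ n → z ≤ max 0 (n - k 0) := by
    intro z hz
    rcases le_total z 0 with h | h
    · exact le_max_of_le_left h
    · have := hstep z.toNat 0
      rw [Int.toNat_of_nonneg h, zero_add] at this
      exact le_max_of_le_right (by omega)
  have hex : ∃ z, k z ≤ n := by
    refine ⟨-((k 0 - n).toNat : ℤ), ?_⟩
    have := hstep (k 0 - n).toNat (-((k 0 - n).toNat : ℤ))
    rw [neg_add_cancel] at this
    omega
  obtain ⟨j, hj, hmax⟩ := Int.exists_greatest_of_bdd ⟨_, hbdd⟩ hex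
  refine ⟨j, hj, ?_⟩
  by_contra hcon
  have := hmax (j + 1) (not_lt.1 hcon)
  omega

/-- Jumps with both endpoints in a single interval `[a, b)` are also jumps of the sequence clamped
to that interval. -/
lemma sum_same_block_le (r : ℝ) (hr : 0 < r) (g : ℤ → ℝ) (a b : ℤ) (hab : a < b) (t : ℕ → ℤ)
    (ht : Monotone t) (N : ℕ) (F : Finset ℕ) (hF : F ⊆ Finset.range N)
    (hF' : ∀ i ∈ F, t i ∈ Set.Ico a b ∧ t (i + 1) ∈ Set.Ico a b) :
    ∑ i ∈ F, ENNReal.ofReal (|g (t (i + 1)) - g (t i)| ^ r) ≤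
      varNorm r (Set.Ico a b) g ^ r := by
  let u : ℕ → ℤ := fun i => max a (min (t i) (b - 1))
  have hu : Monotone u := fun i j hij =>
    max_le_max le_rfl (min_le_min (ht hij) le_rfl)
  have hcl : ∀ i, t i ∈ Set.Ico a b → u i = t i := by
    intro i hi
    have h1 := hi.1
    have h2 := hi.2
    simp only [u]
    omega
  calc ∑ i ∈ F, ENNReal.ofReal (|g (t (i + 1)) - g (t i)| ^ r)
      = ∑ i ∈ F, ENNReal.ofReal (|g (u (i + 1)) - g (u i)| ^ r) := by
        refine Finset.sum_congr rfl fun i hi => ?_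
        rw [hcl _ (hF' i hi).1, hcl _ (hF' i hi).2]
    _ ≤ ∑ i ∈ Finset.range N, ENNReal.ofReal (|g (u (i + 1)) - g (u i)| ^ r) :=
        Finset.sum_le_sum_of_subset hF
    _ ≤ _ := sum_le_varNorm_rpow r hr _ g u hu N fun j _ => by
        simp only [u, Set.mem_Ico]
        omega

lemma sum_comp_le_tsum_of_injOn (F : Finset ℕ) (f : ℕ → ℤ) (hf : Set.InjOn f F) (v : ℤ → ℝ≥0∞) :
    ∑ i ∈ F, v (f i) ≤ ∑' j, v j := by
  rw [← Finset.sum_image (f := v) hf]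
  exact ENNReal.sum_le_tsum _

/-- The inclusion `ℓ² ⊆ ℓ^r` for `r ≥ 2`. -/
lemma tsum_rpow_le (r : ℝ) (hr : 2 ≤ r) (v : ℤ → ℝ≥0∞) :
    ∑' j, v j ^ r ≤ ((∑' j, v j ^ (2 : ℝ)) ^ ((1 : ℝ) / 2)) ^ r := by
  set B := (∑' j, v j ^ (2 : ℝ)) ^ ((1 : ℝ) / 2) with hB
  have hB2 : ∑' j, v j ^ (2 : ℝ) = B ^ (2 : ℝ) := by
    rw [hB, ← ENNReal.rpow_mul]
    norm_num
  have hv : ∀ j, v j ≤ B := fun j => by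
    rw [← ENNReal.rpow_le_rpow_iff (show (0 : ℝ) < 2 by norm_num), ← hB2]
    exact ENNReal.le_tsum j
  have hsplit : ∀ x : ℝ≥0∞, x ^ r = x ^ (2 : ℝ) * x ^ (r - 2) := fun x => by
    rw [← ENNReal.rpow_add_of_nonneg _ _ (by norm_num) (by linarith)]
    congr 1
    ring
  calc ∑' j, v j ^ r ≤ ∑' j, v j ^ (2 : ℝ) * B ^ (r - 2) :=
        ENNReal.tsum_le_tsum fun j => by
          rw [hsplit]
          gcongr
          exact hv j
    _ = B ^ r := by rw [ENNReal.tsum_mul_right, hB2, ← hsplit]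

lemma add_add_rpow_le (r : ℝ) (hr : 0 ≤ r) (a b c : ℝ≥0∞) :
    (a + b + c) ^ r ≤ 3 ^ r * (a ^ r + b ^ r + c ^ r) := by
  have hmax : a + b + c ≤ 3 * max (max a b) c := by
    have ha : a ≤ max (max a b) c := (le_max_left a b).trans (le_max_left _ _)
    have hb : b ≤ max (max a b) c := (le_max_right a b).trans (le_max_left _ _)
    have hc : c ≤ max (max a b) c := le_max_right _ _
    calc a + b + c ≤ _ := add_le_add (add_le_add ha hb) hc
      _ = 3 * max (max a b) c := by ring
  refine (ENNReal.rpow_le_rpow hmax hr).trans ?_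
  rw [ENNReal.mul_rpow_of_nonneg _ _ hr]
  gcongr
  rcases max_choice (max a b) c with h | h <;> rw [h]
  · rcases max_choice a b with h | h <;> rw [h]
    · exact le_self_add.trans le_self_add
    · exact le_add_self.trans le_self_add
  · exact le_add_self

/-- The crossing estimate and the block estimate put together, before taking `r`-th roots. -/
lemma sum_jumps_le (r : ℝ) (hr : 2 ≤ r) (g : ℤ → ℝ) (k : ℤ → ℤ) (hk : StrictMono k)
    (t : ℕ → ℤ) (ht : StrictMono t) (N : ℕ) :
    ∑ i ∈ Finset.range N, ENNReal.ofReal (|g (t (i + 1)) - g (t i)| ^ r) ≤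
      ∑' j, varNorm r (Set.Ico (k j) (k (j + 1))) g ^ r +
      3 ^ r * (∑' j, varNorm r (Set.Ico (k j) (k (j + 1))) g ^ r +
        varNorm r Set.univ (fun j => g (k j)) ^ r +
        ∑' j, varNorm r (Set.Ico (k j) (k (j + 1))) g ^ r) := by
  have hr0 : 0 < r := by linarith
  choose J hJ1 hJ2 using exists_block k hk
  have hJmono : Monotone J := fun m n hmn => by
    by_contra hcon
    have := hk.monotone (show J n + 1 ≤ J m by omega)
    have := hJ1 m
    have := hJ2 n
    omega
  set v : ℤ → ℝ≥0∞ := fun j => varNorm r (Set.Ico (k j) (k (j + 1))) g with hv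
  let q : ℕ → ℤ := fun i => J (t i)
  have hq : Monotone q := hJmono.comp ht.monotone
  have hdist : ∀ n, ENNReal.ofReal |g n - g (k (J n))| ≤ v (J n) := fun n =>
    ofReal_abs_sub_le_varNorm r hr0 _ g ⟨le_rfl, hk (by omega)⟩ ⟨hJ1 n, hJ2 n⟩ (hJ1 n)
  rw [← Finset.sum_filter_add_sum_filter_not (Finset.range N) (fun i => q i = q (i + 1))]
  refine add_le_add ?_ ?_
  · rw [← Finset.sum_fiberwise_of_maps_to (g := q)
      (fun i hi => Finset.mem_image_of_mem q hi)]
    refine (Finset.sum_le_sum fun j _ => ?_).trans (ENNReal.sum_le_tsum _)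
    refine sum_same_block_le r hr0 g (k j) (k (j + 1)) (hk (by omega)) t ht.monotone N _
      ((Finset.filter_subset _ _).trans (Finset.filter_subset _ _)) fun i hi => ?_
    obtain ⟨hmem, rfl⟩ := Finset.mem_filter.1 hi
    have hi' : J (t i) = J (t (i + 1)) := (Finset.mem_filter.1 hmem).2
    refine ⟨⟨hJ1 _, hJ2 _⟩, ?_⟩
    change t (i + 1) ∈ Set.Ico (k (J (t i))) (k (J (t i) + 1))
    rw [hi']
    exact ⟨hJ1 _, hJ2 _⟩
  · set F := (Finset.range N).filter (fun i => ¬ q i = q (i + 1)) with hF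
    have hlt : ∀ i ∈ F, q i < q (i + 1) := fun i hi =>
      lt_of_le_of_ne (hq (Nat.le_succ i)) (Finset.mem_filter.1 hi).2
    -- each block is left at most once, and entered at most once
    have hinj1 : Set.InjOn q F := by
      intro i hi i' hi' h
      by_contra hne
      rcases lt_or_gt_of_ne hne with hl | hl
      · have := hlt i hi
        have := hq (show i + 1 ≤ i' by omega)
        omega
      · have := hlt i' hi'
        have := hq (show i' + 1 ≤ i by omega)
        omega
    have hinj2 : Set.InjOn (fun i => q (i + 1)) F := by
      intro i hi i' hi' h
      simp only at h
      by_contra hne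
      rcases lt_or_gt_of_ne hne with hl | hl
      · have := hlt i' hi'
        have := hq (show i + 1 ≤ i' by omega)
        omega
      · have := hlt i hi
        have := hq (show i' + 1 ≤ i by omega)
        omega
    have hterm : ∀ i, ENNReal.ofReal (|g (t (i + 1)) - g (t i)| ^ r) ≤
        3 ^ r * (v (q i) ^ r + ENNReal.ofReal (|g (k (q (i + 1))) - g (k (q i))| ^ r) +
          v (q (i + 1)) ^ r) := by
      intro i
      rw [← ENNReal.ofReal_rpow_of_nonneg (abs_nonneg _) hr0.le,
        ← ENNReal.ofReal_rpow_of_nonneg (abs_nonneg _) hr0.le]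
      refine le_trans (ENNReal.rpow_le_rpow ?_ hr0.le) (add_add_rpow_le r hr0.le _ _ _)
      have habs : |g (t (i + 1)) - g (t i)| ≤ |g (t i) - g (k (q i))| +
          |g (k (q (i + 1))) - g (k (q i))| + |g (t (i + 1)) - g (k (q (i + 1)))| := by
        have e : g (t (i + 1)) - g (t i) = -(g (t i) - g (k (q i))) +
          (g (k (q (i + 1))) - g (k (q i))) + (g (t (i + 1)) - g (k (q (i + 1)))) := by ring
        rw [e, ← abs_neg (g (t i) - g (k (q i)))]
        exact abs_add_three _ _ _
      refine (ENNReal.ofReal_le_ofReal habs).trans ?_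
      rw [ENNReal.ofReal_add (by positivity) (by positivity),
        ENNReal.ofReal_add (by positivity) (by positivity)]
      gcongr
      · exact hdist (t i)
      · exact hdist (t (i + 1))
    refine (Finset.sum_le_sum fun i _ => hterm i).trans ?_
    rw [← Finset.mul_sum, Finset.sum_add_distrib, Finset.sum_add_distrib]
    gcongr
    · exact sum_comp_le_tsum_of_injOn F q hinj1 (fun j => v j ^ r)
    · exact (Finset.sum_le_sum_of_subset (Finset.filter_subset _ _)).trans
        (sum_le_varNorm_rpow r hr0 Set.univ (fun j => g (k j)) q hq N fun _ _ => trivial)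
    · exact sum_comp_le_tsum_of_injOn F (fun i => q (i + 1)) hinj2 (fun j => v j ^ r)

end

/-- **Equation (5.8) (long-jump/short-jump decomposition).** There is an absolute constant `C`
such that for every `r ≥ 2`, every `g : ℤ → ℝ`, and every strictly increasing sequence
`(k_j)_{j∈ℤ}`:
`‖g(k)‖_{V^r_k} ≤ C (‖g(k_j)‖_{V^r_j} + (∑_j ‖g‖²_{V^r_{k_j ≤ k < k_{j+1}}})^{1/2})`. -/
theorem long_short_jump_decomposition :
    ∃ C : ℝ≥0∞, C ≠ ⊤ ∧ ∀ (r : ℝ), 2 ≤ r → ∀ (g : ℤ → ℝ) (k : ℤ → ℤ), StrictMono k →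
      varNorm r Set.univ g ≤
        C * (varNorm r Set.univ (fun j => g (k j)) +
          (∑' j : ℤ, varNorm r (Set.Ico (k j) (k (j + 1))) g ^ (2 : ℝ)) ^ ((1 : ℝ) / 2)) := by
  refine ⟨12, by norm_num, fun r hr g k hk => ?_⟩
  have hr0 : 0 < r := by linarith
  set A := varNorm r Set.univ (fun j => g (k j))
  set B := (∑' j : ℤ, varNorm r (Set.Ico (k j) (k (j + 1))) g ^ (2 : ℝ)) ^ ((1 : ℝ) / 2)
  refine iSup_le fun N => iSup_le fun t => iSup_le fun ht => iSup_le fun _ => ?_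
  rw [one_div, ENNReal.rpow_inv_le_iff hr0, ENNReal.mul_rpow_of_nonneg _ _ hr0.le]
  refine (sum_jumps_le r hr g k hk t ht N).trans ?_
  have hBr : ∑' j, varNorm r (Set.Ico (k j) (k (j + 1))) g ^ r ≤ (A + B) ^ r :=
    (tsum_rpow_le r hr _).trans (ENNReal.rpow_le_rpow le_add_self hr0.le)
  have hAr : A ^ r ≤ (A + B) ^ r := ENNReal.rpow_le_rpow le_self_add hr0.le
  have h3 : (1 : ℝ≥0∞) ≤ 3 ^ r := ENNReal.one_le_rpow (by norm_num) hr0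
  have h4 : (4 : ℝ≥0∞) ≤ 4 ^ r := by
    simpa using ENNReal.rpow_le_rpow_of_exponent_le (x := 4) (by norm_num)
      (show (1 : ℝ) ≤ r by linarith)
  have h12 : (12 : ℝ≥0∞) ^ r = 4 ^ r * 3 ^ r := by
    rw [← ENNReal.mul_rpow_of_nonneg _ _ hr0.le]
    norm_num
  set D := (A + B) ^ r
  calc _ ≤ D + 3 ^ r * (D + D + D) := by gcongr
    _ ≤ 3 ^ r * D + 3 ^ r * (D + D + D) := by
        gcongr
        exact le_mul_of_one_le_left zero_le h3
    _ = 4 * 3 ^ r * D := by ring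
    _ ≤ 12 ^ r * D := by
        rw [h12]
        gcongr
end

section
/- (Single tree estimate.) Fix linearization data as in the context. Let (T, ξ_T, I_T) be any tree and let f_1, f_2, f_3 be measurable functions on [0,∞) for which the quantities below are finite. Then ∑_{P ∈ T} |I_P|^{-1/2} ∏_{i=1}^3 |⟨f_i, φ̃_{P_i}⟩| ≤ 4 |I_T| ∏_{i=1}^3 size_i(T, f_i). -/
/-!
The tree `T` splits into four subtrees `T_j`, `j : Fin 4`, according to which of the four frequency
grandchildren of `ω_P` contains `ξ`; each `T_j` is `j`-overlapping, hence `i`-lacunary for every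
`i ≠ j`. Among the three indices `0, 1, 2` at most one equals `j`, so at least two of them, say
`a` and `b`, are lacunary for `T_j`. The remaining coefficient is bounded pointwise,
`|I_P|^{-1/2} |⟨f_c, φ̃_{P_c}⟩| ≤ size_c`, because the singleton `{P}` with top interval `I_P` is a
`c`-lacunary tree for a suitable top frequency (`single_coeff_le`). Cauchy–Schwarz for the indices
`a, b` and the definition of size (`sum_sq_le`) then bound the sum over `T_j` by
`|I_T| ∏ size_i` (`sum_triple_le`), and summing over the four values of `j` gives the factor `4`.

All estimates take place in `ℝ≥0∞`, so no finiteness of the sizes is needed.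
-/

open MeasureTheory Set
open scoped ENNReal

theorem DyadicInterval.len_pos (I : DyadicInterval) : 0 < I.len := by
  unfold DyadicInterval.len; positivity

theorem Quartile.exists_mem_freq (P : Quartile) {ξ : ℝ} (h : ξ ∈ P.ω.toSet) :
    ∃ j, ξ ∈ (P.freq j).toSet := by
  have h2 : (2 : ℝ) ^ P.ω.k = 4 * 2 ^ (P.ω.k - 2) := by
    rw [zpow_sub₀ (by norm_num)]; norm_num; ring
  simp only [DyadicInterval.toSet, DyadicInterval.lo, DyadicInterval.len, Set.mem_Ico, h2] at h
  simp only [DyadicInterval.toSet, DyadicInterval.lo, DyadicInterval.len, Set.mem_Ico,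
    Quartile.freq]
  generalize (2 : ℝ) ^ (P.ω.k - 2) = q at h ⊢
  obtain ⟨h3, h4⟩ := h
  by_cases c1 : ξ < (4 * P.ω.n + 1) * q
  · exact ⟨0, by push_cast; simp; constructor <;> linarith⟩
  by_cases c2 : ξ < (4 * P.ω.n + 2) * q
  · exact ⟨1, by push_cast; constructor <;> simp <;> linarith⟩
  by_cases c3 : ξ < (4 * P.ω.n + 3) * q
  · exact ⟨2, by push_cast; constructor <;> simp <;> linarith⟩
  · exact ⟨3, by push_cast; constructor <;> simp <;> linarith⟩

theorem Quartile.freq_subset (P : Quartile) (j : Fin 4) : (P.freq j).toSet ⊆ P.ω.toSet := by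
  have h2 : (2 : ℝ) ^ P.ω.k = 4 * 2 ^ (P.ω.k - 2) := by
    rw [zpow_sub₀ (by norm_num)]; norm_num; ring
  intro ξ h
  simp only [DyadicInterval.toSet, DyadicInterval.lo, DyadicInterval.len, Set.mem_Ico,
    Quartile.freq] at h
  simp only [DyadicInterval.toSet, DyadicInterval.lo, DyadicInterval.len, Set.mem_Ico, h2]
  have hq : (0 : ℝ) < 2 ^ (P.ω.k - 2) := by positivity
  generalize (2 : ℝ) ^ (P.ω.k - 2) = q at h hq ⊢
  obtain ⟨h3, h4⟩ := h
  push_cast at h3 h4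
  have hj : ((j : ℕ) : ℝ) ≤ 3 := by exact_mod_cast Nat.le_of_lt_succ j.isLt
  have hj0 : (0 : ℝ) ≤ ((j : ℕ) : ℝ) := Nat.cast_nonneg _
  constructor <;> nlinarith

/-- The defining bound of `treeSize`, with the square root and the normalization cleared. -/
theorem sum_sq_le {r : ℝ} (L : LinData r) (i : Fin 4) (Ps : Set Quartile) (f : ℝ → ℝ)
    {T : Finset Quartile} {ξ : ℝ} {It : DyadicInterval} (h : IsLacunary i T ξ It)
    (hT : (T : Set Quartile) ⊆ Ps) :
    ∑ P ∈ T, ENNReal.ofReal |innerF f (L.wp P i)| ^ 2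
      ≤ ENNReal.ofReal It.len * treeSize L i Ps f ^ 2 := by
  have h1 : ENNReal.ofReal ((It.len)⁻¹ * ∑ P ∈ T, innerF f (L.wp P i) ^ 2) ^ ((1 : ℝ) / 2)
      ≤ treeSize L i Ps f :=
    le_iSup_of_le T <| le_iSup_of_le ξ <| le_iSup_of_le It <| le_iSup_of_le h <|
      le_iSup_of_le hT le_rfl
  have h2 : ENNReal.ofReal ((It.len)⁻¹ * ∑ P ∈ T, innerF f (L.wp P i) ^ 2)
      ≤ treeSize L i Ps f ^ 2 := by
    rw [one_div, ENNReal.rpow_inv_le_iff (by norm_num)] at h1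
    exact_mod_cast h1
  calc ∑ P ∈ T, ENNReal.ofReal |innerF f (L.wp P i)| ^ 2
      = ENNReal.ofReal (∑ P ∈ T, innerF f (L.wp P i) ^ 2) := by
        rw [ENNReal.ofReal_sum_of_nonneg fun _ _ => sq_nonneg _]
        refine Finset.sum_congr rfl fun P _ => ?_
        rw [← ENNReal.ofReal_pow (abs_nonneg _), sq_abs]
    _ = ENNReal.ofReal It.len *
          ENNReal.ofReal ((It.len)⁻¹ * ∑ P ∈ T, innerF f (L.wp P i) ^ 2) := by
        rw [← ENNReal.ofReal_mul It.len_pos.le, mul_inv_cancel_left₀ It.len_pos.ne']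
    _ ≤ _ := by gcongr

/-- A single coefficient is controlled by the size, since `{P}` is an `i`-lacunary tree with top
interval `I_P` and top frequency the left endpoint of a grandchild `ω_{P_j}`, `j ≠ i`. -/
theorem single_coeff_le {r : ℝ} (L : LinData r) (i : Fin 4) (Ps : Set Quartile) (f : ℝ → ℝ)
    {P : Quartile} (hP : P ∈ Ps) :
    ENNReal.ofReal (P.I.len ^ (-(1 : ℝ) / 2)) * ENNReal.ofReal |innerF f (L.wp P i)|
      ≤ treeSize L i Ps f := by
  obtain ⟨j, hj⟩ := exists_ne i
  have hmem : (P.freq j).lo ∈ (P.freq j).toSet :=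
    ⟨le_rfl, lt_add_of_pos_right _ (P.freq j).len_pos⟩
  have hlac : IsLacunary i {P} (P.freq j).lo P.I := by
    refine ⟨j, hj, ⟨by unfold DyadicInterval.lo; positivity, ?_⟩, ?_⟩
    · simpa using P.freq_subset j hmem
    · simpa using hmem
  have h := sum_sq_le L i Ps f hlac (by simpa using hP)
  rw [Finset.sum_singleton] at h
  have hl := P.I.len_pos
  have hw : ENNReal.ofReal (P.I.len ^ (-(1 : ℝ) / 2)) ^ 2 * ENNReal.ofReal P.I.len = 1 := by
    rw [← ENNReal.ofReal_pow (by positivity), ← ENNReal.ofReal_mul (by positivity),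
      ← Real.rpow_natCast, ← Real.rpow_mul hl.le]
    norm_num [Real.rpow_neg_one, hl.ne']
  rw [← ENNReal.pow_le_pow_left_iff (two_ne_zero), mul_pow]
  calc _ ≤ ENNReal.ofReal (P.I.len ^ (-(1 : ℝ) / 2)) ^ 2 *
        (ENNReal.ofReal P.I.len * treeSize L i Ps f ^ 2) := by gcongr
    _ = _ := by rw [← mul_assoc, hw, one_mul]

/-- Cauchy–Schwarz in the factors `A`, `B` and a pointwise bound on the weighted factor `C`. -/
theorem sum_triple_le {ι : Type*} (T : Finset ι) (w A B C : ι → ℝ≥0∞) (l a b c : ℝ≥0∞)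
    (hA : ∑ P ∈ T, A P ^ 2 ≤ l * a ^ 2) (hB : ∑ P ∈ T, B P ^ 2 ≤ l * b ^ 2)
    (hC : ∀ P ∈ T, w P * C P ≤ c) :
    ∑ P ∈ T, w P * (A P * B P * C P) ≤ l * (a * b * c) := by
  have hh : (2 : ℝ).HolderConjugate 2 := Real.HolderConjugate.two_two
  have hAB : ∑ P ∈ T, A P * B P ≤ l * (a * b) := by
    refine (ENNReal.inner_le_Lp_mul_Lq T A B hh).trans ?_
    simp only [ENNReal.rpow_two]
    calc _ ≤ (l * a ^ 2) ^ (1 / (2 : ℝ)) * (l * b ^ 2) ^ (1 / (2 : ℝ)) := by gcongr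
      _ = (l * (a * b)) := by
        rw [← ENNReal.mul_rpow_of_nonneg _ _ (by norm_num),
          show l * a ^ 2 * (l * b ^ 2) = (l * (a * b)) ^ 2 by ring,
          ← ENNReal.rpow_two, ← ENNReal.rpow_mul]
        norm_num
  calc ∑ P ∈ T, w P * (A P * B P * C P)
      ≤ ∑ P ∈ T, A P * B P * c := by
        refine Finset.sum_le_sum fun P hP => ?_
        calc w P * (A P * B P * C P) = A P * B P * (w P * C P) := by ring
          _ ≤ _ := by gcongr; exact hC P hP
    _ = (∑ P ∈ T, A P * B P) * c := (Finset.sum_mul ..).symm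
    _ ≤ l * (a * b) * c := by gcongr
    _ = _ := by ring

/-- **Equation (6.5) (single tree estimate).** For any tree `T` and functions `f₁, f₂, f₃`:
`∑_{P ∈ T} |I_P|^{-1/2} ∏_i |⟨f_i, φ̃_{P_i}⟩| ≤ 4 |I_T| ∏_i size_i(T, f_i)`. -/
theorem single_tree_estimate (r : ℝ) (hr : 2 < r) (L : LinData r)
    (T : Finset Quartile) (ξ : ℝ) (It : DyadicInterval) (hT : IsTree T ξ It)
    (f1 f2 f3 : ℝ → ℝ) :
    ENNReal.ofReal (∑ P ∈ T, P.I.len ^ (-(1 : ℝ) / 2) *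
        (|innerF f1 (L.wp P 0)| * |innerF f2 (L.wp P 1)| * |innerF f3 (L.wp P 2)|))
      ≤ ENNReal.ofReal (4 * It.len) *
          (treeSize L 0 ↑T f1 * treeSize L 1 ↑T f2 * treeSize L 2 ↑T f3) := by
  classical
  set S0 := treeSize L 0 (↑T) f1
  set S1 := treeSize L 1 (↑T) f2
  set S2 := treeSize L 2 (↑T) f3
  set w : Quartile → ℝ≥0∞ := fun P => ENNReal.ofReal (P.I.len ^ (-(1 : ℝ) / 2))
  set A : Quartile → ℝ≥0∞ := fun P => ENNReal.ofReal |innerF f1 (L.wp P 0)|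
  set B : Quartile → ℝ≥0∞ := fun P => ENNReal.ofReal |innerF f2 (L.wp P 1)|
  set C : Quartile → ℝ≥0∞ := fun P => ENNReal.ofReal |innerF f3 (L.wp P 2)|
  have hpos : ∀ P : Quartile, 0 ≤ P.I.len ^ (-(1 : ℝ) / 2) := fun P =>
    Real.rpow_nonneg P.I.len_pos.le _
  have hL : ENNReal.ofReal (∑ P ∈ T, P.I.len ^ (-(1 : ℝ) / 2) *
        (|innerF f1 (L.wp P 0)| * |innerF f2 (L.wp P 1)| * |innerF f3 (L.wp P 2)|))
      = ∑ P ∈ T, w P * (A P * B P * C P) := by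
    rw [ENNReal.ofReal_sum_of_nonneg fun P _ => mul_nonneg (hpos P) (by positivity)]
    refine Finset.sum_congr rfl fun P _ => ?_
    rw [ENNReal.ofReal_mul (hpos P), ENNReal.ofReal_mul (by positivity),
      ENNReal.ofReal_mul (by positivity)]
  have key : ∀ j : Fin 4, ∑ P ∈ T with ξ ∈ (P.freq j).toSet, w P * (A P * B P * C P)
      ≤ ENNReal.ofReal It.len * (S0 * S1 * S2) := by
    intro j
    set Tj := T.filter fun P => ξ ∈ (P.freq j).toSet
    have hsub : Tj ⊆ T := Finset.filter_subset _ _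
    have hov : IsOverlapping j Tj ξ It :=
      ⟨⟨hT.1, fun P hP => hT.2 P (hsub hP)⟩, fun P hP => (Finset.mem_filter.1 hP).2⟩
    have hA : j ≠ 0 → ∑ P ∈ Tj, A P ^ 2 ≤ ENNReal.ofReal It.len * S0 ^ 2 := fun h =>
      sum_sq_le L 0 _ f1 ⟨j, h, hov⟩ (by exact_mod_cast hsub)
    have hB : j ≠ 1 → ∑ P ∈ Tj, B P ^ 2 ≤ ENNReal.ofReal It.len * S1 ^ 2 := fun h =>
      sum_sq_le L 1 _ f2 ⟨j, h, hov⟩ (by exact_mod_cast hsub)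
    have hC : j ≠ 2 → ∑ P ∈ Tj, C P ^ 2 ≤ ENNReal.ofReal It.len * S2 ^ 2 := fun h =>
      sum_sq_le L 2 _ f3 ⟨j, h, hov⟩ (by exact_mod_cast hsub)
    have hA1 : ∀ P ∈ Tj, w P * A P ≤ S0 := fun P hP => single_coeff_le L 0 _ f1 (hsub hP)
    have hB1 : ∀ P ∈ Tj, w P * B P ≤ S1 := fun P hP => single_coeff_le L 1 _ f2 (hsub hP)
    have hC1 : ∀ P ∈ Tj, w P * C P ≤ S2 := fun P hP => single_coeff_le L 2 _ f3 (hsub hP)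
    by_cases h0 : j = 0
    · have h := sum_triple_le Tj w B C A _ _ _ _ (hB (by simp [h0])) (hC (by simp [h0])) hA1
      convert h using 2
      · ring
      · ring
    by_cases h1 : j = 1
    · have h := sum_triple_le Tj w A C B _ _ _ _ (hA h0) (hC (by simp [h1])) hB1
      convert h using 2
      · ring
      · ring
    exact sum_triple_le Tj w A B C _ _ _ _ (hA h0) (hB h1) hC1
  rw [hL]
  calc ∑ P ∈ T, w P * (A P * B P * C P)
      ≤ ∑ P ∈ T, ∑ j : Fin 4, if ξ ∈ (P.freq j).toSet then w P * (A P * B P * C P) else 0 := by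
        refine Finset.sum_le_sum fun P hP => ?_
        obtain ⟨j, hj⟩ := P.exists_mem_freq (hT.2 P hP).2
        refine le_trans (by rw [if_pos hj]) (Finset.single_le_sum
          (f := fun j => if ξ ∈ (P.freq j).toSet then w P * (A P * B P * C P) else 0)
          (fun _ _ => zero_le) (Finset.mem_univ j))
    _ = ∑ j : Fin 4, ∑ P ∈ T with ξ ∈ (P.freq j).toSet, w P * (A P * B P * C P) := by
        rw [Finset.sum_comm]
        simp only [Finset.sum_filter]
    _ ≤ ∑ _j : Fin 4, ENNReal.ofReal It.len * (S0 * S1 * S2) :=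
        Finset.sum_le_sum fun j _ => key j
    _ = ENNReal.ofReal (4 * It.len) * (S0 * S1 * S2) := by
        rw [ENNReal.ofReal_mul (by norm_num)]
        simp [mul_assoc]
end
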